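/- arXiv:math/0702516 — 3 statements merged into one kernel-verified Lean document; each statement's English description precedes it below -/
import Mathlib

section
/- Let q = 2h+3 with h ≥ 1, λ = 2cos(π/q), ρ = (λ − 2 + √(λ² − 4λ + 8))/2, and ρ/λ < α ≤ 1/λ. Define H_{2n} = sin(nπ/q)/sin((n+1)π/q) and H_{2n−1} = (sin((n−1)π/q) + sin(nπ/q))/(sin(nπ/q) + sin((n+1)π/q)) for n = 1, …, h+1, and let Ω_α = ⋃_{n=1}^{2h+2} J_n × [0, H_n] with J_{2n−1} = [ℓ_{n−1}, r_n), J_{2n} = [r_n, ℓ_n) for n = 1, …, h, J_{2h+1} = [ℓ_h, r_{h+1}) and J_{2h+2} = [r_{h+1}, r_0). Then the map 𝒯_α(x,y) = (T_α(x), 1/(d(x)λ + ε(x)y)) maps Ω_α to Ω_α and is bijective off of a set of two-dimensional Lebesgue measure zero. -/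
open Set MeasureTheory

/-- The digit function `d(x) = ⌊|1/(xλ)| + 1 - α⌋` of the α-Rosen continued fraction. -/
noncomputable def dfun (lam α x : ℝ) : ℤ := ⌊|1 / (x * lam)| + 1 - α⌋

/-- The α-Rosen continued fraction map `T_α`. -/
noncomputable def Tmap (lam α x : ℝ) : ℝ :=
  if x = 0 then 0 else |1 / x| - lam * (dfun lam α x : ℝ)

/-- The two-dimensional natural extension map `𝒯_α(x, y) = (T_α(x), 1/(d(x)λ + ε(x)y))`. -/
noncomputable def Tnat (lam α : ℝ) (z : ℝ × ℝ) : ℝ × ℝ :=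
  (Tmap lam α z.1, 1 / ((dfun lam α z.1 : ℝ) * lam + Real.sign z.1 * z.2))

lemma dfun_bounds {lam α x : ℝ} (hl : 0 < lam) :
    α * lam - lam ≤ |1 / x| - lam * (dfun lam α x : ℝ) ∧
      |1 / x| - lam * (dfun lam α x : ℝ) < α * lam := by
  have e : |1 / (x * lam)| * lam = |1 / x| := by
    rw [one_div, mul_inv, abs_mul, abs_of_pos (inv_pos.2 hl), one_div]
    field_simp
  have h1 := Int.floor_le (|1 / (x * lam)| + 1 - α)
  have h2 := Int.lt_floor_add_one (|1 / (x * lam)| + 1 - α)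
  rw [← e]
  unfold dfun
  constructor <;> nlinarith

lemma dfun_eq {lam α x : ℝ} (hl : 0 < lam) {k : ℤ}
    (h1 : α * lam - lam ≤ |1 / x| - lam * k) (h2 : |1 / x| - lam * k < α * lam) :
    dfun lam α x = k := by
  have e : |1 / (x * lam)| * lam = |1 / x| := by
    rw [one_div, mul_inv, abs_mul, abs_of_pos (inv_pos.2 hl), one_div]
    field_simp
  rw [← e] at h1 h2
  unfold dfun
  rw [Int.floor_eq_iff]
  constructor <;> nlinarith

lemma Tmap_ne {lam α x : ℝ} (hx : x ≠ 0) :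
    Tmap lam α x = |1 / x| - lam * (dfun lam α x : ℝ) := by
  simp [Tmap, hx]

lemma Tmap_eq {lam α x : ℝ} (hl : 0 < lam) (hx : x ≠ 0) {k : ℤ}
    (h1 : α * lam - lam ≤ |1 / x| - lam * k) (h2 : |1 / x| - lam * k < α * lam) :
    Tmap lam α x = |1 / x| - lam * k := by
  rw [Tmap_ne hx, dfun_eq hl h1 h2]

lemma int_lt {lam : ℝ} (hl : 0 < lam) {m n : ℤ} (h : (m : ℝ) * lam < n * lam) : m < n := by
  have := lt_of_mul_lt_mul_right h hl.le
  exact_mod_cast this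

lemma lemA {lam a W : ℝ} (a1 : a ≤ 1) (a0 : 0 < a) (aq : 1 < a ^ 2 + (2 - lam) * a)
    (h : W * a ≤ 1) : W * (1 - a) < 1 + a - lam := by
  have h1 : W * a * (1 - a) ≤ 1 * (1 - a) := mul_le_mul_of_nonneg_right h (by linarith)
  have h2 : a * (W * (1 - a)) < a * (1 + a - lam) := by linarith
  exact lt_of_mul_lt_mul_left h2 a0.le

/-- Abstract data on the height function needed for the bijectivity argument. -/
structure CoreData (lam a L R : ℝ) (H : ℝ → ℝ) : Prop where
  l1 : 1 < lam
  l2 : lam < 2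
  l3 : 2 ≤ lam ^ 2
  a1 : a ≤ 1
  a0 : lam - 1 < a
  aq : 1 < a ^ 2 + (2 - lam) * a
  hL : L * (1 - (lam - 1) * a) = a - 1
  hR : R * (a - lam + 1) = 1 - a
  F0 : ∀ t, a - lam ≤ t → t < a → 1 / (lam + 1) ≤ H t ∧ H t ≤ 1
  F1 : ∀ t, a - lam ≤ t → t < 1 / a - lam → H t = 1 / (lam + 1)
  F2 : ∀ t, 1 / a - lam ≤ t → t < a → 1 / lam ≤ H t
  F2' : ∀ t, 1 / a - lam ≤ t → t < -1 / (a - lam) - lam → H t = 1 / lam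
  F3a : ∀ x, -1 / (lam + a) ≤ x → x < L → H x = lam - 1
  F3b : ∀ x, L ≤ x → x < R → H x = lam / 2
  F3c : ∀ x, R ≤ x → x < a → H x = 1
  F4 : ∀ x, a - lam ≤ x → x < -1 / (lam + a) → H (-1 / x - lam) * (lam - H x) = 1

namespace CoreData
variable {lam a L R : ℝ} {H : ℝ → ℝ}

lemma sum (D : CoreData lam a L R H) {V : ℝ} (hV : 0 < V) (hVa : a ≤ V) (h1 : 1 / V < a)
    (h2 : 1 / V ≠ R) :
    H (1 / V) + H (-1 / (V + lam)) = lam ∧ (H (1 / V) = 1 ∨ H (1 / V) = lam / 2) := by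
  obtain ⟨l1, l2, l3, a1, a0, aq, hL, hR, F0, F1, F2, F2', F3a, F3b, F3c, F4⟩ := D
  have p1 : 0 < 1 - (lam - 1) * a := by nlinarith
  have p2 : 0 < a - lam + 1 := by linarith
  have eL : L = (a - 1) / (1 - (lam - 1) * a) := by rw [eq_div_iff p1.ne']; exact hL
  have eR : R = (1 - a) / (a - lam + 1) := by rw [eq_div_iff p2.ne']; exact hR
  have hd : -1 / (lam + a) ≤ -1 / (V + lam) := by
    rw [div_le_div_iff₀ (by linarith) (by linarith)]; linarith
  have c1 : R < 1 / V ↔ (1 - a) * V < 1 + a - lam := by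
    rw [eR, div_lt_div_iff₀ p2 hV]; constructor <;> intro h <;> linarith
  have c2 : -1 / (V + lam) < L ↔ (1 - a) * V < 1 + a - lam := by
    rw [eL, div_lt_div_iff₀ (by linarith) p1]; constructor <;> intro h <;> nlinarith
  have hx0 : 0 < 1 / V := by positivity
  have hL0 : L ≤ 0 := by rw [eL]; exact div_nonpos_of_nonpos_of_nonneg (by linarith) p1.le
  have hR0 : 0 ≤ R := by rw [eR]; exact div_nonneg (by linarith) p2.le
  have hxm : -1 / (V + lam) < 0 := div_neg_of_neg_of_pos (by norm_num) (by linarith)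
  rcases lt_or_ge R (1 / V) with h | h
  · have h3 := F3c _ h.le h1
    have h4 := F3a _ hd (c2.2 (c1.1 h))
    rw [h3, h4]; exact ⟨by ring, Or.inl rfl⟩
  · have h' : 1 / V < R := lt_of_le_of_ne h h2
    have h3 := F3b _ (by linarith) h'
    have h4 := F3b (-1 / (V + lam)) (not_lt.1 fun h5 => not_lt.2 h (c1.2 (c2.1 h5))) (by linarith)
    rw [h3, h4]; exact ⟨by ring, Or.inr rfl⟩

set_option maxHeartbeats 1000000 in
lemma exists_pre (D : CoreData lam a L R H) {t v : ℝ} (ht : a - lam ≤ t) (ht2 : t < a)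
    (hv : 0 < v) (hvH : 1 / v ≤ H t)
    (g1 : ∀ k : ℤ, 1 / (t + k * lam) ≠ R) (g2 : t ≠ 1 / a - lam) (g3 : ∀ k : ℤ, v ≠ k * lam) :
    ∃ (k : ℤ) (x y : ℝ), x ≠ 0 ∧ |1 / x| = t + k * lam ∧ a - lam ≤ x ∧ x < a ∧ 0 ≤ y ∧ y ≤ H x ∧
      v = k * lam + Real.sign x * y := by
  have hsum := @D.sum
  obtain ⟨l1, l2, l3, a1, a0, aq, hL, hR, F0, F1, F2, F2', F3a, F3b, F3c, F4⟩ := D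
  have hapos : 0 < a := by linarith
  have hH := F0 t ht ht2
  have hH0 : 0 < H t := lt_of_lt_of_le (by positivity) hH.1
  have hv1 : 1 ≤ v := by
    have : 1 / v ≤ 1 := hvH.trans hH.2
    rwa [div_le_one hv] at this
  obtain ⟨k, hk1, hk2⟩ : ∃ k : ℤ, k * lam ≤ v ∧ v < (k + 1) * lam := by
    refine ⟨⌊v / lam⌋, ?_, ?_⟩
    · have := Int.floor_le (v / lam)
      rwa [le_div_iff₀ (by linarith)] at this
    · have := Int.lt_floor_add_one (v / lam)
      rwa [div_lt_iff₀ (by linarith)] at this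
  have hk0 : 0 ≤ k := by
    by_contra hc
    have : (k : ℝ) + 1 ≤ 0 := by exact_mod_cast (by omega : k + 1 ≤ 0)
    nlinarith
  have hminus : ∀ (j : ℤ), 0 < t + j * lam → a - lam ≤ -1 / (t + j * lam) → v ≤ j * lam →
      j * lam - v ≤ H (-1 / (t + j * lam)) →
      ∃ (k : ℤ) (x y : ℝ), x ≠ 0 ∧ |1 / x| = t + k * lam ∧ a - lam ≤ x ∧ x < a ∧ 0 ≤ y ∧ y ≤ H x ∧
      v = k * lam + Real.sign x * y := by
    intro j hj hj2 hj3 hj4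
    have hx : -1 / (t + j * lam) < 0 := div_neg_of_neg_of_pos (by norm_num) hj
    refine ⟨j, -1 / (t + j * lam), j * lam - v, hx.ne, ?_, hj2, by linarith, by linarith, hj4, ?_⟩
    · rw [one_div, inv_div, abs_div, abs_of_pos hj]; simp
    · rw [Real.sign_of_neg hx]; ring
  have hplus : ∀ (j : ℤ), 0 < t + j * lam → 1 / (t + j * lam) < a → j * lam ≤ v →
      v - j * lam ≤ H (1 / (t + j * lam)) →
      ∃ (k : ℤ) (x y : ℝ), x ≠ 0 ∧ |1 / x| = t + k * lam ∧ a - lam ≤ x ∧ x < a ∧ 0 ≤ y ∧ y ≤ H x ∧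
      v = k * lam + Real.sign x * y := by
    intro j hj hj2 hj3 hj4
    have hx : 0 < 1 / (t + j * lam) := by positivity
    refine ⟨j, 1 / (t + j * lam), v - j * lam, hx.ne', ?_, by linarith, hj2, by linarith, hj4, ?_⟩
    · rw [one_div_one_div, abs_of_pos hj]
    · rw [Real.sign_of_pos hx]; ring
  have haq : 1 < a * (a + lam) := by nlinarith
  have hia : 1 ≤ 1 / a := by rw [le_div_iff₀ hapos]; linarith
  rcases hk0.eq_or_lt with hk | hk
  · subst hk
    have hvl : v < lam := by simpa using hk2
    have hw : 1 / lam < H t := lt_of_lt_of_le (one_div_lt_one_div_of_lt hv hvl) hvH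
    have ht3 : -1 / (a - lam) - lam ≤ t := by
      by_contra hc
      rw [not_le] at hc
      rcases lt_or_ge t (1 / a - lam) with h | h
      · have h5 := F1 t ht h
        have : 1 / (lam + 1) < 1 / lam := one_div_lt_one_div_of_lt (by linarith) (by linarith)
        linarith
      · have := F2' t h hc
        linarith
    have hpos : 0 < t + lam := by linarith
    have hal : 0 < lam - a := by linarith
    have e1 : -1 / (a - lam) = 1 / (lam - a) := by
      rw [div_eq_div_iff (by linarith) (by linarith)]; ring
    have hx1 : a - lam ≤ -1 / (t + lam) := by
      rw [e1] at ht3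
      have : 1 / (lam - a) ≤ t + lam := by linarith
      rw [div_le_iff₀ hal] at this
      rw [le_div_iff₀ hpos]
      linarith
    have hx2 : -1 / (t + lam) < -1 / (lam + a) := by
      rw [div_lt_div_iff₀ hpos (by linarith)]; linarith
    have h4 := F4 _ hx1 hx2
    have e2 : -1 / (-1 / (t + lam)) - lam = t := by field_simp; ring
    rw [e2] at h4
    have h6 : 1 ≤ H t * v := by rwa [div_le_iff₀ hv] at hvH
    have h7 : lam - H (-1 / (t + lam)) ≤ v := by nlinarith
    have := hminus 1 (by push_cast; linarith) (by push_cast; simpa using hx1) (by push_cast; linarith)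
      (by push_cast; simp only [one_mul]; linarith)
    exact this
  · have hk1' : (1 : ℝ) ≤ k := by exact_mod_cast hk
    have hkl : lam ≤ k * lam := by nlinarith
    have hV : a ≤ t + k * lam := by linarith
    have hV0 : 0 < t + k * lam := by linarith
    have hm : a - lam ≤ -1 / (t + (k + 1 : ℤ) * lam) := by
      push_cast
      rw [le_div_iff₀ (by linarith)]
      have : 0 < lam - a := by linarith
      have h8 : a + lam ≤ t + (k + 1) * lam := by linarith
      have h9 : (lam - a) * (a + lam) ≤ (lam - a) * (t + (k + 1) * lam) := by gcongr
      nlinarith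
    have hs1 : k * lam < v := lt_of_le_of_ne hk1 (Ne.symm (g3 k))
    have e3 : t + ((k + 1 : ℤ) : ℝ) * lam = t + k * lam + lam := by push_cast; ring
    rcases lt_or_ge (1 / (t + k * lam)) a with h | h
    · have hs := (hsum hV0 hV h (g1 k)).1
      rcases le_total (v - k * lam) (H (1 / (t + k * lam))) with h5 | h5
      · exact hplus k hV0 h hk1 h5
      · refine hminus (k + 1) (by rw [e3]; linarith) hm (by push_cast; linarith) ?_
        rw [e3]; push_cast; linarith
    · rw [le_div_iff₀ hV0] at h
      have hk2' : k = 1 := by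
        by_contra hc
        have : (2 : ℝ) ≤ k := by exact_mod_cast (by omega : 2 ≤ k)
        have : a + lam ≤ t + k * lam := by nlinarith
        nlinarith
      subst hk2'
      have ht4 : t ≤ 1 / a - lam := by
        rw [le_sub_iff_add_le, le_div_iff₀ hapos]; push_cast at h; linarith
      have ht5 := F1 t ht (lt_of_le_of_ne ht4 g2)
      rw [ht5] at hvH
      have hv5 : lam + 1 ≤ v := (one_div_le_one_div hv (by linarith)).1 hvH
      refine hminus (1 + 1) (by rw [e3]; linarith) hm (by push_cast at *; linarith) ?_
      have p1 : 0 < 1 - (lam - 1) * a := by nlinarith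
      have eL : L = (a - 1) / (1 - (lam - 1) * a) := by rw [eq_div_iff p1.ne']; exact hL
      rw [F3a]
      · push_cast; linarith
      · rw [e3, div_le_div_iff₀ (by linarith) (by linarith)]; linarith
      · rw [e3, eL, div_lt_div_iff₀ (by linarith) p1]
        push_cast at *
        have := lemA a1 hapos aq (W := t + lam) (by linarith)
        linarith

lemma inj (D : CoreData lam a L R H) {t v x x' y y' : ℝ} {k k' : ℤ}
    (ht : a - lam ≤ t) (hk : 1 ≤ k) (hk' : 1 ≤ k')
    (hx0 : x ≠ 0) (hx0' : x' ≠ 0) (hx : |1 / x| = t + k * lam) (hx' : |1 / x'| = t + k' * lam)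
    (hxa : a - lam ≤ x ∧ x < a) (hxa' : a - lam ≤ x' ∧ x' < a)
    (hy : 0 ≤ y ∧ y ≤ H x) (hy' : 0 ≤ y' ∧ y' ≤ H x')
    (hv : v = k * lam + Real.sign x * y) (hv' : v = k' * lam + Real.sign x' * y')
    (g1 : ∀ k : ℤ, 1 / (t + k * lam) ≠ R) (g3 : ∀ k : ℤ, v ≠ k * lam)
    (g4 : ∀ k : ℤ, v ≠ k * lam + 1) (g5 : ∀ k : ℤ, v ≠ k * lam + lam / 2) :
    x = x' ∧ y = y' := by
  have hsum := @D.sum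
  have hpos : ∀ x : ℝ, 0 < x → ∀ V, |1 / x| = V → x = 1 / V := by
    intro x hx V h
    rw [abs_of_pos (by positivity)] at h
    rw [← h, one_div_one_div]
  have hneg : ∀ x : ℝ, x < 0 → ∀ V, |1 / x| = V → x = -1 / V := by
    intro x hx V h
    rw [abs_of_neg (one_div_neg.2 hx)] at h
    rw [← h]; field_simp
  -- mixed case
  have key : ∀ x x' y y' : ℝ, ∀ k k' : ℤ, 1 ≤ k → 1 ≤ k' → 0 < x → x' < 0 →
      |1 / x| = t + k * lam → |1 / x'| = t + k' * lam → x < a → a - lam ≤ x' →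
      0 ≤ y → y ≤ H x → 0 ≤ y' → y' ≤ H x' → v = k * lam + y → v = k' * lam - y' → False := by
    intro x x' y y' k k' hk hk' hx hx' hV hV' hxa hxa' hy1 hy2 hy3 hy4 hv hv'
    obtain ⟨l1, l2, l3, a1, a0, aq, hL, hR, F0, F1, F2, F2', F3a, F3b, F3c, F4⟩ := D
    have hk1 : (1 : ℝ) ≤ k := by exact_mod_cast hk
    have b1 := (F0 x (by linarith) hxa).2
    have b2 := (F0 x' hxa' (by linarith)).2
    have ky : y ≠ 0 := by rintro rfl; exact g3 k (by linarith)
    have hy0 : 0 < y := lt_of_le_of_ne hy1 (Ne.symm ky)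
    have c1 : k < k' := int_lt (lam := lam) (by linarith) (by linarith)
    have c2 : k' < k + 2 := int_lt (lam := lam) (by linarith) (by push_cast; linarith)
    obtain rfl : k' = k + 1 := by omega
    have e1 := hpos x hx _ hV
    have e2 := hneg x' hx' _ hV'
    have hkl : lam ≤ k * lam := by nlinarith
    have e3 : t + ((k + 1 : ℤ) : ℝ) * lam = t + k * lam + lam := by push_cast; ring
    have hs := hsum (V := t + k * lam) (by linarith) (by linarith) (by rw [← e1]; exact hxa) (g1 k)
    rw [← e3, ← e1, ← e2] at hs
    push_cast at hv'
    have : y = H x := by linarith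
    rcases hs.2 with h | h
    · exact g4 k (by rw [hv, this, h])
    · exact g5 k (by rw [hv, this, h])
  have D' := D
  obtain ⟨l1, l2, l3, a1, a0, aq, hL, hR, F0, F1, F2, F2', F3a, F3b, F3c, F4⟩ := D'
  have b1 := (F0 x hxa.1 hxa.2).2
  have b2 := (F0 x' hxa'.1 hxa'.2).2
  rcases lt_or_gt_of_ne hx0 with h | h <;> rcases lt_or_gt_of_ne hx0' with h' | h'
  · rw [Real.sign_of_neg h] at hv
    rw [Real.sign_of_neg h'] at hv'
    have c1 : k < k' + 1 := int_lt (lam := lam) (by linarith) (by push_cast; linarith)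
    have c2 : k' < k + 1 := int_lt (lam := lam) (by linarith) (by push_cast; linarith)
    obtain rfl : k' = k := by omega
    exact ⟨by rw [hneg x h _ hx, hneg x' h' _ hx'], by linarith⟩
  · rw [Real.sign_of_neg h] at hv
    rw [Real.sign_of_pos h'] at hv'
    exact (key x' x y' y k' k hk' hk h' h hx' hx hxa'.2 hxa.1 hy'.1 hy'.2 hy.1 hy.2
      (by linarith) (by linarith)).elim
  · rw [Real.sign_of_pos h] at hv
    rw [Real.sign_of_neg h'] at hv'
    exact (key x x' y y' k k' hk hk' h h' hx hx' hxa.2 hxa'.1 hy.1 hy.2 hy'.1 hy'.2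
      (by linarith) (by linarith)).elim
  · rw [Real.sign_of_pos h] at hv
    rw [Real.sign_of_pos h'] at hv'
    have c1 : k < k' + 1 := int_lt (lam := lam) (by linarith) (by push_cast; linarith)
    have c2 : k' < k + 1 := int_lt (lam := lam) (by linarith) (by push_cast; linarith)
    obtain rfl : k' = k := by omega
    exact ⟨by rw [hpos x h _ hx, hpos x' h' _ hx'], by linarith⟩

lemma maps (D : CoreData lam a L R H) {t v x y : ℝ} {k : ℤ}
    (ht : a - lam ≤ t) (ht2 : t < a) (hk : 1 ≤ k)
    (hx0 : x ≠ 0) (hx : |1 / x| = t + k * lam)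
    (hxa : a - lam ≤ x ∧ x < a)
    (hy : 0 ≤ y ∧ y ≤ H x)
    (hv : v = k * lam + Real.sign x * y) :
    0 ≤ 1 / v ∧ 1 / v ≤ H t := by
  obtain ⟨l1, l2, l3, a1, a0, aq, hL, hR, F0, F1, F2, F2', F3a, F3b, F3c, F4⟩ := D
  have hapos : 0 < a := by linarith
  have hk1 : (1 : ℝ) ≤ k := by exact_mod_cast hk
  have hkl : lam ≤ k * lam := by nlinarith
  have b1 := (F0 x hxa.1 hxa.2).2
  have bt := F0 t ht ht2
  have bt0 : 0 < H t := lt_of_lt_of_le (by positivity) bt.1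
  have hs : -1 ≤ Real.sign x ∧ (0 < x → Real.sign x = 1) ∧ (x < 0 → Real.sign x = -1) := by
    rcases lt_or_gt_of_ne hx0 with h | h
    · rw [Real.sign_of_neg h]; exact ⟨le_rfl, fun h' => by linarith, fun _ => rfl⟩
    · rw [Real.sign_of_pos h]; exact ⟨by norm_num, fun h' => rfl, fun h' => by linarith⟩
  have hv0 : 0 < v := by nlinarith [hs.1]
  refine ⟨by positivity, ?_⟩
  have hbig : lam + 1 ≤ v → 1 / v ≤ H t := fun h =>
    (one_div_le_one_div_of_le (by linarith) h).trans bt.1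
  have hbig2 : lam ≤ v → 1 / a - lam ≤ t → 1 / v ≤ H t := fun h h' =>
    (one_div_le_one_div_of_le (by linarith) h).trans (F2 t h' ht2)
  have hk2 : k ≠ 1 → (2 : ℝ) ≤ k := fun h => by exact_mod_cast (by omega : 2 ≤ k)
  rcases lt_or_gt_of_ne hx0 with h | h
  · rw [hs.2.2 h] at hv
    have e : -1 / x = t + k * lam := by
      rw [← hx, abs_of_neg (one_div_neg.2 h)]; ring
    by_cases hk3 : k = 1
    · subst hk3
      have e2 : x = -1 / (t + lam) := by
        push_cast at e; rw [one_mul] at e; rw [← e]; field_simp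
      have h4 := F4 x hxa.1 (by
        rw [e2, div_lt_div_iff₀ (by linarith) (by linarith)]; linarith)
      have e3 : -1 / x - lam = t := by rw [e]; push_cast; ring
      rw [e3] at h4
      rw [div_le_iff₀ hv0]
      push_cast at hv
      nlinarith
    · have hk4 := hk2 hk3
      have hkl2 : 2 * lam ≤ k * lam := by nlinarith
      have e2 : x = -1 / (t + k * lam) := by
        rw [← e]; field_simp
      have hd : -1 / (lam + a) ≤ x := by
        rw [e2, div_le_div_iff₀ (by linarith) (by linarith)]; linarith
      rcases lt_or_ge x L with hxL | hxL
      · have := F3a x hd hxL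
        exact hbig (by linarith)
      · have p1 : 0 < 1 - (lam - 1) * a := by nlinarith
        have p2 : 0 < a - lam + 1 := by linarith
        have eL : L = (a - 1) / (1 - (lam - 1) * a) := by rw [eq_div_iff p1.ne']; exact hL
        have eR : R = (1 - a) / (a - lam + 1) := by rw [eq_div_iff p2.ne']; exact hR
        have hR0 : 0 ≤ R := by rw [eR]; exact div_nonneg (by linarith) p2.le
        have := F3b x hxL (by linarith)
        by_cases hk5 : k = 2
        · subst hk5
          push_cast at *
          refine hbig2 (by linarith) ?_
          rw [eL, e2, div_le_div_iff₀ p1 (by linarith)] at hxL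
          rw [sub_le_iff_le_add, div_le_iff₀ hapos]
          have q1 : 1 + a - lam ≤ (t + lam) * (1 - a) := by linarith
          by_contra hc
          push Not at hc
          have := lemA a1 hapos aq (W := t + lam) (by linarith)
          linarith
        · have : (3 : ℝ) ≤ k := by exact_mod_cast (by omega : 3 ≤ k)
          have hkl2 : 3 * lam ≤ k * lam := by nlinarith
          exact hbig (by linarith)
  · rw [hs.2.1 h] at hv
    have e : 1 / x = t + k * lam := by
      rw [← hx, abs_of_pos (by positivity)]
    by_cases hk3 : k = 1
    · subst hk3
      refine hbig2 (by linarith) ?_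
      have : 1 / a < 1 / x := one_div_lt_one_div_of_lt h hxa.2
      push_cast at e
      linarith
    · have hk4 := hk2 hk3
      have hkl2 : 2 * lam ≤ k * lam := by nlinarith
      exact hbig (by linarith)

end CoreData

lemma null_cross {C C' : Set ℝ} (h : C.Countable) (h' : C'.Countable) :
    volume {z : ℝ × ℝ | z.1 ∈ C ∨ z.2 ∈ C'} = 0 := by
  have e : {z : ℝ × ℝ | z.1 ∈ C ∨ z.2 ∈ C'} ⊆ C ×ˢ univ ∪ univ ×ˢ C' := by
    rintro z (hz | hz)
    · exact Or.inl ⟨hz, trivial⟩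
    · exact Or.inr ⟨trivial, hz⟩
  refine measure_mono_null e (measure_union_null ?_ ?_)
  · rw [Measure.volume_eq_prod, Measure.prod_prod, h.measure_zero, zero_mul]
  · rw [Measure.volume_eq_prod, Measure.prod_prod, h'.measure_zero, mul_zero]

theorem core_bij {lam α L R : ℝ} {H : ℝ → ℝ} (D : CoreData lam (α * lam) L R H)
    (Ω : Set (ℝ × ℝ))
    (hΩ : ∀ z, z ∈ Ω ↔ (α * lam - lam ≤ z.1 ∧ z.1 < α * lam) ∧ (0 ≤ z.2 ∧ z.2 ≤ H z.1)) :
    ∃ N N' : Set (ℝ × ℝ), N ⊆ Ω ∧ N' ⊆ Ω ∧ volume N = 0 ∧ volume N' = 0 ∧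
      Set.BijOn (Tnat lam α) (Ω \ N) (Ω \ N') := by
  have l0 : 0 < lam := by linarith [D.l1]
  set C1 : Set ℝ := {1 / (α * lam) - lam} ∪ range (fun k : ℤ => 1 / R - k * lam) with hC1
  set C2 : Set ℝ := {0} ∪ (range (fun k : ℤ => 1 / (k * lam)) ∪
    (range (fun k : ℤ => 1 / (k * lam + 1)) ∪ range (fun k : ℤ => 1 / (k * lam + lam / 2)))) with hC2
  have c1 : C1.Countable := (countable_singleton _).union (countable_range _)
  have c2 : C2.Countable := (countable_singleton _).union
    ((countable_range _).union ((countable_range _).union (countable_range _)))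
  set Bad : Set (ℝ × ℝ) := {z | z.1 ∈ C1 ∨ z.2 ∈ C2} with hBad
  set C3 : Set ℝ := {0} ∪ ((fun p : ℝ × ℤ => 1 / (p.1 + lam * p.2)) '' (C1 ×ˢ univ) ∪
    (fun p : ℝ × ℤ => -(1 / (p.1 + lam * p.2))) '' (C1 ×ˢ univ)) with hC3
  set C4 : Set ℝ := ((fun p : ℝ × ℤ => 1 / p.1 - p.2 * lam) '' (C2 ×ˢ univ) ∪
    (fun p : ℝ × ℤ => -(1 / p.1 - p.2 * lam)) '' (C2 ×ˢ univ)) with hC4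
  have c3 : C3.Countable := (countable_singleton _).union
    (((c1.prod countable_univ).image _).union ((c1.prod countable_univ).image _))
  have c4 : C4.Countable :=
    ((c2.prod countable_univ).image _).union ((c2.prod countable_univ).image _)
  have gk : ∀ z ∈ Ω, z.1 ≠ 0 → 1 ≤ dfun lam α z.1 := by
    intro z hz hz0
    obtain ⟨⟨h1, h2⟩, -⟩ := (hΩ z).1 hz
    have hab : |z.1| ≤ 1 := abs_le.2 ⟨by linarith [D.a0], by linarith [D.a1]⟩
    have h3 : 1 ≤ |1 / z.1| := by
      rw [abs_div, abs_one, le_div_iff₀ (abs_pos.2 hz0)]; linarith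
    have h4 := (dfun_bounds (α := α) (x := z.1) l0).2
    have h5 : 0 < dfun lam α z.1 := int_lt l0 (by push_cast; linarith [D.a1])
    omega
  have gV : ∀ z : ℝ × ℝ, z.1 ≠ 0 → α * lam - lam ≤ Tmap lam α z.1 ∧ Tmap lam α z.1 < α * lam ∧
      |1 / z.1| = Tmap lam α z.1 + dfun lam α z.1 * lam := by
    intro z hz0
    have h4 := dfun_bounds (α := α) (x := z.1) l0
    rw [Tmap_ne hz0]
    exact ⟨h4.1, h4.2, by ring⟩
  have gm : ∀ z ∈ Ω, z.1 ≠ 0 → Tnat lam α z ∈ Ω := by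
    intro z hz hz0
    obtain ⟨h1, h2⟩ := (hΩ z).1 hz
    obtain ⟨h3, h4, h5⟩ := gV z hz0
    exact (hΩ _).2 ⟨⟨h3, h4⟩, D.maps h3 h4 (gk z hz hz0) hz0 h5 h1 h2 rfl⟩
  have good : ∀ t w : ℝ, (t, w) ∉ Bad → w ≠ 0 ∧ t ≠ 1 / (α * lam) - lam ∧
      (∀ k : ℤ, 1 / (t + k * lam) ≠ R) ∧ (∀ k : ℤ, 1 / w ≠ k * lam) ∧
      (∀ k : ℤ, 1 / w ≠ k * lam + 1) ∧ (∀ k : ℤ, 1 / w ≠ k * lam + lam / 2) := by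
    intro t w hb
    rw [hBad, mem_ofPred_eq, not_or] at hb
    obtain ⟨hb1, hb2⟩ := hb
    simp only at hb1 hb2
    refine ⟨?_, ?_, ?_, ?_, ?_, ?_⟩
    · rintro rfl; exact hb2 (Or.inl rfl)
    · rintro rfl; exact hb1 (Or.inl rfl)
    · intro k hk; refine hb1 (Or.inr ⟨k, ?_⟩)
      simp only [← hk, one_div_one_div]; ring
    · intro k hk; refine hb2 (Or.inr (Or.inl ⟨k, ?_⟩))
      simp only [← hk, one_div_one_div]
    · intro k hk; refine hb2 (Or.inr (Or.inr (Or.inl ⟨k, ?_⟩)))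
      simp only [← hk, one_div_one_div]
    · intro k hk; refine hb2 (Or.inr (Or.inr (Or.inr ⟨k, ?_⟩)))
      simp only [← hk, one_div_one_div]
  refine ⟨Ω ∩ {z | z.1 = 0 ∨ Tnat lam α z ∈ Bad}, Ω ∩ Bad, inter_subset_left, inter_subset_left,
    ?_, measure_mono_null inter_subset_right (null_cross c1 c2), ?_, ?_, ?_⟩
  · refine measure_mono_null ?_ (null_cross c3 c4)
    rintro z ⟨hz, hz0⟩
    by_cases h0 : z.1 = 0
    · exact Or.inl (Or.inl h0)
    rcases hz0 with hz0 | hz0 | hz0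
    · exact absurd hz0 h0
    · left
      obtain ⟨h3, h4, h5⟩ := gV z h0
      change Tmap lam α z.1 ∈ C1 at hz0
      rcases lt_or_gt_of_ne h0 with h | h
      · refine Or.inr (Or.inr ⟨(Tmap lam α z.1, dfun lam α z.1), ⟨hz0, trivial⟩, ?_⟩)
        simp only
        rw [mul_comm lam, ← h5, abs_of_neg (one_div_neg.2 h), one_div, inv_neg, one_div, inv_inv,
          neg_neg]
      · refine Or.inr (Or.inl ⟨(Tmap lam α z.1, dfun lam α z.1), ⟨hz0, trivial⟩, ?_⟩)
        simp only
        rw [mul_comm lam, ← h5, abs_of_pos (one_div_pos.2 h), one_div_one_div]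
    · right
      change 1 / ((dfun lam α z.1 : ℝ) * lam + Real.sign z.1 * z.2) ∈ C2 at hz0
      rcases lt_or_gt_of_ne h0 with h | h
      · refine Or.inr ⟨(_, dfun lam α z.1), ⟨hz0, trivial⟩, ?_⟩
        simp only [one_div_one_div, Real.sign_of_neg h]; ring
      · refine Or.inl ⟨(_, dfun lam α z.1), ⟨hz0, trivial⟩, ?_⟩
        simp only [one_div_one_div, Real.sign_of_pos h]; ring
  · rintro z ⟨hz, hzN⟩
    have hn : z.1 ≠ 0 ∧ Tnat lam α z ∉ Bad := by
      rw [← not_or]; exact fun h => hzN ⟨hz, h⟩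
    exact ⟨gm z hz hn.1, fun h => hn.2 h.2⟩
  · rintro z ⟨hz, hzN⟩ z' ⟨hz', hzN'⟩ he
    have hn : z.1 ≠ 0 ∧ Tnat lam α z ∉ Bad := by
      rw [← not_or]; exact fun h => hzN ⟨hz, h⟩
    have hn' : z'.1 ≠ 0 ∧ Tnat lam α z' ∉ Bad := by
      rw [← not_or]; exact fun h => hzN' ⟨hz', h⟩
    obtain ⟨h1, h2⟩ := (hΩ z).1 hz
    obtain ⟨h1', h2'⟩ := (hΩ z').1 hz'
    obtain ⟨h3, h4, h5⟩ := gV z hn.1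
    obtain ⟨h3', h4', h5'⟩ := gV z' hn'.1
    have e1 : Tmap lam α z.1 = Tmap lam α z'.1 := congrArg Prod.fst he
    have e2 := congrArg Prod.snd he
    simp only [Tnat, one_div, inv_inj] at e2
    obtain ⟨q1, q2, q3, q4, q5, q6⟩ := good _ _ hn.2
    simp only [one_div_one_div] at q4 q5 q6
    rw [← e1] at h5'
    obtain ⟨r1, r2⟩ := D.inj h3 (gk z hz hn.1) (gk z' hz' hn'.1) hn.1 hn'.1 h5 h5' h1 h1' h2 h2' rfl e2
      q3 q4 q5 q6
    exact Prod.ext r1 r2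
  · rintro ⟨t, w⟩ ⟨hz, hzN⟩
    have hb : (t, w) ∉ Bad := fun h => hzN ⟨hz, h⟩
    obtain ⟨q1, q2, q3, q4, q5, q6⟩ := good _ _ hb
    obtain ⟨⟨h1, h2⟩, h3, h4⟩ := (hΩ _).1 hz
    simp only at h1 h2 h3 h4
    have hw : 0 < w := lt_of_le_of_ne h3 (Ne.symm q1)
    obtain ⟨k, x, y, p1, p2, p3, p4, p5, p6, p7⟩ := D.exists_pre h1 h2 (one_div_pos.2 hw)
      (by rwa [one_div_one_div]) q3 q2 q4
    have p2' : |1 / x| - lam * k = t := by rw [p2]; ring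
    have d1 : dfun lam α x = k := dfun_eq l0 (by rw [p2']; exact h1) (by rw [p2']; exact h2)
    have e : Tnat lam α (x, y) = (t, w) := by
      refine Prod.ext ?_ ?_
      · simp only [Tnat]; rw [Tmap_ne p1, d1, p2']
      · simp only [Tnat]; rw [d1, ← p7, one_div_one_div]
    refine ⟨(x, y), ⟨(hΩ _).2 ⟨⟨p3, p4⟩, p5, p6⟩, ?_⟩, e⟩
    rintro ⟨-, h | h⟩
    · exact p1 h
    · rw [e] at h; exact hb h

lemma build (h : ℕ) (hh : 1 ≤ h) (lam a : ℝ) (u K : ℕ → ℝ)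
    (l1 : 1 < lam) (l2 : lam < 2) (l3 : 2 ≤ lam ^ 2) (a1 : a ≤ 1) (a0 : lam - 1 < a)
    (aq : 1 < a ^ 2 + (2 - lam) * a)
    (hL : u (2 * h) * (1 - (lam - 1) * a) = a - 1)
    (hR : u (2 * h + 1) * (a - lam + 1) = 1 - a)
    (um : ∀ m ≤ 2 * h + 1, u m ≤ u (m + 1))
    (u0 : u 0 = a - lam) (u1 : u 1 = 1 / a - lam) (ul : u (2 * h + 2) = a)
    (ur : ∀ m, m + 2 ≤ 2 * h + 1 → u (m + 2) = -1 / u m - lam)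
    (un : ∀ m, m < 2 * h → u m < 0)
    (K0 : K 0 = 1 / (lam + 1)) (K1 : K 1 = 1 / lam) (Ka : K (2 * h - 1) = lam - 1)
    (Kb : K (2 * h) = lam / 2) (Kc : K (2 * h + 1) = 1)
    (Kp : ∀ m ≤ 2 * h + 1, 0 ≤ K m ∧ K m ≤ 1)
    (Kr : ∀ m, m + 2 ≤ 2 * h + 1 → K (m + 2) * (lam - K m) = 1) :
    ∃ H : ℝ → ℝ, CoreData lam a (u (2 * h)) (u (2 * h + 1)) H ∧
      ∀ z : ℝ × ℝ, ((a - lam ≤ z.1 ∧ z.1 < a) ∧ (0 ≤ z.2 ∧ z.2 ≤ H z.1)) ↔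
        ∃ m ≤ 2 * h + 1, (u m ≤ z.1 ∧ z.1 < u (m + 1)) ∧ (0 ≤ z.2 ∧ z.2 ≤ K m) := by
  classical
  have mono : ∀ i j, i ≤ j → j ≤ 2 * h + 2 → u i ≤ u j := by
    intro i j hij
    induction j, hij using Nat.le_induction with
    | base => intro _; exact le_rfl
    | succ j hj ih => intro h2; exact (ih (by omega)).trans (um j (by omega))
  set H : ℝ → ℝ := fun x => K (Nat.findGreatest (fun m => u m ≤ x) (2 * h + 1)) with hH
  have HK : ∀ m ≤ 2 * h + 1, ∀ x, u m ≤ x → x < u (m + 1) → H x = K m := by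
    intro m hm x h1 h2
    have : Nat.findGreatest (fun m => u m ≤ x) (2 * h + 1) = m := by
      rw [Nat.findGreatest_eq_iff]
      refine ⟨hm, fun _ => h1, fun n hn hn2 h3 => ?_⟩
      have := mono (m + 1) n (by omega) (by omega)
      linarith
    rw [hH]; simp only [this]
  have ex : ∀ x, a - lam ≤ x → x < a → ∃ m ≤ 2 * h + 1, u m ≤ x ∧ x < u (m + 1) := by
    intro x h1 h2
    refine ⟨Nat.findGreatest (fun m => u m ≤ x) (2 * h + 1), Nat.findGreatest_le _, ?_, ?_⟩
    · exact Nat.findGreatest_spec (P := fun m => u m ≤ x) (Nat.zero_le _) (by rw [u0]; exact h1)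
    · by_contra hc
      rw [not_lt] at hc
      rcases (Nat.findGreatest_le (P := fun m => u m ≤ x) (2 * h + 1)).lt_or_eq with h3 | h3
      · have := Nat.le_findGreatest (P := fun m => u m ≤ x) (n := 2 * h + 1) (by omega) hc
        omega
      · rw [h3, ul] at hc; linarith
  have hapos : 0 < a := by linarith
  have Klow : ∀ m, 1 ≤ m → m ≤ 2 * h + 1 → 1 / lam ≤ K m := by
    intro m hm hm2
    rcases hm.lt_or_eq with h3 | h3
    · obtain ⟨j, rfl⟩ : ∃ j, m = j + 2 := ⟨m - 2, by omega⟩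
      have h4 := Kr j hm2
      have h5 := Kp j (by omega)
      have h6 := Kp (j + 2) hm2
      rw [div_le_iff₀ (by linarith)]
      nlinarith
    · rw [← h3, K1]
  have Rlt : u (2 * h + 1) < a := by
    by_contra hc
    rw [not_lt] at hc
    have : a * (a - lam + 1) ≤ u (2 * h + 1) * (a - lam + 1) :=
      mul_le_mul_of_nonneg_right hc (by linarith)
    linarith
  obtain ⟨g, rfl⟩ : ∃ g, h = g + 1 := ⟨h - 1, by omega⟩
  refine ⟨H, ⟨l1, l2, l3, a1, a0, aq, hL, hR, ?_, ?_, ?_, ?_, ?_, ?_, ?_, ?_⟩, ?_⟩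
  · intro t h1 h2
    obtain ⟨m, hm, h3, h4⟩ := ex t h1 h2
    rw [HK m hm t h3 h4]
    refine ⟨?_, (Kp m hm).2⟩
    rcases Nat.eq_zero_or_pos m with rfl | h5
    · rw [K0]
    · exact (one_div_le_one_div_of_le (by linarith) (by linarith)).trans (Klow m h5 hm)
  · intro t h1 h2
    rw [HK 0 (by omega) t (by rw [u0]; exact h1) (by rw [zero_add, u1]; exact h2), K0]
  · intro t h1 h2
    have hia : 1 ≤ 1 / a := by rw [le_div_iff₀ hapos]; linarith
    obtain ⟨m, hm, h3, h4⟩ := ex t (by linarith) h2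
    rw [HK m hm t h3 h4]
    refine Klow m ?_ hm
    rcases Nat.eq_zero_or_pos m with rfl | h5
    · rw [zero_add, u1] at h4; linarith
    · exact h5
  · intro t h1 h2
    rw [HK 1 (by omega) t (by rw [u1]; exact h1) (by
      rw [ur 0 (by omega), u0]; exact h2), K1]
  · intro x h1 h2
    have e := ur (2 * g + 1) (by omega)
    have n := un (2 * g + 1) (by omega)
    rw [HK (2 * g + 1) (by omega) x ?_ h2]
    · exact Ka
    · refine le_trans ?_ h1
      have h3 : -1 / u (2 * g + 1) < lam + a := by
        have : u (2 * g + 1 + 2) = u (2 * (g + 1) + 1) := by congr 1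
        linarith
      rw [div_lt_iff_of_neg n] at h3
      rw [le_div_iff₀ (by linarith)]; linarith
  · intro x h1 h2
    rw [HK (2 * (g + 1)) (by omega) x h1 h2, Kb]
  · intro x h1 h2
    rw [HK (2 * (g + 1) + 1) (by omega) x h1 (by rw [ul]; exact h2), Kc]
  · intro x h1 h2
    have hx0 : x < 0 := h2.trans (div_neg_of_neg_of_pos (by norm_num) (by linarith))
    have hMa : -1 / x - lam < a := by
      rw [sub_lt_iff_lt_add, div_lt_iff_of_neg hx0]
      rw [lt_div_iff₀ (by linarith)] at h2
      linarith
    have Mm : ∀ p q : ℝ, p < 0 → q < 0 → (p ≤ q → -1 / p ≤ -1 / q) := by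
      intro p q hp hq hpq
      rw [div_le_iff_of_neg hp, ← mul_div_right_comm, div_le_iff_of_neg hq]
      linarith
    have Mm' : ∀ p q : ℝ, p < 0 → q < 0 → (p < q → -1 / p < -1 / q) := by
      intro p q hp hq hpq
      rw [div_lt_iff_of_neg hp, ← mul_div_right_comm, div_lt_iff_of_neg hq]
      linarith
    obtain ⟨m, hm, h3, h4⟩ := ex x h1 (by linarith)
    have hm2 : m < 2 * (g + 1) := by
      by_contra hc
      have h5 : u (2 * (g + 1)) ≤ x := (mono _ _ (by omega) (by omega)).trans h3
      have p1 : 0 < 1 - (lam - 1) * a := by nlinarith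
      have h6 : u (2 * (g + 1)) * (1 - (lam - 1) * a) ≤ x * (1 - (lam - 1) * a) :=
        mul_le_mul_of_nonneg_right h5 p1.le
      rw [lt_div_iff₀ (by linarith)] at h2
      have h7 := lemA a1 hapos aq (W := a) (by nlinarith)
      have h8 : (a - 1) * (lam + a) ≤ x * (1 - (lam - 1) * a) * (lam + a) :=
        mul_le_mul_of_nonneg_right (by linarith) (by linarith)
      have h9 : x * (lam + a) * (1 - (lam - 1) * a) < -1 * (1 - (lam - 1) * a) :=
        mul_lt_mul_of_pos_right h2 p1
      linarith
    have hum := un m hm2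
    have e := ur m (by omega)
    rw [HK m hm x h3 h4]
    have h5 : u (m + 2) ≤ -1 / x - lam := by
      rw [e]; linarith [Mm _ _ hum hx0 h3]
    have h6 : -1 / x - lam < u (m + 2 + 1) := by
      by_cases hc : m + 3 = 2 * (g + 1) + 2
      · rw [show m + 2 + 1 = 2 * (g + 1) + 2 by omega, ul]; exact hMa
      · have e' := ur (m + 1) (by omega)
        have := un (m + 1) (by omega)
        rw [show m + 2 + 1 = m + 1 + 2 by omega, e']
        linarith [Mm' _ _ hx0 this h4]
    rw [HK (m + 2) (by omega) _ h5 h6]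
    exact Kr m (by omega)
  · intro z
    constructor
    · rintro ⟨⟨h1, h2⟩, h3⟩
      obtain ⟨m, hm, h4, h5⟩ := ex z.1 h1 h2
      rw [HK m hm z.1 h4 h5] at h3
      exact ⟨m, hm, ⟨h4, h5⟩, h3⟩
    · rintro ⟨m, hm, ⟨h4, h5⟩, h3⟩
      rw [HK m hm z.1 h4 h5]
      have h6 := mono 0 m (by omega) (by omega)
      have h7 := mono (m + 1) (2 * (g + 1) + 2) (by omega) (by omega)
      rw [u0] at h6; rw [ul] at h7
      exact ⟨⟨by linarith, by linarith⟩, h3⟩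

lemma wronsk {lam : ℝ} {A B : ℕ → ℝ} (hA : ∀ n, A (n + 2) = lam * A (n + 1) - A n)
    (hB : ∀ n, B (n + 2) = lam * B (n + 1) - B n) (n : ℕ) :
    A (n + 1) * B n - A n * B (n + 1) = A 1 * B 0 - A 0 * B 1 := by
  induction n with
  | zero => rfl
  | succ n ih => rw [← ih, show n + 1 + 1 = n + 2 from rfl, hA, hB]; ring

lemma step_neg {lam α x : ℝ} (l0 : 0 < lam) (l2 : lam < 2) (hx : x < 0)
    (h1 : α * lam - lam ≤ x) (h2 : -1 / x - lam < α * lam) :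
    Tmap lam α x = -1 / x - lam ∧ α * lam - lam ≤ Tmap lam α x := by
  have e : |1 / x| = -1 / x := by rw [abs_of_neg (one_div_neg.2 hx)]; ring
  have h3 : x ≤ -1 / x - lam := by
    rw [le_sub_iff_add_le, le_div_iff_of_neg hx]
    nlinarith [sq_nonneg (x + lam / 2)]
  have := Tmap_eq (lam := lam) (α := α) (x := x) l0 hx.ne (k := 1)
    (by rw [e]; push_cast; linarith) (by rw [e]; push_cast; linarith)
  rw [e] at this
  push_cast at this
  rw [mul_one] at this
  rw [this]
  exact ⟨rfl, h1.trans h3⟩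

set_option maxHeartbeats 2000000 in
theorem seqpart (h : ℕ) (hh : 1 ≤ h) (lam α : ℝ) (s ℓ r Hodd Heven : ℕ → ℝ)
    (l1 : 1 < lam) (l2 : lam < 2) (l3 : 2 ≤ lam ^ 2) (a1 : α * lam ≤ 1) (a0 : lam - 1 < α * lam)
    (aq : 1 < (α * lam) ^ 2 + (2 - lam) * (α * lam)) (a2 : lam ≤ 2 * (α * lam))
    (hs0 : s 0 = 0) (hs1 : 0 < s 1) (hsr : ∀ n, s (n + 2) = lam * s (n + 1) - s n)
    (hsm : ∀ n ≤ h, s n < s (n + 1)) (hse : s (h + 2) = s (h + 1))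
    (hℓ : ∀ n, ℓ n = (Tmap lam α)^[n] ((α - 1) * lam))
    (hr : ∀ n, r n = (Tmap lam α)^[n] (α * lam))
    (hHodd : ∀ n, Hodd (n + 1) = (s n + s (n + 1)) / (s (n + 1) + s (n + 2)))
    (hHeven : ∀ n, Heven (n + 1) = s (n + 1) / s (n + 2))
    (Ω : Set (ℝ × ℝ))
    (hΩ : Ω = (⋃ n ∈ Finset.Icc 1 h, Ico (ℓ (n - 1)) (r n) ×ˢ Icc (0 : ℝ) (Hodd n))
      ∪ (⋃ n ∈ Finset.Icc 1 h, Ico (r n) (ℓ n) ×ˢ Icc (0 : ℝ) (Heven n))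
      ∪ Ico (ℓ h) (r (h + 1)) ×ˢ Icc (0 : ℝ) (Hodd (h + 1))
      ∪ Ico (r (h + 1)) (r 0) ×ˢ Icc (0 : ℝ) (Heven (h + 1))) :
    ∃ N N' : Set (ℝ × ℝ), N ⊆ Ω ∧ N' ⊆ Ω ∧ volume N = 0 ∧ volume N' = 0 ∧
      Set.BijOn (Tnat lam α) (Ω \ N) (Ω \ N') := by
  set a := α * lam with ha
  have l0 : 0 < lam := by linarith
  have hapos : 0 < a := by linarith
  have spos : ∀ n ≤ h + 1, 0 ≤ s n := by
    intro n
    induction n with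
    | zero => intro _; rw [hs0]
    | succ n ih => intro hn; exact (ih (by omega)).trans (hsm n (by omega)).le
  have spos' : ∀ n ≤ h, 0 < s (n + 1) := fun n hn => lt_of_le_of_lt (spos n (by omega)) (hsm n hn)
  have spos2 : ∀ n ≤ h, 0 < s (n + 2) := by
    intro n hn
    rcases hn.lt_or_eq with h1 | h1
    · exact spos' (n + 1) h1
    · rw [h1, hse]; exact spos' h le_rfl
  have smono2 : ∀ n ≤ h, s (n + 1) ≤ s (n + 2) := by
    intro n hn
    rcases hn.lt_or_eq with h1 | h1
    · exact (hsm (n + 1) h1).le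
    · rw [h1, hse]
  have sh : s h = (lam - 1) * s (h + 1) := by have := hsr h; rw [hse] at this; linarith
  have hsh := spos' h le_rfl
  have hs2 : s 2 = lam * s 1 := by have := hsr 0; rw [hs0] at this; linarith
  -- the numerators and denominators of the orbits
  set P : ℕ → ℝ := fun n => s (n + 1) - a * s n with hP
  set Q : ℕ → ℝ := fun n => a * s (n + 1) - s n with hQ
  have Pr : ∀ n, P (n + 2) = lam * P (n + 1) - P n := by
    intro n
    simp only [hP]
    have e1 := hsr n
    have e2 := hsr (n + 1)
    rw [show n + 2 + 1 = n + 1 + 2 by omega, e2, e1]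
    ring
  have Qr : ∀ n, Q (n + 2) = lam * Q (n + 1) - Q n := by
    intro n
    simp only [hQ]
    have e1 := hsr n
    have e2 := hsr (n + 1)
    rw [show n + 2 + 1 = n + 1 + 2 by omega, e2, e1]
    ring
  have P0 : P 0 = s 1 := by simp only [hP, zero_add, hs0]; ring
  have P1 : P 1 = (lam - a) * s 1 := by simp only [hP]; rw [hs2]; ring
  have Q0 : Q 0 = a * s 1 := by simp only [hQ, zero_add, hs0]; ring
  have Q1 : Q 1 = (lam * a - 1) * s 1 := by simp only [hQ]; rw [hs2]; ring
  have Ppos : ∀ n ≤ h, 0 < P n := by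
    intro n hn
    have h1 := hsm n hn
    have h2 := spos n (by omega)
    simp only [hP]; nlinarith
  have Ph1 : P (h + 1) = (1 - a) * s (h + 1) := by
    simp only [hP]; rw [show h + 1 + 1 = h + 2 from rfl, hse]; ring
  have Ph : P h = (1 - (lam - 1) * a) * s (h + 1) := by simp only [hP]; rw [sh]; ring
  have Qh1 : Q (h + 1) = -((1 - a) * s (h + 1)) := by
    simp only [hQ]; rw [show h + 1 + 1 = h + 2 from rfl, hse]; ring
  have Qh : Q h = (a - lam + 1) * s (h + 1) := by simp only [hQ]; rw [sh]; ring
  have shift : ∀ d n, s (n + 1) * s (n + d) - s n * s (n + d + 1) = s 1 * s d := by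
    intro d n
    have := wronsk (lam := lam) (A := s) (B := fun n => s (n + d)) hsr
      (fun n => by
        have := hsr (n + d)
        rw [show n + 2 + d = n + d + 2 by omega, show n + 1 + d = n + d + 1 by omega]; exact this) n
    simp only [hs0] at this
    rw [show n + 1 + d = n + d + 1 by omega] at this
    rw [this, zero_add]; ring
  have Qpos : ∀ n ≤ h, 0 < Q n := by
    intro n hn
    have h1 := shift (h - n) n
    rw [show n + (h - n) = h by omega] at h1
    have h2 : 0 ≤ s 1 * s (h - n) := mul_nonneg hs1.le (spos _ (by omega))
    have h3 := spos' n hn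
    have h4 : 0 < s (n + 1) * ((a - lam + 1) * s (h + 1)) :=
      mul_pos h3 (mul_pos (by linarith) hsh)
    have h5 : 0 < s (h + 1) * Q n := by
      simp only [hQ]; rw [sh] at h1; nlinarith
    exact (mul_pos_iff_of_pos_left hsh).1 h5
  have lem : ∀ n ≤ h, ℓ n = -P (n + 1) / P n ∧ a - lam ≤ ℓ n := by
    intro n
    induction n with
    | zero =>
      intro _
      have e : ℓ 0 = a - lam := by rw [hℓ]; simp only [Function.iterate_zero, id]; rw [ha]; ring
      refine ⟨?_, e.ge⟩
      rw [e, zero_add, P1, P0]; field_simp; ring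
    | succ n ih =>
      intro hn
      obtain ⟨i1, i2⟩ := ih (by omega)
      have p0 := Ppos n (by omega)
      have p1 := Ppos (n + 1) (by omega)
      have p2 : 0 ≤ P (n + 2) := by
        rcases (by omega : n + 2 ≤ h ∨ n + 2 = h + 1) with h5 | h5
        · exact (Ppos _ h5).le
        · rw [h5, Ph1]; exact mul_nonneg (by linarith) hsh.le
      have hneg : ℓ n < 0 := by rw [i1]; exact div_neg_of_neg_of_pos (by linarith) p0
      have e1 : -1 / ℓ n - lam = -P (n + 2) / P (n + 1) := by
        rw [i1, Pr]; field_simp; ring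
      have e2 : -P (n + 2) / P (n + 1) ≤ 0 := div_nonpos_of_nonpos_of_nonneg (by linarith) p1.le
      have e3 : ℓ (n + 1) = Tmap lam α (ℓ n) := by
        rw [hℓ, hℓ, Function.iterate_succ_apply']
      obtain ⟨t1, t2⟩ := step_neg (α := α) l0 l2 hneg i2 (by rw [e1]; linarith)
      rw [e3]
      exact ⟨by rw [t1, e1], t2⟩
  have Rlt : -Q (h + 1) / Q h < a := by
    rw [div_lt_iff₀ (Qpos h le_rfl), Qh, Qh1, neg_neg]
    have : (1 - a) * s (h + 1) < (a * (a - lam + 1)) * s (h + 1) :=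
      mul_lt_mul_of_pos_right (by linarith) hsh
    linarith
  have r0 : r 0 = a := by rw [hr]; rfl
  have rem : ∀ n ≤ h, r (n + 1) = -Q (n + 1) / Q n ∧ a - lam ≤ r (n + 1) := by
    intro n
    induction n with
    | zero =>
      intro _
      have e3 : r 1 = Tmap lam α a := by rw [hr]; rfl
      have e4 : |1 / a| = 1 / a := abs_of_pos (by positivity)
      have hia : 1 ≤ 1 / a := by rw [le_div_iff₀ hapos]; linarith
      have h3 : 1 / a - lam < a := by
        rw [sub_lt_iff_lt_add, div_lt_iff₀ hapos]; nlinarith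
      have := Tmap_eq (lam := lam) (α := α) (x := a) l0 hapos.ne' (k := 1)
        (by rw [e4]; push_cast; linarith) (by rw [e4]; push_cast; linarith)
      rw [e4] at this
      push_cast at this
      rw [zero_add, e3, this, Q1, Q0]
      refine ⟨?_, by linarith⟩
      field_simp; ring
    | succ n ih =>
      intro hn
      obtain ⟨i1, i2⟩ := ih (by omega)
      have p0 := Qpos n (by omega)
      have p1 := Qpos (n + 1) (by omega)
      have hneg : r (n + 1) < 0 := by rw [i1]; exact div_neg_of_neg_of_pos (by linarith) p0
      have e1 : -1 / r (n + 1) - lam = -Q (n + 2) / Q (n + 1) := by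
        rw [i1, Qr]; field_simp; ring
      have e2 : -Q (n + 2) / Q (n + 1) < a := by
        rcases (by omega : n + 2 ≤ h ∨ n + 1 = h) with h5 | h5
        · have := Qpos _ h5
          exact (div_neg_of_neg_of_pos (by linarith) p1).trans hapos
        · subst h5; exact Rlt
      have e3 : r (n + 1 + 1) = Tmap lam α (r (n + 1)) := by
        rw [hr, hr, Function.iterate_succ_apply']
      obtain ⟨t1, t2⟩ := step_neg (α := α) l0 l2 hneg i2 (by rw [e1]; exact e2)
      rw [e3]
      exact ⟨by rw [t1, e1], t2⟩
  have ord1 : ∀ n ≤ h, ℓ n ≤ r (n + 1) := by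
    intro n hn
    rw [(lem n hn).1, (rem n hn).1, div_le_div_iff₀ (Ppos n hn) (Qpos n hn)]
    have := wronsk Pr Qr n
    rw [P0, P1, Q0, Q1] at this
    have h5 : 0 ≤ (1 - a ^ 2) * (s 1) ^ 2 := mul_nonneg (by nlinarith) (by positivity)
    linarith
  have ord2 : ∀ n < h, r (n + 1) ≤ ℓ (n + 1) := by
    intro n hn
    rw [(lem (n + 1) hn).1, (rem n hn.le).1,
      div_le_div_iff₀ (Qpos n hn.le) (Ppos (n + 1) hn)]
    have := wronsk (A := fun n => P (n + 1)) (fun n => Pr (n + 1)) Qr n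
    simp only [zero_add] at this
    have P2 := Pr 0
    rw [zero_add, zero_add] at P2
    rw [show 1 + 1 = 2 from rfl, P2, P0, P1, Q0, Q1] at this
    have h5 : 0 ≤ (2 * a - lam) * (s 1) ^ 2 := mul_nonneg (by linarith) (by positivity)
    linarith
  -- the combined sequences
  set u : ℕ → ℝ := fun m => if m = 2 * h + 2 then r 0 else
    if m % 2 = 0 then ℓ (m / 2) else r (m / 2 + 1) with hu
  set K : ℕ → ℝ := fun m => if m % 2 = 0 then Hodd (m / 2 + 1) else Heven (m / 2 + 1) with hK
  have ul : u (2 * h + 2) = r 0 := by simp [hu]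
  have ue : ∀ n ≤ h, u (2 * n) = ℓ n := by
    intro n hn
    simp only [hu]
    rw [if_neg (by omega), if_pos (by omega), show 2 * n / 2 = n by omega]
  have uo : ∀ n ≤ h, u (2 * n + 1) = r (n + 1) := by
    intro n hn
    simp only [hu]
    rw [if_neg (by omega), if_neg (by omega), show (2 * n + 1) / 2 = n by omega]
  have Ke : ∀ n, K (2 * n) = (s n + s (n + 1)) / (s (n + 1) + s (n + 2)) := by
    intro n
    simp only [hK]
    rw [if_pos (by omega), show 2 * n / 2 = n by omega, hHodd]
  have Ko : ∀ n, K (2 * n + 1) = s (n + 1) / s (n + 2) := by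
    intro n
    simp only [hK]
    rw [if_neg (by omega), show (2 * n + 1) / 2 = n by omega, hHeven]
  have par : ∀ m : ℕ, ∃ n, m = 2 * n ∨ m = 2 * n + 1 := fun m => ⟨m / 2, by omega⟩
  have hue : u (2 * h) = -P (h + 1) / P h := by rw [ue h le_rfl, (lem h le_rfl).1]
  have huo : u (2 * h + 1) = -Q (h + 1) / Q h := by rw [uo h le_rfl, (rem h le_rfl).1]
  have q1 : 0 < 1 - (lam - 1) * a := by nlinarith
  have q2 : 0 < a - lam + 1 := by linarith
  obtain ⟨H, D, hH⟩ := build h hh lam a u K l1 l2 l3 a1 a0 aq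
    (by rw [hue, div_mul_eq_mul_div, div_eq_iff (Ppos h le_rfl).ne', Ph, Ph1]; ring)
    (by rw [huo, div_mul_eq_mul_div, div_eq_iff (Qpos h le_rfl).ne', Qh, Qh1]; ring)
    (by
      intro m hm
      obtain ⟨n, rfl | rfl⟩ := par m
      · rw [ue n (by omega), uo n (by omega)]; exact ord1 n (by omega)
      · rcases (by omega : n < h ∨ n = h) with h5 | rfl
        · rw [uo n (by omega), show 2 * n + 1 + 1 = 2 * (n + 1) by ring, ue _ h5]; exact ord2 n h5
        · rw [show 2 * n + 1 + 1 = 2 * n + 2 by ring, ul, r0, huo]; exact Rlt.le)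
    (by
      have := ue 0 (by omega)
      rw [mul_zero] at this
      rw [this, (lem 0 (by omega)).1, zero_add, P0, P1]; field_simp; ring)
    (by
      have := uo 0 (by omega)
      rw [mul_zero, zero_add] at this
      rw [this, (rem 0 (by omega)).1, zero_add, Q0, Q1]; field_simp; ring)
    (by rw [ul, r0])
    (by
      intro m hm
      obtain ⟨n, rfl | rfl⟩ := par m
      · rw [show 2 * n + 2 = 2 * (n + 1) by ring, ue n (by omega), ue (n + 1) (by omega),
          (lem n (by omega)).1, (lem (n + 1) (by omega)).1, Pr]
        have p0 := Ppos n (by omega)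
        have p1 := Ppos (n + 1) (by omega)
        field_simp; ring
      · rw [show 2 * n + 1 + 2 = 2 * (n + 1) + 1 by ring, uo n (by omega), uo (n + 1) (by omega),
          (rem n (by omega)).1, (rem (n + 1) (by omega)).1, Qr]
        have p0 := Qpos n (by omega)
        have p1 := Qpos (n + 1) (by omega)
        field_simp; ring)
    (by
      intro m hm
      obtain ⟨n, rfl | rfl⟩ := par m
      · rw [ue n (by omega), (lem n (by omega)).1]
        have p0 := Ppos n (by omega)
        have p1 := Ppos (n + 1) (by omega)
        exact div_neg_of_neg_of_pos (by linarith) p0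
      · rw [uo n (by omega), (rem n (by omega)).1]
        have p0 := Qpos n (by omega)
        have p1 := Qpos (n + 1) (by omega)
        exact div_neg_of_neg_of_pos (by linarith) p0)
    (by
      have := Ke 0
      rw [mul_zero] at this
      rw [this, zero_add, zero_add, hs0, hs2]; field_simp; try ring)
    (by
      have := Ko 0
      rw [mul_zero, zero_add, zero_add] at this
      rw [this, hs2]; field_simp)
    (by
      obtain ⟨g, rfl⟩ : ∃ g, h = g + 1 := ⟨h - 1, by omega⟩
      rw [show 2 * (g + 1) - 1 = 2 * g + 1 by omega, Ko, sh,
        show g + 1 + 1 = g + 2 from rfl]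
      rw [show g + 1 + 1 = g + 2 from rfl] at hsh
      field_simp)
    (by rw [Ke, hse, sh]; field_simp; ring)
    (by rw [Ko, hse]; field_simp)
    (by
      intro m hm
      obtain ⟨n, rfl | rfl⟩ := par m
      · have h1 := spos n (by omega)
        have h2 := spos' n (by omega)
        have h3 := spos2 n (by omega)
        have h4 := hsm n (by omega)
        have h5 := smono2 n (by omega)
        rw [Ke]
        exact ⟨by positivity, by rw [div_le_one (by positivity)]; linarith⟩
      · have h2 := spos' n (by omega)
        have h3 := spos2 n (by omega)
        have h5 := smono2 n (by omega)
        rw [Ko]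
        exact ⟨by positivity, by rw [div_le_one (by positivity)]; linarith⟩)
    (by
      intro m hm
      obtain ⟨n, rfl | rfl⟩ := par m
      · have h2 := spos' n (by omega)
        have h3 := spos2 n (by omega)
        have h4 := spos2 (n + 1) (by omega)
        have e1 := hsr n
        have e2 := hsr (n + 1)
        rw [show 2 * n + 2 = 2 * (n + 1) by ring, Ke, Ke]
        have e3 : lam - (s n + s (n + 1)) / (s (n + 1) + s (n + 2)) =
            (s (n + 2) + s (n + 1 + 2)) / (s (n + 1) + s (n + 2)) := by
          rw [eq_div_iff (by positivity), sub_mul, div_mul_cancel₀ _ (by positivity), e2,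
            show n + 1 + 1 = n + 2 from rfl]
          linarith
        rw [e3, show n + 1 + 1 = n + 2 from rfl]
        field_simp
      · have h2 := spos' n (by omega)
        have h3 := spos2 n (by omega)
        have h4 := spos2 (n + 1) (by omega)
        have e2 := hsr (n + 1)
        rw [show 2 * n + 1 + 2 = 2 * (n + 1) + 1 by ring, Ko, Ko]
        have e3 : lam - s (n + 1) / s (n + 2) = s (n + 1 + 2) / s (n + 2) := by
          rw [e2, show n + 1 + 1 = n + 2 from rfl]; field_simp
        rw [e3, show n + 1 + 1 = n + 2 from rfl]
        field_simp)
  refine core_bij D Ω fun z => ?_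
  rw [hH z, hΩ]
  simp only [mem_union, mem_iUnion, mem_prod, mem_Ico, mem_Icc, Finset.mem_Icc, exists_prop]
  have Ke' : ∀ n, K (2 * n) = Hodd (n + 1) := fun n => by rw [Ke, hHodd]
  have Ko' : ∀ n, K (2 * n + 1) = Heven (n + 1) := fun n => by rw [Ko, hHeven]
  constructor
  · rintro (((⟨n, hn, h1⟩ | ⟨n, hn, h1⟩) | h1) | h1)
    · obtain ⟨j, rfl⟩ : ∃ j, n = j + 1 := ⟨n - 1, by omega⟩
      refine ⟨2 * j, by omega, ?_⟩
      rw [ue j (by omega), uo j (by omega), Ke']; exact h1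
    · obtain ⟨j, rfl⟩ : ∃ j, n = j + 1 := ⟨n - 1, by omega⟩
      refine ⟨2 * j + 1, by omega, ?_⟩
      rw [show 2 * j + 1 + 1 = 2 * (j + 1) by ring, ue (j + 1) (by omega), uo j (by omega), Ko']
      exact h1
    · refine ⟨2 * h, by omega, ?_⟩
      rw [ue h le_rfl, uo h le_rfl, Ke']; exact h1
    · refine ⟨2 * h + 1, by omega, ?_⟩
      rw [show 2 * h + 1 + 1 = 2 * h + 2 by ring, ul, uo h le_rfl, Ko']; exact h1
  · rintro ⟨m, hm, h1⟩
    obtain ⟨n, rfl | rfl⟩ := par m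
    · rw [ue n (by omega), uo n (by omega), Ke'] at h1
      rcases (by omega : n < h ∨ n = h) with h5 | rfl
      · exact Or.inl (Or.inl (Or.inl ⟨n + 1, by omega, h1⟩))
      · exact Or.inl (Or.inr h1)
    · rcases (by omega : n < h ∨ n = h) with h5 | rfl
      · rw [show 2 * n + 1 + 1 = 2 * (n + 1) by ring, ue (n + 1) (by omega), uo n (by omega), Ko']
          at h1
        exact Or.inl (Or.inl (Or.inr ⟨n + 1, by omega, h1⟩))
      · rw [show 2 * n + 1 + 1 = 2 * n + 2 by ring, ul, uo n le_rfl, Ko'] at h1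
        exact Or.inr h1

/-- Theorem 2.9: for odd `q = 2h+3` and `ρ/λ < α ≤ 1/λ`, the natural extension map `𝒯_α`
is a bijection of `Ω_α` off of a set of two-dimensional Lebesgue measure zero. -/
theorem stmt11 (h q : ℕ) (hh : 1 ≤ h) (hq : q = 2 * h + 3) (lam α ρ : ℝ)
    (hlam : lam = 2 * Real.cos (Real.pi / q))
    (hρ : ρ = (lam - 2 + Real.sqrt (lam ^ 2 - 4 * lam + 8)) / 2)
    (hα1 : ρ / lam < α) (hα2 : α ≤ 1 / lam)
    (ℓ r : ℕ → ℝ)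
    (hℓ : ∀ n, ℓ n = (Tmap lam α)^[n] ((α - 1) * lam))
    (hr : ∀ n, r n = (Tmap lam α)^[n] (α * lam))
    (Hodd Heven : ℕ → ℝ)
    (hHodd : ∀ n : ℕ, Hodd n =
      (Real.sin (((n : ℝ) - 1) * Real.pi / q) + Real.sin (n * Real.pi / q))
        / (Real.sin (n * Real.pi / q) + Real.sin (((n : ℝ) + 1) * Real.pi / q)))
    (hHeven : ∀ n : ℕ, Heven n =
      Real.sin (n * Real.pi / q) / Real.sin (((n : ℝ) + 1) * Real.pi / q))
    (Ω : Set (ℝ × ℝ))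
    (hΩ : Ω = (⋃ n ∈ Finset.Icc 1 h, Ico (ℓ (n - 1)) (r n) ×ˢ Icc (0 : ℝ) (Hodd n))
      ∪ (⋃ n ∈ Finset.Icc 1 h, Ico (r n) (ℓ n) ×ˢ Icc (0 : ℝ) (Heven n))
      ∪ Ico (ℓ h) (r (h + 1)) ×ˢ Icc (0 : ℝ) (Hodd (h + 1))
      ∪ Ico (r (h + 1)) (r 0) ×ˢ Icc (0 : ℝ) (Heven (h + 1))) :
    ∃ N N' : Set (ℝ × ℝ), N ⊆ Ω ∧ N' ⊆ Ω ∧ volume N = 0 ∧ volume N' = 0 ∧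
      Set.BijOn (Tnat lam α) (Ω \ N) (Ω \ N') := by
  have hq0 : (0 : ℝ) < q := by rw [hq]; positivity
  have hq5 : (5 : ℝ) ≤ q := by rw [hq]; exact_mod_cast (by omega : 5 ≤ 2 * h + 3)
  have hπ := Real.pi_pos
  have hθ0 : 0 < Real.pi / q := by positivity
  have hθ4 : Real.pi / q ≤ Real.pi / 4 := div_le_div_of_nonneg_left hπ.le (by norm_num) (by linarith)
  have hc4 : Real.sqrt 2 / 2 ≤ Real.cos (Real.pi / q) := by
    rw [← Real.cos_pi_div_four]
    exact Real.cos_le_cos_of_nonneg_of_le_pi hθ0.le (by linarith) hθ4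
  have hc1 : Real.cos (Real.pi / q) < 1 := by
    rw [← Real.cos_zero]
    exact Real.cos_lt_cos_of_nonneg_of_le_pi le_rfl (by linarith) hθ0
  have hsq : Real.sqrt 2 ≤ lam := by linarith
  have hsq2 : Real.sqrt 2 ^ 2 = 2 := Real.sq_sqrt (by norm_num)
  have hsq0 : 0 ≤ Real.sqrt 2 := Real.sqrt_nonneg 2
  have l3 : 2 ≤ lam ^ 2 := by nlinarith
  have l0 : 0 ≤ lam := by linarith
  have l1 : 1 < lam := by nlinarith
  have l2 : lam < 2 := by linarith
  have lpos : 0 < lam := by linarith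
  have ha1 : α * lam ≤ 1 := by rwa [le_div_iff₀ lpos] at hα2
  have haρ : ρ < α * lam := by rwa [div_lt_iff₀ lpos] at hα1
  have hDsq : Real.sqrt (lam ^ 2 - 4 * lam + 8) ^ 2 = lam ^ 2 - 4 * lam + 8 :=
    Real.sq_sqrt (by nlinarith [sq_nonneg (lam - 2)])
  have hD0 := Real.sqrt_nonneg (lam ^ 2 - 4 * lam + 8)
  have hρ0 : 0 < ρ := by
    have : 2 - lam < Real.sqrt (lam ^ 2 - 4 * lam + 8) := by
      apply Real.lt_sqrt_of_sq_lt; nlinarith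
    rw [hρ]; linarith
  have hρ2 : ρ ^ 2 + (2 - lam) * ρ = 1 := by
    rw [hρ]; linear_combination (1 / 4 : ℝ) * hDsq
  have aq : 1 < (α * lam) ^ 2 + (2 - lam) * (α * lam) := by
    have h1 : ρ ^ 2 < (α * lam) ^ 2 := by
      apply pow_lt_pow_left₀ haρ hρ0.le (by norm_num)
    have h2 : (2 - lam) * ρ < (2 - lam) * (α * lam) := mul_lt_mul_of_pos_left haρ (by linarith)
    linarith
  have hapos : 0 < α * lam := hρ0.trans haρ
  have a0 : lam - 1 < α * lam := by
    by_contra hc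
    rw [not_lt] at hc
    have := mul_le_mul_of_nonneg_left (by linarith : α * lam + 2 - lam ≤ 1) hapos.le
    linarith
  have a2 : lam ≤ 2 * (α * lam) := by
    by_contra hc
    rw [not_le] at hc
    have h1 := mul_self_le_mul_self hapos.le (by linarith : α * lam ≤ lam / 2)
    have h2 := mul_le_mul_of_nonneg_left (by linarith : α * lam ≤ lam / 2)
      (by linarith : 0 ≤ 2 - lam)
    have h3 := sq_nonneg (lam - 2)
    linarith
  have hqc : (q : ℝ) = 2 * h + 3 := by rw [hq]; push_cast; ring
  refine seqpart h hh lam α (fun n => Real.sin (n * (Real.pi / q))) ℓ r Hodd Heven l1 l2 l3 ha1 a0 aq a2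
    (by simp) ?_ ?_ ?_ ?_ hℓ hr ?_ ?_ Ω hΩ
  · simp only [Nat.cast_one, one_mul]
    exact Real.sin_pos_of_pos_of_lt_pi hθ0 (by linarith)
  · intro n
    push_cast
    rw [hlam, show ((n : ℝ) + 2) * (Real.pi / q) = (n + 1) * (Real.pi / q) + Real.pi / q by ring,
      show (n : ℝ) * (Real.pi / q) = (n + 1) * (Real.pi / q) - Real.pi / q by ring,
      Real.sin_add, Real.sin_sub]
    ring
  · intro n hn
    push_cast
    have hnh : (n : ℝ) ≤ h := by exact_mod_cast hn
    have hn0 : (0 : ℝ) ≤ n := n.cast_nonneg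
    rw [← sub_pos, Real.sin_sub_sin]
    refine mul_pos (mul_pos two_pos (Real.sin_pos_of_pos_of_lt_pi ?_ ?_))
      (Real.cos_pos_of_mem_Ioo ⟨?_, ?_⟩)
    · ring_nf; positivity
    · ring_nf; ring_nf at hθ4; linarith
    · have : 0 ≤ (((n : ℝ) + 1) * (Real.pi / q) + n * (Real.pi / q)) / 2 := by positivity
      linarith
    · have e : (((n : ℝ) + 1) * (Real.pi / q) + n * (Real.pi / q)) / 2
          = (2 * n + 1) / q * (Real.pi / 2) := by field_simp; ring
      rw [e]
      have : (2 * (n : ℝ) + 1) / q < 1 := by rw [div_lt_one hq0]; linarith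
      nlinarith
  · skip
    push_cast
    rw [← Real.sin_pi_sub]
    congr 1
    field_simp
    rw [hqc]; ring
  · intro n
    rw [hHodd]
    push_cast
    congr 2 <;> congr 1 <;> ring
  · intro n
    rw [hHeven]
    push_cast
    congr 2 <;> ring
end

section
/- Let q = 2h+3 with h ≥ 1, λ = 2cos(π/q), ρ = (λ − 2 + √(λ² − 4λ + 8))/2, and ρ/λ < α ≤ 1/λ. Then the integral of (1+xy)^{−2} over the natural extension region Ω_α (the union ⋃_{n=1}^{2h+2} J_n × [0,H_n] described below) equals log((1 + αλ)/√(2 − λ)) = log((1 + 2α·cos(π/q))/(2 sin(π/(2q)))); equivalently, the normalizing constant of the invariant probability density C_{q,α}/(1+xy)² on Ω_α is C_{q,α} = 1/log((1 + αλ)/√(2 − λ)). -/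
open Set MeasureTheory

theorem one_add_pos_aux {a x y H : ℝ} (hH : 0 < 1 + a * H) (hx : a ≤ x) (hy0 : 0 ≤ y)
    (hy : y ≤ H) : 0 < 1 + x * y := by
  rcases le_total 0 x with h | h
  · positivity
  · nlinarith [mul_nonneg (neg_nonneg.2 h) (sub_nonneg.2 hy),
      mul_nonneg (sub_nonneg.2 hx) (hy0.trans hy)]

theorem box_integrable {a b H : ℝ} (h1 : 0 < 1 + a * H) :
    IntegrableOn (fun z : ℝ × ℝ => 1 / (1 + z.1 * z.2) ^ 2) (Ico a b ×ˢ Icc (0 : ℝ) H) := by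
  have : IntegrableOn (fun z : ℝ × ℝ => 1 / (1 + z.1 * z.2) ^ 2) (Icc a b ×ˢ Icc (0 : ℝ) H) := by
    apply ContinuousOn.integrableOn_compact (isCompact_Icc.prod isCompact_Icc)
    apply ContinuousOn.div (by fun_prop) (by fun_prop)
    rintro ⟨x, y⟩ ⟨hx, hy⟩
    have := one_add_pos_aux h1 hx.1 hy.1 hy.2
    positivity
  exact this.mono_set (prod_mono Ico_subset_Icc_self le_rfl)

theorem box_inner {x H : ℝ} (hH : 0 ≤ H) (h1 : ∀ y ∈ Icc (0 : ℝ) H, 0 < 1 + x * y) :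
    ∫ y in Icc (0 : ℝ) H, 1 / (1 + x * y) ^ 2 = H / (1 + x * H) := by
  rw [integral_Icc_eq_integral_Ioc, ← intervalIntegral.integral_of_le hH]
  rw [intervalIntegral.integral_eq_sub_of_hasDerivAt (f := fun y => y / (1 + x * y))]
  · simp
  · intro y hy
    rw [uIcc_of_le hH] at hy
    have hp := h1 y hy
    have h2 : HasDerivAt (fun y => 1 + x * y) x y := by
      simpa using ((hasDerivAt_id y).const_mul x).const_add 1
    have := (hasDerivAt_id y).div h2 hp.ne'
    have e : 1 / (1 + x * y) ^ 2 = (1 * (1 + x * y) - id y * x) / (1 + x * y) ^ 2 := by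
      congr 1; simp only [id]; ring
    rw [e]
    exact this
  · apply ContinuousOn.intervalIntegrable
    rw [uIcc_of_le hH]
    apply ContinuousOn.div (by fun_prop) (by fun_prop)
    intro y hy
    have := h1 y hy
    positivity

theorem box_integral {a b H : ℝ} (hH : 0 ≤ H) (hab : a ≤ b) (h1 : 0 < 1 + a * H) :
    ∫ z in Ico a b ×ˢ Icc (0 : ℝ) H, 1 / (1 + z.1 * z.2) ^ 2
      = Real.log (1 + b * H) - Real.log (1 + a * H) := by
  have hi := box_integrable (b := b) h1
  rw [Measure.volume_eq_prod] at hi ⊢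
  rw [setIntegral_prod _ hi]
  have : ∫ x in Ico a b, ∫ y in Icc (0 : ℝ) H, 1 / (1 + x * y) ^ 2
      = ∫ x in Ico a b, H / (1 + x * H) := by
    apply setIntegral_congr_fun measurableSet_Ico
    intro x hx
    exact box_inner hH (fun y hy => one_add_pos_aux h1 hx.1 hy.1 hy.2)
  simp only at this ⊢
  rw [this, integral_Ico_eq_integral_Ioc, ← intervalIntegral.integral_of_le hab]
  rw [intervalIntegral.integral_eq_sub_of_hasDerivAt (f := fun x => Real.log (1 + x * H))]
  · intro x hx
    rw [uIcc_of_le hab] at hx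
    have hp := one_add_pos_aux h1 hx.1 hH le_rfl
    have h2 : HasDerivAt (fun x => 1 + x * H) H x := by
      simpa using ((hasDerivAt_id x).mul_const H).const_add 1
    exact h2.log hp.ne'
  · apply ContinuousOn.intervalIntegrable
    rw [uIcc_of_le hab]
    apply ContinuousOn.div (by fun_prop) (by fun_prop)
    intro x hx
    exact (one_add_pos_aux h1 hx.1 hH le_rfl).ne'

def Good (S : Set (ℝ × ℝ)) (c I : ℝ) : Prop :=
  S ⊆ {z | z.1 < c} ∧ IntegrableOn (fun z : ℝ × ℝ => 1 / (1 + z.1 * z.2) ^ 2) S ∧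
    ∫ z in S, 1 / (1 + z.1 * z.2) ^ 2 = I

theorem Good.step {S : Set (ℝ × ℝ)} {c I b H : ℝ} (hS : Good S c I) (hH : 0 ≤ H) (hcb : c ≤ b)
    (h1 : 0 < 1 + c * H) :
    Good (S ∪ Ico c b ×ˢ Icc (0 : ℝ) H) b
      (I + (Real.log (1 + b * H) - Real.log (1 + c * H))) := by
  obtain ⟨h2, h3, h4⟩ := hS
  refine ⟨?_, h3.union (box_integrable h1), ?_⟩
  · rintro z (hz | hz)
    · exact lt_of_lt_of_le (h2 hz) hcb
    · exact hz.1.2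
  · rw [setIntegral_union _ (measurableSet_Ico.prod measurableSet_Icc) h3 (box_integrable h1), h4,
      box_integral hH hcb h1]
    rw [Set.disjoint_left]
    intro z hz hz'
    exact absurd (h2 hz) (not_lt.2 hz'.1.1)

theorem Tmap_digit_one {lam α x : ℝ} (hl : 0 < lam) (hx : x ≠ 0)
    (h1 : (α - 1) * lam ≤ |1 / x| - lam) (h2 : |1 / x| - lam < α * lam) :
    Tmap lam α x = |1 / x| - lam := by
  have : dfun lam α x = 1 := by
    unfold dfun
    have e : |1 / (x * lam)| = |1 / x| / lam := by
      rw [← div_div, abs_div, abs_of_pos hl]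
    rw [e, Int.floor_eq_iff]
    constructor
    · have : α ≤ |1 / x| / lam := by rw [le_div_iff₀ hl]; linarith
      push_cast; linarith
    · have : |1 / x| / lam < α + 1 := by rw [div_lt_iff₀ hl]; linarith
      push_cast; linarith
  simp [Tmap, hx, this]

theorem Tmap_neg {lam α x : ℝ} (hl : 0 < lam) (hl2 : lam < 2) (hx : x < 0)
    (h1 : (α - 1) * lam ≤ x) (h2 : -1 / x - lam < α * lam) :
    Tmap lam α x = -1 / x - lam ∧ x ≤ -1 / x - lam := by
  have e : |1 / x| = -1 / x := by
    rw [abs_of_neg (one_div_neg.2 hx)]; ring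
  have h3 : x ≤ -1 / x - lam := by
    have hx0 : x ≠ 0 := hx.ne
    have : -1 / x - lam - x = (x ^ 2 + lam * x + 1) / (-x) := by field_simp; ring
    have h4 : 0 ≤ (x ^ 2 + lam * x + 1) / (-x) := by
      apply div_nonneg _ (by linarith)
      nlinarith [sq_nonneg (x + 1), sq_nonneg (x + lam / 2)]
    linarith
  refine ⟨?_, h3⟩
  rw [← e] at h2 h3 ⊢
  exact Tmap_digit_one hl hx.ne (h1.trans h3) h2

theorem core (h : ℕ) (lam α : ℝ) (B : ℕ → ℝ) (B0 : B 0 = 0) (B1 : B 1 = 1)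
    (hB : ∀ n, B (n + 2) = lam * B (n + 1) - B n)
    (hdet : ∀ n, B (n + 1) ^ 2 - B n * B (n + 2) = 1)
    (hmono : ∀ n ≤ h, B n < B (n + 1)) (hpos : ∀ n ≤ h, 0 < B (n + 1))
    (hend : B (h + 2) = B (h + 1))
    (hl1 : 1 < lam) (hl2 : lam < 2) (hr0 : 0 < α * lam) (hr1 : α * lam ≤ 1)
    (hq : 0 < (α * lam) ^ 2 + (2 - lam) * (α * lam) - 1)
    (ℓ r : ℕ → ℝ)
    (hℓ : ∀ n, ℓ n = (Tmap lam α)^[n] ((α - 1) * lam))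
    (hr : ∀ n, r n = (Tmap lam α)^[n] (α * lam))
    (Hodd Heven : ℕ → ℝ)
    (hHodd : ∀ n : ℕ, Hodd (n + 1) = (B n + B (n + 1)) / (B (n + 1) + B (n + 2)))
    (hHeven : ∀ n : ℕ, Heven n = B n / B (n + 1))
    (Ω : Set (ℝ × ℝ))
    (hΩ : Ω = (⋃ n ∈ Finset.Icc 1 h, Ico (ℓ (n - 1)) (r n) ×ˢ Icc (0 : ℝ) (Hodd n))
      ∪ (⋃ n ∈ Finset.Icc 1 h, Ico (r n) (ℓ n) ×ˢ Icc (0 : ℝ) (Heven n))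
      ∪ Ico (ℓ h) (r (h + 1)) ×ˢ Icc (0 : ℝ) (Hodd (h + 1))
      ∪ Ico (r (h + 1)) (r 0) ×ˢ Icc (0 : ℝ) (Heven (h + 1))) :
    ∫ z in Ω, 1 / (1 + z.1 * z.2) ^ 2 = Real.log ((1 + α * lam) / Real.sqrt (2 - lam)) := by
  have hℓ0 : ℓ 0 = α * lam - lam := by rw [hℓ]; simp; ring
  have hr00 : r 0 = α * lam := by rw [hr]; simp
  have hℓs : ∀ n, ℓ (n + 1) = Tmap lam α (ℓ n) := by
    intro n; rw [hℓ, hℓ, Function.iterate_succ_apply']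
  have hrs : ∀ n, r (n + 1) = Tmap lam α (r n) := by
    intro n; rw [hr, hr, Function.iterate_succ_apply']
  have hα : (α - 1) * lam = α * lam - lam := by ring
  have hT1 := @Tmap_digit_one lam α
  have hT2 := @Tmap_neg lam α
  rw [hα] at hT1 hT2
  clear hℓ hr hα
  generalize hs : α * lam = s at *
  have hs1 : lam - 1 < s := by
    by_contra hc
    push Not at hc
    nlinarith
  have hs2 : lam / 2 < s := by
    by_contra hc
    push Not at hc
    nlinarith [sq_nonneg (lam / 2 - 1)]
  obtain ⟨P, hP⟩ : ∃ P : ℕ → ℝ, ∀ n, P n = B (n + 1) - s * B n := ⟨_, fun _ => rfl⟩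
  obtain ⟨Q, hQ⟩ : ∃ Q : ℕ → ℝ, ∀ n, Q n = s * B (n + 1) - B n := ⟨_, fun _ => rfl⟩
  have hBn : ∀ n ≤ h + 1, 0 ≤ B n := by
    intro n hn
    cases n with
    | zero => simp [B0]
    | succ n => exact (hpos n (by omega)).le
  have hle : ∀ n ≤ h, B (n + 1) ≤ B (n + 2) := by
    intro n hn
    rcases hn.lt_or_eq with h1 | h1
    · exact (hmono (n + 1) h1).le
    · rw [h1, hend]
  have hPpos : ∀ n ≤ h, 0 < P n := by
    intro n hn
    rw [hP]
    nlinarith [hmono n hn, hBn n (by omega)]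
  have hPend : 0 ≤ P (h + 1) := by
    rw [hP, hend]
    nlinarith [hpos h le_rfl]
  have hPnn : ∀ n ≤ h, 0 ≤ P (n + 1) := by
    intro n hn
    rcases hn.lt_or_eq with h1 | h1
    · exact (hPpos (n + 1) h1).le
    · rw [h1]; exact hPend
  have hQpos : ∀ n ≤ h, 0 < Q n := by
    intro n hn
    rw [hQ]
    have := hle n hn
    rw [hB] at this
    nlinarith [mul_pos (sub_pos.2 hs1) (hpos n hn)]
  have hPrec : ∀ n, P (n + 2) = lam * P (n + 1) - P n := by
    intro n; simp only [hP, hB (n + 1), hB n]; ring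
  have hQrec : ∀ n, Q (n + 2) = lam * Q (n + 1) - Q n := by
    intro n; simp only [hQ, hB (n + 1), hB n]; ring
  have B2 : B 2 = lam := by rw [hB, B0, B1]; ring
  have hl0 : 0 < lam := by linarith
  have hℓf : ∀ n ≤ h, ℓ n = -P (n + 1) / P n ∧ s - lam ≤ ℓ n := by
    intro n
    induction n with
    | zero =>
      intro _
      rw [hℓ0, hP, hP, B0]
      simp [B1, B2]
    | succ n ih =>
      intro hn
      obtain ⟨e, h1⟩ := ih (by omega)
      have p0 := hPpos n (by omega)
      have p1 := hPpos (n + 1) hn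
      have p2 := hPnn (n + 1) hn
      have hneg : ℓ n < 0 := by
        rw [e]; exact div_neg_of_neg_of_pos (by linarith) p0
      have e2 : -1 / ℓ n - lam = -P (n + 2) / P (n + 1) := by
        rw [e, hPrec]; field_simp; ring
      have h3 : -P (n + 2) / P (n + 1) ≤ 0 := div_nonpos_of_nonpos_of_nonneg (by linarith) p1.le
      obtain ⟨h4, h5⟩ := hT2 hl0 hl2 hneg h1 (by rw [e2]; linarith)
      rw [hℓs, h4, e2]
      refine ⟨rfl, ?_⟩
      rw [← e2]; linarith
  have hrf : ∀ n ≤ h, r (n + 1) = -Q (n + 1) / Q n ∧ s - lam ≤ r (n + 1) := by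
    intro n
    induction n with
    | zero =>
      intro _
      have e : |1 / s| = 1 / s := abs_of_pos (by positivity)
      have h1 : 1 ≤ 1 / s := by rw [le_div_iff₀ hr0]; linarith
      have h2 : 1 / s < s + lam := by
        rw [div_lt_iff₀ hr0]
        nlinarith
      have := hT1 (x := s) hl0 hr0.ne' (by rw [e]; linarith) (by rw [e]; linarith)
      rw [hrs, hr00, this, e, hQ, hQ, B0]
      simp only [zero_add, B1, B2, mul_one, sub_zero]
      refine ⟨by field_simp; ring, by linarith⟩
    | succ n ih =>
      intro hn
      obtain ⟨e, h1⟩ := ih (by omega)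
      have p0 := hQpos n (by omega)
      have p1 := hQpos (n + 1) hn
      have hneg : r (n + 1) < 0 := by
        rw [e]; exact div_neg_of_neg_of_pos (by linarith) p0
      have e2 : -1 / r (n + 1) - lam = -Q (n + 2) / Q (n + 1) := by
        rw [e, hQrec]; field_simp; ring
      have h3 : -Q (n + 2) / Q (n + 1) < s := by
        rcases hn.lt_or_eq with h6 | h6
        · have := hQpos (n + 2) h6
          have : -Q (n + 2) / Q (n + 1) ≤ 0 :=
            div_nonpos_of_nonpos_of_nonneg (by linarith) p1.le
          linarith
        · rw [div_lt_iff₀ p1]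
          have e3 : B (n + 3) = B (n + 2) := by
            have := hend; rw [← h6] at this; exact this
          have e4 := hB (n + 1)
          rw [hQ, hQ]
          have e5 : B (n + 1) = (lam - 1) * B (n + 2) := by
            have : B (n + 1 + 2) = B (n + 3) := rfl
            have : B (n + 1 + 1) = B (n + 2) := rfl
            grind
          have := hpos (n + 1) hn
          have h7 : B (n + 2 + 1) = B (n + 2) := e3
          have h8 : B (n + 1 + 1) = B (n + 2) := rfl
          rw [h8] at this
          rw [h7, h8, e5]
          nlinarith [mul_pos this hq]
      obtain ⟨h4, h5⟩ := hT2 hl0 hl2 hneg h1 (by rw [e2]; linarith)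
      rw [hrs, h4, e2]
      refine ⟨rfl, ?_⟩
      rw [← e2]; linarith
  have hord1 : ∀ n ≤ h, ℓ n ≤ r (n + 1) := by
    intro n hn
    rw [(hℓf n hn).1, (hrf n hn).1, div_le_div_iff₀ (hPpos n hn) (hQpos n hn)]
    simp only [hP, hQ]
    have e := hdet n
    have : n + 1 + 1 = n + 2 := rfl
    rw [this]
    nlinarith [mul_nonneg (sub_nonneg.2 hr1) (by linarith : (0:ℝ) ≤ 1 + s)]
  have hord2 : ∀ n, n + 1 ≤ h → r (n + 1) ≤ ℓ (n + 1) := by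
    intro n hn
    rw [(hℓf _ hn).1, (hrf n (by omega)).1, div_le_div_iff₀ (hQpos n (by omega)) (hPpos _ hn)]
    have e := hdet n
    have e1 := hdet (n + 1)
    have e2 := hB n
    have e3 := hB (n + 1)
    have t : Q (n + 1) * P (n + 1) - P (n + 1 + 1) * Q n = 2 * s - lam := by
      simp only [hP, hQ]
      have t1 : n + 1 + 1 = n + 2 := rfl
      have t2 : n + 1 + 2 = n + 3 := rfl
      have t3 : n + 2 + 1 = n + 3 := rfl
      rw [t1, t2] at *
      rw [t3]
      linear_combination (s - lam) * e + s * e1 - B (n + 1) * e2 + B n * e3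
    linarith
  have hB12 : ∀ n ≤ h, 0 < B (n + 1) + B (n + 2) := fun n hn => by
    linarith [hpos n hn, hle n hn]
  have hHo : ∀ n ≤ h, 0 ≤ Hodd (n + 1) := by
    intro n hn
    rw [hHodd]
    exact div_nonneg (by linarith [hBn n (by omega), hpos n hn]) (hB12 n hn).le
  have hHe : ∀ n ≤ h + 1, 0 ≤ Heven n := by
    intro n hn
    rw [hHeven]
    rcases hn.lt_or_eq with h1 | h1
    · exact div_nonneg (hBn n hn) (hpos n (by omega)).le
    · subst h1
      have : B (h + 1 + 1) = B (h + 1) := hend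
      rw [this]
      exact div_nonneg (hBn _ le_rfl) (hBn _ le_rfl)
  have o1 : ∀ n ≤ h, 1 + ℓ n * Hodd (n + 1) = (1 + s) / (P n * (B (n + 1) + B (n + 2))) := by
    intro n hn
    have p := (hPpos n hn).ne'
    have b := (hB12 n hn).ne'
    rw [(hℓf n hn).1, hHodd]
    field_simp
    simp only [hP]
    have : n + 1 + 1 = n + 2 := rfl
    rw [this]
    linear_combination (1 + s) * hdet n
  have o2 : ∀ n ≤ h, 1 + r (n + 1) * Hodd (n + 1) =
      (1 + s) / (Q n * (B (n + 1) + B (n + 2))) := by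
    intro n hn
    have p := (hQpos n hn).ne'
    have b := (hB12 n hn).ne'
    rw [(hrf n hn).1, hHodd]
    field_simp
    simp only [hQ]
    have : n + 1 + 1 = n + 2 := rfl
    rw [this]
    linear_combination (1 + s) * hdet n
  have e1 : ∀ n, n + 1 ≤ h → 1 + r (n + 1) * Heven (n + 1) = 1 / (Q n * B (n + 2)) := by
    intro n hn
    have p := (hQpos n (by omega)).ne'
    have b := (hpos (n + 1) hn).ne'
    have : n + 1 + 1 = n + 2 := rfl
    rw [this] at b
    rw [(hrf n (by omega)).1, hHeven, this]
    field_simp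
    simp only [hQ]
    rw [this]
    linear_combination hdet n
  have e2 : ∀ n, n + 1 ≤ h → 1 + ℓ (n + 1) * Heven (n + 1) = 1 / (P (n + 1) * B (n + 2)) := by
    intro n hn
    have p := (hPpos (n + 1) hn).ne'
    have b := (hpos (n + 1) hn).ne'
    have : n + 1 + 1 = n + 2 := rfl
    rw [this] at b
    rw [(hℓf (n + 1) hn).1, hHeven, this]
    field_simp
    simp only [hP]
    have t1 : n + 2 + 1 = n + 1 + 2 := rfl
    rw [this, t1]
    linear_combination hdet (n + 1)
  have hs0 : (0:ℝ) < 1 + s := by linarith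
  have lo : ∀ n ≤ h, Real.log (1 + r (n + 1) * Hodd (n + 1)) - Real.log (1 + ℓ n * Hodd (n + 1))
      = Real.log (P n) - Real.log (Q n) := by
    intro n hn
    have p := (hPpos n hn).ne'
    have q := (hQpos n hn).ne'
    have b := (hB12 n hn).ne'
    rw [o1 n hn, o2 n hn, Real.log_div hs0.ne' (by positivity), Real.log_div hs0.ne' (by positivity),
      Real.log_mul p b, Real.log_mul q b]
    ring
  have le' : ∀ n, n + 1 ≤ h → Real.log (1 + ℓ (n + 1) * Heven (n + 1))
      - Real.log (1 + r (n + 1) * Heven (n + 1)) = Real.log (Q n) - Real.log (P (n + 1)) := by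
    intro n hn
    have p := (hPpos (n + 1) hn).ne'
    have q := (hQpos n (by omega)).ne'
    have b := (hpos (n + 1) hn).ne'
    have : n + 1 + 1 = n + 2 := rfl
    rw [this] at b
    rw [e1 n hn, e2 n hn, Real.log_div one_ne_zero (by positivity),
      Real.log_div one_ne_zero (by positivity),
      Real.log_mul p b, Real.log_mul q b]
    ring
  have key : ∀ k ≤ h, Good ((⋃ n ∈ Finset.Icc 1 k, Ico (ℓ (n - 1)) (r n) ×ˢ Icc (0 : ℝ) (Hodd n))
      ∪ (⋃ n ∈ Finset.Icc 1 k, Ico (r n) (ℓ n) ×ˢ Icc (0 : ℝ) (Heven n))) (ℓ k)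
      (- Real.log (P k)) := by
    intro k
    induction k with
    | zero =>
      intro _
      have : P 0 = 1 := by rw [hP, B0, B1]; ring
      simp [Good, this]
    | succ k ih =>
      intro hk
      have g := ih (by omega)
      have p := hPpos k (by omega)
      have p' := hPpos (k + 1) hk
      have q := hQpos k (by omega)
      have b := hB12 k (by omega)
      have b' : 0 < B (k + 2) := hpos (k + 1) hk
      have g1 := g.step (hHo k (by omega)) (hord1 k (by omega))
        (by rw [o1 k (by omega)]; positivity)
      have g2 := g1.step (hHe (k + 1) (by omega)) (hord2 k hk)
        (by rw [e1 k hk]; positivity)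
      rw [lo k (by omega), le' k hk] at g2
      have ei : Finset.Icc 1 (k + 1) = insert (k + 1) (Finset.Icc 1 k) := by
        ext x; simp; omega
      rw [ei, Finset.set_biUnion_insert, Finset.set_biUnion_insert]
      convert g2 using 1
      · simp only [Nat.add_sub_cancel]
        ext z
        simp only [mem_union]
        tauto
      · ring
  have q := hQpos h le_rfl
  have b := hB12 h le_rfl
  have p := hPpos h le_rfl
  have g1 := (key h le_rfl).step (hHo h le_rfl) (hord1 h le_rfl)
    (by rw [o1 h le_rfl]; positivity)
  have bh := hpos h le_rfl
  have He1 : Heven (h + 1) = 1 := by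
    rw [hHeven]
    have : B (h + 1 + 1) = B (h + 1) := hend
    rw [this, div_self bh.ne']
  have hBh : B h = (lam - 1) * B (h + 1) := by
    have := hB h; rw [hend] at this; linarith
  have hQ1 : -Q (h + 1) = (1 - s) * B (h + 1) := by
    have : B (h + 1 + 1) = B (h + 1) := hend
    rw [hQ, this]; ring
  have hrh : r (h + 1) = (1 - s) * B (h + 1) / Q h := by
    rw [(hrf h le_rfl).1, hQ1]
  have hrh0 : 0 ≤ r (h + 1) := by
    rw [hrh]; exact div_nonneg (mul_nonneg (by linarith) bh.le) q.le
  have hrh1 : r (h + 1) ≤ r 0 := by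
    rw [hr00, hrh, div_le_iff₀ q, hQ, hBh]
    nlinarith [mul_pos bh hq]
  have g2 := g1.step (hHe (h + 1) le_rfl) hrh1 (by rw [He1]; linarith)
  rw [← hΩ, lo h le_rfl, He1, hr00] at g2
  rw [g2.2.2]
  have hrh2 : 1 + r (h + 1) * 1 = Real.sqrt (2 - lam) / Q h := by
    have hd := hdet h
    rw [hend, hBh] at hd
    have : Real.sqrt (2 - lam) = (2 - lam) * B (h + 1) := by
      rw [Real.sqrt_eq_iff_mul_self_eq (by linarith) (mul_nonneg (by linarith) bh.le)]
      linear_combination -(2 - lam) * hd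
    rw [this, hrh]
    field_simp
    rw [hQ, hBh]; ring
  have hsq : 0 < Real.sqrt (2 - lam) := Real.sqrt_pos.2 (by linarith)
  rw [hrh2, Real.log_div hsq.ne' q.ne', Real.log_div hs0.ne' hsq.ne', mul_one]
  ring


/-- Proposition 2.11: for odd `q = 2h+3` and `ρ/λ < α ≤ 1/λ`, the integral of `(1+xy)⁻²`
over `Ω_α` equals `log((1+αλ)/√(2-λ)) = log((1+2α cos(π/q))/(2 sin(π/(2q))))`. -/
theorem stmt12 (h q : ℕ) (hh : 1 ≤ h) (hq : q = 2 * h + 3) (lam α ρ : ℝ)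
    (hlam : lam = 2 * Real.cos (Real.pi / q))
    (hρ : ρ = (lam - 2 + Real.sqrt (lam ^ 2 - 4 * lam + 8)) / 2)
    (hα1 : ρ / lam < α) (hα2 : α ≤ 1 / lam)
    (ℓ r : ℕ → ℝ)
    (hℓ : ∀ n, ℓ n = (Tmap lam α)^[n] ((α - 1) * lam))
    (hr : ∀ n, r n = (Tmap lam α)^[n] (α * lam))
    (Hodd Heven : ℕ → ℝ)
    (hHodd : ∀ n : ℕ, Hodd n =
      (Real.sin (((n : ℝ) - 1) * Real.pi / q) + Real.sin (n * Real.pi / q))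
        / (Real.sin (n * Real.pi / q) + Real.sin (((n : ℝ) + 1) * Real.pi / q)))
    (hHeven : ∀ n : ℕ, Heven n =
      Real.sin (n * Real.pi / q) / Real.sin (((n : ℝ) + 1) * Real.pi / q))
    (Ω : Set (ℝ × ℝ))
    (hΩ : Ω = (⋃ n ∈ Finset.Icc 1 h, Ico (ℓ (n - 1)) (r n) ×ˢ Icc (0 : ℝ) (Hodd n))
      ∪ (⋃ n ∈ Finset.Icc 1 h, Ico (r n) (ℓ n) ×ˢ Icc (0 : ℝ) (Heven n))
      ∪ Ico (ℓ h) (r (h + 1)) ×ˢ Icc (0 : ℝ) (Hodd (h + 1))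
      ∪ Ico (r (h + 1)) (r 0) ×ˢ Icc (0 : ℝ) (Heven (h + 1))) :
    (∫ z in Ω, 1 / (1 + z.1 * z.2) ^ 2
        = Real.log ((1 + α * lam) / Real.sqrt (2 - lam))) ∧
    (∫ z in Ω, 1 / (1 + z.1 * z.2) ^ 2
        = Real.log ((1 + 2 * α * Real.cos (Real.pi / q)) / (2 * Real.sin (Real.pi / (2 * q))))) := by
  have hq0 : (0:ℝ) < q := by rw [hq]; positivity
  have hqe : (q:ℝ) = 2 * h + 3 := by rw [hq]; push_cast; ring
  have hh1 : (1:ℝ) ≤ h := by exact_mod_cast hh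
  have hpi := Real.pi_pos
  obtain ⟨θ, hθ⟩ : ∃ θ : ℝ, θ = Real.pi / q := ⟨_, rfl⟩
  have hθ0 : 0 < θ := by rw [hθ]; positivity
  have hθq : (2 * h + 3) * θ = Real.pi := by rw [hθ, ← hqe]; field_simp
  have hθ3 : θ < Real.pi / 3 := by nlinarith
  have hs0 : 0 < Real.sin θ := Real.sin_pos_of_pos_of_lt_pi hθ0 (by linarith)
  have hl1 : 1 < lam := by
    have : Real.cos (Real.pi / 3) < Real.cos θ :=
      Real.cos_lt_cos_of_nonneg_of_le_pi hθ0.le (by linarith) hθ3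
    rw [Real.cos_pi_div_three] at this
    rw [hlam, ← hθ]; linarith
  have hl2 : lam < 2 := by
    have : Real.cos θ < Real.cos 0 :=
      Real.cos_lt_cos_of_nonneg_of_le_pi le_rfl (by linarith) hθ0
    rw [Real.cos_zero] at this
    rw [hlam, ← hθ]; linarith
  have hl0 : 0 < lam := by linarith
  have ha1 : ρ < α * lam := by rwa [div_lt_iff₀ hl0] at hα1
  have ha2 : α * lam ≤ 1 := by rwa [le_div_iff₀ hl0] at hα2
  have hsq := Real.sq_sqrt (show 0 ≤ lam ^ 2 - 4 * lam + 8 by nlinarith [sq_nonneg (lam - 2)])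
  have hsq0 := Real.sqrt_nonneg (lam ^ 2 - 4 * lam + 8)
  have hρ0 : 0 < ρ := by
    have : 2 - lam < Real.sqrt (lam ^ 2 - 4 * lam + 8) := by
      apply Real.lt_sqrt_of_sq_lt; nlinarith
    rw [hρ]; linarith
  have hρq : ρ ^ 2 + (2 - lam) * ρ - 1 = 0 := by
    rw [hρ]; linear_combination hsq / 4
  have hdisc : 0 < (α * lam) ^ 2 + (2 - lam) * (α * lam) - 1 := by
    nlinarith
  have hlam' : lam = 2 * Real.cos θ := by rw [hlam, hθ]
  have E0 : ∀ x : ℝ, x * Real.pi / q = x * θ := by intro x; rw [hθ]; ring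
  have main := core h lam α (fun n => Real.sin (n * θ) / Real.sin θ) (by simp)
    (by simp [hs0.ne']) ?_ ?_ ?_ ?_ ?_ hl1 hl2 (by linarith) ha2 hdisc ℓ r hℓ hr Hodd Heven
    ?_ ?_ Ω hΩ
  · refine ⟨main, ?_⟩
    rw [main]
    congr 2
    · rw [hlam]; ring
    · have e : Real.pi / (2 * q) = θ / 2 := by rw [hθ]; ring
      have hs2 : 0 < Real.sin (θ / 2) :=
        Real.sin_pos_of_pos_of_lt_pi (by linarith) (by linarith)
      rw [e, Real.sqrt_eq_iff_mul_self_eq (by linarith) (by linarith), hlam']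
      have h1 := Real.cos_two_mul (θ / 2)
      have h2 := Real.sin_sq_add_cos_sq (θ / 2)
      rw [show 2 * (θ / 2) = θ by ring] at h1
      rw [h1]
      linear_combination -4 * h2
  · intro n
    rw [hlam', show ((n + 2 : ℕ) : ℝ) * θ = ((n + 1 : ℕ) : ℝ) * θ + θ by push_cast; ring,
      show (n : ℝ) * θ = ((n + 1 : ℕ) : ℝ) * θ - θ by push_cast; ring,
      Real.sin_add, Real.sin_sub]
    ring
  · intro n
    rw [show ((n + 2 : ℕ) : ℝ) * θ = ((n + 1 : ℕ) : ℝ) * θ + θ by push_cast; ring,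
      show (n : ℝ) * θ = ((n + 1 : ℕ) : ℝ) * θ - θ by push_cast; ring,
      Real.sin_add, Real.sin_sub]
    field_simp
    generalize ((n + 1 : ℕ) : ℝ) * θ = x
    linear_combination Real.sin x ^ 2 * Real.sin_sq_add_cos_sq θ * (-1) + Real.sin θ ^ 2 * Real.sin_sq_add_cos_sq x
  · intro n hn
    have hn' : (n:ℝ) ≤ h := by exact_mod_cast hn
    apply div_lt_div_of_pos_right _ hs0
    have hn0 : (0:ℝ) ≤ n := n.cast_nonneg
    apply Real.sin_lt_sin_of_lt_of_le_pi_div_two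
    · nlinarith [mul_nonneg hn0 hθ0.le]
    · push_cast; nlinarith
    · push_cast; nlinarith
  · intro n hn
    have hn' : (n:ℝ) ≤ h := by exact_mod_cast hn
    have hn0 : (0:ℝ) ≤ n := n.cast_nonneg
    apply div_pos _ hs0
    apply Real.sin_pos_of_pos_of_lt_pi
    · positivity
    · push_cast; nlinarith
  · rw [show ((h + 2 : ℕ) : ℝ) * θ = Real.pi - ((h + 1 : ℕ) : ℝ) * θ by
      push_cast; linear_combination hθq, Real.sin_pi_sub]
  · intro n
    rw [hHodd]
    simp only [E0]
    rw [← add_div, ← add_div, div_div_div_cancel_right₀ hs0.ne']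
    push_cast
    rw [show (n:ℝ) + 1 - 1 = n by ring, show (n:ℝ) + 1 + 1 = n + 2 by ring]
  · intro n
    rw [hHeven]
    simp only [E0]
    rw [div_div_div_cancel_right₀ hs0.ne']
    push_cast
    rfl
end

section
/- Let q = 2h+3 with h ≥ 1, λ = 2cos(π/q), ρ = (λ − 2 + √(λ² − 4λ + 8))/2, and 1/2 ≤ α < ρ/λ. With the numbers H_1, …, H_{4h+3} given by H_{4n} = B_n/B_{n+1}, H_{4n−2} = (B_{n−1}+B_n)/(B_n+B_{n+1}), H_{4h+3−4n} = (B_{n+1}ρ − B_n)/(B_nρ − B_{n−1}), H_{4h+1−4n} = (B_{n+1}ρ − B_{n+2})/(B_nρ − B_{n+1}), let Ω_α = ⋃_{n=1}^{4h+3} J_n × [0, H_n] with J_{4n−3} = [ℓ_{n−1}, r_{h+n}), J_{4n−2} = [r_{h+n}, ℓ_{h+n}), J_{4n−1} = [ℓ_{h+n}, r_n), J_{4n} = [r_n, ℓ_n) for n = 1, …, h, J_{4h+1} = [ℓ_h, r_{2h+1}), J_{4h+2} = [r_{2h+1}, ℓ_{2h+1}), and J_{4h+3} = [ℓ_{2h+1},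 r_0). Then the map 𝒯_α(x,y) = (T_α(x), 1/(d(x)λ + ε(x)y)) maps Ω_α to Ω_α and is bijective off of a set of two-dimensional Lebesgue measure zero. -/
open Set MeasureTheory

lemma Tmap_mem (L α x : ℝ) (hL : 0 < L) (hx : x ≠ 0) :
    Tmap L α x ∈ Ico ((α - 1) * L) (α * L) := by
  have h1 : |1 / (x * L)| = |1 / x| / L := by
    rw [abs_div, abs_div, abs_mul, abs_of_pos hL]; field_simp
  have h2 : (dfun L α x : ℝ) ≤ |1 / x| / L + 1 - α := by
    rw [← h1]; exact Int.floor_le _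
  have h3 : |1 / x| / L + 1 - α < dfun L α x + 1 := by
    rw [← h1]; exact Int.lt_floor_add_one _
  have h4 : |1 / x| / L * L = |1 / x| := by field_simp
  simp only [Tmap, hx, if_false]
  constructor <;> nlinarith

lemma dfun_eq_s14 (L α x : ℝ) (hL : 0 < L) (hx : x ≠ 0) (d : ℤ)
    (h : |1 / x| - L * d ∈ Ico ((α - 1) * L) (α * L)) : dfun L α x = d := by
  have h1 : |1 / (x * L)| = |1 / x| / L := by
    rw [abs_div, abs_div, abs_mul, abs_of_pos hL]; field_simp
  have h4 : |1 / x| / L * L = |1 / x| := by field_simp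
  obtain ⟨ha, hb⟩ := h
  rw [dfun, Int.floor_eq_iff, h1]
  constructor
  · by_contra hc; push Not at hc; nlinarith
  · by_contra hc; push Not at hc; nlinarith

lemma pos_facts (L α t : ℝ) (d : ℤ) (hL : 0 < L) (hα : 1 / 2 ≤ α) (hd : 1 ≤ d)
    (ht : t ∈ Ico ((α - 1) * L) (α * L)) : 0 < d * L + t := by
  have : (1 : ℝ) ≤ d := by exact_mod_cast hd
  nlinarith [ht.1]

lemma dfun_pos (L α t : ℝ) (d : ℤ) (hL : 0 < L) (hα : 1 / 2 ≤ α) (hd : 1 ≤ d)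
    (ht : t ∈ Ico ((α - 1) * L) (α * L)) :
    dfun L α (1 / (d * L + t)) = d ∧ Tmap L α (1 / (d * L + t)) = t := by
  have hp := pos_facts L α t d hL hα hd ht
  have hx : (1 / (d * L + t)) ≠ 0 := by positivity
  have e : |1 / (1 / (d * L + t))| = d * L + t := by
    rw [one_div_one_div, abs_of_pos hp]
  have hdd := dfun_eq_s14 L α _ hL hx d (by rw [e]; convert ht using 1; ring)
  refine ⟨hdd, ?_⟩
  simp only [Tmap, hx, if_false]
  rw [hdd, e]; ring

lemma dfun_neg (L α t : ℝ) (d : ℤ) (hL : 0 < L) (hα : 1 / 2 ≤ α) (hd : 1 ≤ d)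
    (ht : t ∈ Ico ((α - 1) * L) (α * L)) :
    dfun L α (-1 / (d * L + t)) = d ∧ Tmap L α (-1 / (d * L + t)) = t := by
  have hp := pos_facts L α t d hL hα hd ht
  have hx : (-1 / (d * L + t)) ≠ 0 := by
    rw [neg_div]; exact neg_ne_zero.2 (by positivity)
  have e : |1 / (-1 / (d * L + t))| = d * L + t := by
    rw [neg_div, one_div_neg_eq_neg_one_div, one_div_one_div, abs_neg, abs_of_pos hp]
  have hdd := dfun_eq_s14 L α _ hL hx d (by rw [e]; convert ht using 1; ring)
  refine ⟨hdd, ?_⟩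
  simp only [Tmap, hx, if_false]
  rw [hdd, e]; ring

lemma x_form (L α x : ℝ) (hx : x ≠ 0) :
    |x| = 1 / (dfun L α x * L + Tmap L α x) := by
  have : dfun L α x * L + Tmap L α x = |1 / x| := by
    simp only [Tmap, hx, if_false]; ring
  rw [this, abs_div, abs_one, one_div_one_div]

lemma d_ge (L α x : ℝ) (hL : 0 < L) (hα : 1 / 2 ≤ α) (hr1 : α * L < 1)
    (hxI : x ∈ Ico ((α - 1) * L) (α * L)) (hx : x ≠ 0) : 1 ≤ dfun L α x := by
  have h1 := Tmap_mem L α x hL hx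
  have h2 : |x| < 1 := by
    rw [abs_lt]; constructor <;> nlinarith [hxI.1, hxI.2]
  have h3 : 1 < |1 / x| := by
    rw [abs_div, abs_one, lt_div_iff₀ (abs_pos.2 hx)]; linarith
  have h4 : Tmap L α x = |1 / x| - L * dfun L α x := by simp only [Tmap, hx, if_false]
  have h5 : 0 < L * dfun L α x := by nlinarith [h1.2]
  have h6 : (0 : ℝ) < dfun L α x := by
    by_contra hc; push Not at hc; nlinarith
  have : 0 < dfun L α x := by exact_mod_cast h6
  omega

lemma countable_pre (L α : ℝ) (E : Set ℝ) (hE : E.Countable) :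
    {x : ℝ | x = 0 ∨ Tmap L α x ∈ E}.Countable := by
  have : {x : ℝ | x = 0 ∨ Tmap L α x ∈ E} ⊆
      {0} ∪ ⋃ t ∈ E, ⋃ d : ℤ, ({1 / (d * L + t), -(1 / (d * L + t))} : Set ℝ) := by
    intro x hx
    by_cases h0 : x = 0
    · left; exact h0
    · right
      have hT : Tmap L α x ∈ E := by rcases hx with hx | hx; · exact absurd hx h0
                                     exact hx
      simp only [mem_iUnion]
      refine ⟨Tmap L α x, hT, dfun L α x, ?_⟩
      have := x_form L α x h0
      rcases abs_choice x with h | h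
      · left; rw [← this, h]
      · right; rw [mem_singleton_iff, ← this, h]; ring
  refine Countable.mono this ?_
  refine (countable_singleton 0).union (hE.biUnion fun t _ => countable_iUnion fun d => ?_)
  exact (Set.toFinite _).countable

lemma null_aux (X Y : Set ℝ) (hX : X.Countable) (hY : Y.Countable) :
    volume {z : ℝ × ℝ | z.1 ∈ X ∨ z.2 ∈ Y} = 0 := by
  have : {z : ℝ × ℝ | z.1 ∈ X ∨ z.2 ∈ Y} ⊆ (X ×ˢ univ) ∪ (univ ×ˢ Y) := by
    rintro ⟨a, b⟩ h
    simpa using h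
  refine measure_mono_null this (measure_union_null ?_ ?_)
  · rw [Measure.volume_eq_prod, Measure.prod_prod, hX.measure_zero]; simp
  · rw [Measure.volume_eq_prod, Measure.prod_prod, hY.measure_zero]; simp

lemma core_s14 (L α : ℝ) (f : ℝ → ℝ) (E V : Set ℝ) (hE : E.Countable) (hV : V.Countable)
    (hL : 0 < L) (hα : 1 / 2 ≤ α) (hr1 : α * L < 1) (hL2 : 2 ≤ L ^ 2)
    (hfV : ∀ x ∈ Ico ((α - 1) * L) (α * L), f x ∈ V)
    (hf0 : ∀ x ∈ Ico ((α - 1) * L) (α * L), 0 < f x ∧ f x < L)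
    (hB : ∀ t ∈ Ico ((α - 1) * L) (α * L), t ∉ E → ∀ d : ℤ, 1 ≤ d → 1 / (d * L + t) < α * L →
      f (1 / (d * L + t)) + f (-1 / ((d + 1) * L + t)) = L)
    (hC : ∀ t ∈ Ico ((α - 1) * L) (α * L), t ∉ E → (α - 1) * L ≤ -1 / (L + t) →
      1 / f t = L - f (-1 / (L + t)))
    (hD : ∀ t ∈ Ico ((α - 1) * L) (α * L), t ∉ E → -1 / (L + t) < (α - 1) * L →
      1 / (L + t) < α * L → 1 / f t = L)
    (hF : ∀ t ∈ Ico ((α - 1) * L) (α * L), t ∉ E → α * L ≤ 1 / (L + t) →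
      1 / f t = 2 * L - f (-1 / (2 * L + t)))
    (Ω : Set (ℝ × ℝ))
    (hΩ : ∀ x y, (x, y) ∈ Ω ↔ x ∈ Ico ((α - 1) * L) (α * L) ∧ 0 ≤ y ∧ y ≤ f x) :
    ∃ N N' : Set (ℝ × ℝ), N ⊆ Ω ∧ N' ⊆ Ω ∧ volume N = 0 ∧ volume N' = 0 ∧
      Set.BijOn (Tnat L α) (Ω \ N) (Ω \ N') := by
  set I := Ico ((α - 1) * L) (α * L) with hI
  set N : Set (ℝ × ℝ) := {z | z ∈ Ω ∧ ((z.1 = 0 ∨ Tmap L α z.1 ∈ E) ∨ z.2 = 0 ∨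
    (0 < z.1 ∧ z.2 = f z.1))} with hN
  have hnegI : ∀ t ∈ I, ∀ d : ℤ, 2 ≤ d → -1 / (d * L + t) ∈ I := by
    intro t ht d hd
    have hd' : (2 : ℝ) ≤ d := by exact_mod_cast hd
    have hp : 0 < d * L + t := pos_facts L α t d hL hα (by omega) ht
    have h1 : L + α * L ≤ d * L + t := by nlinarith [ht.1]
    constructor
    · rw [le_div_iff₀ hp]
      have h2 : 1 < L := by nlinarith
      have h3 : 0 ≤ (L - α * L) * (d * L + t - (L + α * L)) :=
        mul_nonneg (by linarith) (by linarith)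
      have h4 : 0 < α * L := by positivity
      nlinarith
    · have : -1 / (d * L + t) < 0 := div_neg_of_neg_of_pos (by norm_num) hp
      nlinarith
  have hposlt : ∀ t ∈ I, ∀ d : ℤ, 2 ≤ d → 1 / (d * L + t) < α * L := by
    intro t ht d hd
    have hd' : (2 : ℝ) ≤ d := by exact_mod_cast hd
    have hp : 0 < d * L + t := pos_facts L α t d hL hα (by omega) ht
    have h1 : L + α * L ≤ d * L + t := by nlinarith [ht.1]
    rw [div_lt_iff₀ hp]
    have h2 : L / 2 ≤ α * L := by nlinarith
    nlinarith
  have hposI : ∀ t ∈ I, ∀ d : ℤ, 1 ≤ d → 1 / (d * L + t) < α * L → 1 / (d * L + t) ∈ I := by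
    intro t ht d hd hlt
    have hp : 0 < d * L + t := pos_facts L α t d hL hα hd ht
    refine ⟨?_, hlt⟩
    have : 0 < 1 / (d * L + t) := by positivity
    nlinarith
  have hle2 : ∀ t ∈ I, t ∉ E → 1 / f t ≤ 2 * L := by
    intro t ht htE
    rcases le_or_gt (α * L) (1 / (L + t)) with h | h
    · rw [hF t ht htE h]
      have := (hf0 _ (hnegI t ht 2 le_rfl)).1
      push_cast at this
      linarith
    · rcases le_or_gt ((α - 1) * L) (-1 / (L + t)) with h' | h'
      · rw [hC t ht htE h']
        have := (hf0 (-1 / (L + t)) ⟨h', ?_⟩).1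
        · linarith
        · have hp : 0 < (1 : ℤ) * L + t := pos_facts L α t 1 hL hα le_rfl ht
          push_cast at hp; rw [one_mul] at hp
          have : -1 / (L + t) < 0 := div_neg_of_neg_of_pos (by norm_num) hp
          nlinarith
      · rw [hD t ht htE h' h]; linarith
  have hneg1 : ∀ t ∈ I, (α - 1) * L ≤ -1 / (L + t) → -1 / (L + t) ∈ I ∧ -1 / (L + t) < 0 := by
    intro t ht h
    have hp : 0 < (1 : ℤ) * L + t := pos_facts L α t 1 hL hα le_rfl ht
    push_cast at hp; rw [one_mul] at hp
    have : -1 / (L + t) < 0 := div_neg_of_neg_of_pos (by norm_num) hp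
    refine ⟨⟨h, by nlinarith⟩, this⟩
  have hle1 : ∀ t ∈ I, t ∉ E → 1 / (L + t) < α * L → 1 / f t ≤ L := by
    intro t ht htE h
    · rcases le_or_gt ((α - 1) * L) (-1 / (L + t)) with h' | h'
      · rw [hC t ht htE h']
        have := (hf0 (-1 / (L + t)) (hneg1 t ht h').1).1
        linarith
      · rw [hD t ht htE h' h]
  -- description of good points
  have good : ∀ x y, (x, y) ∈ Ω \ N → Tmap L α x ∈ I ∧ Tmap L α x ∉ E ∧ 1 ≤ dfun L α x ∧ 0 < y ∧
      x ∈ I ∧ ((0 < x ∧ x = 1 / (dfun L α x * L + Tmap L α x) ∧ y < f x ∧ Real.sign x = 1) ∨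
        (x < 0 ∧ x = -1 / (dfun L α x * L + Tmap L α x) ∧ y ≤ f x ∧ Real.sign x = -1)) := by
    rintro x y ⟨h1, h2⟩
    have h3 := (hΩ x y).1 h1
    simp only [hN, mem_ofPred_eq, not_and, not_or] at h2
    obtain ⟨⟨hx0, hTE⟩, hy0, hyf⟩ := h2 h1
    refine ⟨Tmap_mem L α x hL hx0, hTE, d_ge L α x hL hα hr1 h3.1 hx0,
      lt_of_le_of_ne h3.2.1 (Ne.symm hy0), h3.1, ?_⟩
    have hxf := x_form L α x hx0
    rcases lt_or_gt_of_ne hx0 with h | h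
    · right
      refine ⟨h, ?_, h3.2.2, Real.sign_of_neg h⟩
      rw [abs_of_neg h] at hxf
      rw [neg_div, ← hxf]; ring
    · left
      refine ⟨h, ?_, lt_of_le_of_ne h3.2.2 (hyf h), Real.sign_of_pos h⟩
      rw [abs_of_pos h] at hxf
      exact hxf
  have maps : ∀ z ∈ Ω \ N, Tnat L α z ∈ Ω := by
    rintro ⟨x, y⟩ hz
    obtain ⟨hTI, hTE, hd, hy, hxI, hcase⟩ := good x y hz
    simp only [Tnat]
    set t := Tmap L α x with ht
    set d := dfun L α x with hdd
    have hd' : (1 : ℝ) ≤ d := by exact_mod_cast hd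
    have hfx := hf0 x hxI
    have hft := hf0 t hTI
    have key : 1 / f t ≤ d * L + Real.sign x * y := by
      rcases hcase with ⟨hx, hxe, hyf, hs⟩ | ⟨hx, hxe, hyf, hs⟩
      · rw [hs]
        rcases eq_or_lt_of_le hd with h | h
        · have : 1 / (L + t) < α * L := by
            have := hxI.2
            rw [hxe, ← h] at this; push_cast at this; rwa [one_mul] at this
          have := hle1 t hTI hTE this
          nlinarith
        · have h2 : (2 : ℝ) ≤ d := by exact_mod_cast h
          have := hle2 t hTI hTE
          nlinarith
      · rw [hs]
        rcases eq_or_lt_of_le hd with h | h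
        · rw [← h] at hxe; push_cast at hxe; rw [one_mul] at hxe
          have h1 : (α - 1) * L ≤ -1 / (L + t) := by rw [← hxe]; exact hxI.1
          rw [hC t hTI hTE h1, ← hxe, ← h]; push_cast; linarith
        · have h2 : (2 : ℝ) ≤ d := by exact_mod_cast h
          rcases le_or_gt (α * L) (1 / (L + t)) with h' | h'
          · rcases eq_or_lt_of_le (show 2 ≤ d from h) with h3 | h3
            · rw [hF t hTI hTE h']
              rw [← h3] at hxe; push_cast at hxe
              rw [← hxe, ← h3]; push_cast; linarith
            · have h4 : (3 : ℝ) ≤ d := by exact_mod_cast h3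
              have := hle2 t hTI hTE
              nlinarith
          · have := hle1 t hTI hTE h'
            nlinarith
    have hpos : 0 < 1 / f t := by have := hft.1; positivity
    refine (hΩ _ _).2 ⟨hTI, ?_, ?_⟩
    · have : 0 < d * L + Real.sign x * y := by linarith
      positivity
    · rw [div_le_iff₀ (by linarith)]
      rw [div_le_iff₀ hft.1] at key
      linarith
  have inj : Set.InjOn (Tnat L α) (Ω \ N) := by
    have half : ∀ x y x' y', (x, y) ∈ Ω \ N → (x', y') ∈ Ω \ N → Tnat L α (x, y) = Tnat L α (x', y') →
        0 < x → x' < 0 → False := by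
      intro x y x' y' hz hz' heq hx hx'
      obtain ⟨hTI, hTE, hd, hy, hxI, hcase⟩ := good x y hz
      obtain ⟨hTI', hTE', hd', hy', hxI', hcase'⟩ := good x' y' hz'
      rcases hcase with ⟨_, hxe, hyf, hs⟩ | ⟨h, _⟩
      swap
      · linarith
      rcases hcase' with ⟨h, _⟩ | ⟨_, hxe', hyf', hs'⟩
      · linarith
      simp only [Tnat, Prod.mk.injEq, hs, hs'] at heq
      obtain ⟨hT, hw⟩ := heq
      rw [one_div, one_div, inv_inj] at hw
      have hfx := hf0 x hxI
      have hfx' := hf0 x' hxI'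
      have hdd : dfun L α x' = dfun L α x + 1 := by
        have a1 : (dfun L α x : ℝ) < dfun L α x' := by
          by_contra hc; push Not at hc; nlinarith
        have a2 : (dfun L α x' : ℝ) < dfun L α x + 2 := by
          by_contra hc; push Not at hc; nlinarith
        have a1' : dfun L α x < dfun L α x' := by exact_mod_cast a1
        have a2' : dfun L α x' < dfun L α x + 2 := by exact_mod_cast a2
        omega
      have hb := hB _ hTI hTE _ hd (by rw [← hxe]; exact hxI.2)
      rw [← hxe] at hb
      rw [hdd, ← hT] at hxe'
      rw [hdd] at hw
      push_cast at hxe' hw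
      rw [← hxe'] at hb
      linarith
    rintro ⟨x, y⟩ hz ⟨x', y'⟩ hz' heq
    obtain ⟨hTI, hTE, hd, hy, hxI, hcase⟩ := good x y hz
    obtain ⟨hTI', hTE', hd', hy', hxI', hcase'⟩ := good x' y' hz'
    have hfx := hf0 x hxI
    have hfx' := hf0 x' hxI'
    have heq0 := heq
    simp only [Tnat, Prod.mk.injEq] at heq
    obtain ⟨hT, hw⟩ := heq
    rw [one_div, one_div, inv_inj] at hw
    have dd : (dfun L α x : ℝ) < dfun L α x' + 1 → (dfun L α x' : ℝ) < dfun L α x + 1 →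
        dfun L α x = dfun L α x' := by
      intro a b
      have a' : dfun L α x < dfun L α x' + 1 := by exact_mod_cast a
      have b' : dfun L α x' < dfun L α x + 1 := by exact_mod_cast b
      omega
    rcases hcase with ⟨hx, hxe, hyf, hs⟩ | ⟨hx, hxe, hyf, hs⟩ <;>
    rcases hcase' with ⟨hx', hxe', hyf', hs'⟩ | ⟨hx', hxe', hyf', hs'⟩
    · rw [hs, hs'] at hw
      have := dd (by by_contra hc; push Not at hc; nlinarith)
        (by by_contra hc; push Not at hc; nlinarith)
      rw [this] at hw
      rw [hxe, hxe', hT, this]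
      rw [show y = y' by linarith]
    · exact (half x y x' y' hz hz' heq0 hx hx').elim
    · exact (half x' y' x y hz' hz heq0.symm hx' hx).elim
    · rw [hs, hs'] at hw
      have := dd (by by_contra hc; push Not at hc; nlinarith)
        (by by_contra hc; push Not at hc; nlinarith)
      rw [this] at hw
      rw [hxe, hxe', hT, this]
      rw [show y = y' by linarith]
  -- building preimages
  have prepos : ∀ t ∈ I, t ∉ E → ∀ d : ℤ, 1 ≤ d → 1 / (d * L + t) < α * L → ∀ w : ℝ,
      d * L < w → w < d * L + f (1 / (d * L + t)) → (t, 1 / w) ∈ Tnat L α '' (Ω \ N) := by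
    intro t ht htE d hd hlt w hw1 hw2
    have hp : 0 < d * L + t := pos_facts L α t d hL hα hd ht
    have hxp : 0 < 1 / (d * L + t) := by positivity
    obtain ⟨e1, e2⟩ := dfun_pos L α t d hL hα hd ht
    refine ⟨(1 / (d * L + t), w - d * L), ⟨(hΩ _ _).2 ⟨hposI t ht d hd hlt, by linarith, by linarith⟩, ?_⟩, ?_⟩
    · rintro ⟨_, (h | h) | h | h⟩
      · exact hxp.ne' h
      · simp only [e2] at h; exact htE h
      · simp only at h; linarith
      · have := h.2; simp only at this; linarith
    · simp only [Tnat, e1, e2, Real.sign_of_pos hxp]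
      rw [show d * L + 1 * (w - d * L) = w by ring]
  have preneg : ∀ t ∈ I, t ∉ E → ∀ d : ℤ, 1 ≤ d → -1 / (d * L + t) ∈ I → ∀ w : ℝ,
      w < d * L → d * L - f (-1 / (d * L + t)) ≤ w → (t, 1 / w) ∈ Tnat L α '' (Ω \ N) := by
    intro t ht htE d hd hlt w hw1 hw2
    have hp : 0 < d * L + t := pos_facts L α t d hL hα hd ht
    have hxp : -1 / (d * L + t) < 0 := div_neg_of_neg_of_pos (by norm_num) hp
    obtain ⟨e1, e2⟩ := dfun_neg L α t d hL hα hd ht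
    refine ⟨(-1 / (d * L + t), d * L - w), ⟨(hΩ _ _).2 ⟨hlt, by linarith, by linarith⟩, ?_⟩, ?_⟩
    · rintro ⟨_, (h | h) | h | h⟩
      · exact hxp.ne h
      · simp only [e2] at h; exact htE h
      · simp only at h; linarith
      · have := h.1; simp only at this; linarith
    · simp only [Tnat, e1, e2, Real.sign_of_neg hxp]
      rw [show d * L + -1 * (d * L - w) = w by ring]
  have surj : ∀ t z, (t, z) ∈ Ω → t ∉ E → (∀ d : ℤ, z ≠ 1 / (d * L)) →
      (t, z) ∈ Tnat L α '' (Ω \ N) := by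
    intro t z hz htE hzd
    obtain ⟨ht, hz0, hzf⟩ := (hΩ _ _).1 hz
    have hft := hf0 t ht
    have hz1 : 0 < z := lt_of_le_of_ne hz0 (by have := hzd 0; simpa using this.symm)
    obtain ⟨w, hw⟩ : ∃ w, w = 1 / z := ⟨_, rfl⟩
    have hw0 : 0 < w := by rw [hw]; positivity
    have hzw : z = 1 / w := by rw [hw, one_div_one_div]
    have hwf : 1 / f t ≤ w := by
      rw [hw]; exact one_div_le_one_div_of_le hz1 hzf
    obtain ⟨d, hd⟩ : ∃ d, d = ⌊w / L⌋ := ⟨_, rfl⟩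
    have hd1 : d * L < w := by
      have h1 : (d : ℝ) ≤ w / L := by rw [hd]; exact Int.floor_le _
      rw [le_div_iff₀ hL] at h1
      refine lt_of_le_of_ne h1 ?_
      intro h2
      apply hzd d
      rw [h2, hzw]
    have hd2 : w < (d + 1) * L := by
      have h1 : w / L < d + 1 := by rw [hd]; exact Int.lt_floor_add_one _
      rwa [div_lt_iff₀ hL] at h1
    have hd0 : 0 ≤ d := by rw [hd]; exact Int.floor_nonneg.2 (by positivity)
    rw [hzw]
    rcases eq_or_lt_of_le hd0 with h0 | h0
    · rw [← h0] at hd1 hd2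
      push_cast at hd1 hd2
      rw [zero_add, one_mul] at hd2
      rcases le_or_gt ((α - 1) * L) (-1 / (L + t)) with h | h
      · have hc := hC t ht htE h
        have := preneg t ht htE 1 le_rfl (by push_cast; rw [one_mul]; exact (hneg1 t ht h).1) w
        push_cast at this
        rw [one_mul] at this
        exact this hd2 (by linarith)
      · exfalso
        rcases lt_or_ge (1 / (L + t)) (α * L) with h' | h'
        · have := hD t ht htE h h'
          linarith
        · have := hF t ht htE h'
          have h3 := (hf0 _ (hnegI t ht 2 le_rfl)).2
          push_cast at h3
          linarith
    · have h1 : 1 ≤ d := h0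
      rcases lt_or_ge (1 / (d * L + t)) (α * L) with h | h
      · have hb := hB t ht htE d h1 h
        rcases lt_or_ge w (d * L + f (1 / (d * L + t))) with h' | h'
        · exact prepos t ht htE d h1 h w hd1 h'
        · have := preneg t ht htE (d + 1) (by omega) (hnegI t ht _ (by omega)) w
          push_cast at this
          exact this hd2 (by linarith)
      · have hd1' : d = 1 := by
          by_contra hc
          have := hposlt t ht d (by omega)
          linarith
        rw [hd1'] at h hd2
        push_cast at h hd2
        rw [one_mul] at h
        have hF' := hF t ht htE h
        have := preneg t ht htE 2 (by omega) (hnegI t ht _ (by omega)) w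
        push_cast at this
        exact this (by linarith) (by linarith)
  refine ⟨N, Ω \ (Tnat L α '' (Ω \ N)), fun z hz => hz.1, sdiff_subset, ?_, ?_, ?_⟩
  · refine measure_mono_null ?_ (null_aux _ (insert 0 V) (countable_pre L α E hE) (hV.insert 0))
    rintro ⟨x, y⟩ ⟨h1, h | h | h⟩
    · left; exact h
    · right; left; exact h
    · right; right
      have h2 := h.2
      simp only at h2 ⊢
      rw [h2]
      exact hfV x ((hΩ _ _).1 h1).1
  · refine measure_mono_null ?_ (null_aux E (range fun d : ℤ => 1 / (d * L)) hE (countable_range _))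
    rintro ⟨t, z⟩ ⟨h1, h2⟩
    by_contra hc
    simp only [mem_ofPred_eq, not_or, mem_range, not_exists] at hc
    exact h2 (surj t z h1 hc.1 (fun d => Ne.symm (hc.2 d)))
  · rw [sdiff_sdiff_cancel_left]
    · exact inj.bijOn_image
    · rintro _ ⟨z, hz, rfl⟩
      exact maps z hz

lemma Bfacts (h q : ℕ) (hh : 1 ≤ h) (hq : q = 2 * h + 3) (L : ℝ)
    (hL : L = 2 * Real.cos (Real.pi / q)) (B : ℤ → ℝ)
    (hB : ∀ n : ℤ, B n = Real.sin (n * Real.pi / q) / Real.sin (Real.pi / q)) :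
    0 < L ∧ L < 2 ∧ 2 ≤ L ^ 2 ∧ B 0 = 0 ∧ B 1 = 1 ∧ (∀ n, B (n + 1) = L * B n - B (n - 1)) ∧
    B (h + 2) = B (h + 1) ∧ (∀ n : ℕ, 1 ≤ n → n ≤ h + 2 → 0 < B n) ∧
    (∀ n : ℕ, n ≤ h + 1 → B n ≤ B (n + 1)) := by
  have hpi := Real.pi_pos
  have hq5 : (5 : ℝ) ≤ q := by rw [hq]; push_cast; have : (1 : ℝ) ≤ h := by exact_mod_cast hh
                               linarith
  have hq0 : (0 : ℝ) < q := by linarith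
  have hqh : (q : ℝ) = 2 * h + 3 := by rw [hq]; push_cast; ring
  set θ := Real.pi / q with hθ
  have hθ0 : 0 < θ := by positivity
  have hθq : θ * q = Real.pi := by rw [hθ]; field_simp
  have hθ4 : θ < Real.pi / 4 := by nlinarith
  have hs : 0 < Real.sin θ := Real.sin_pos_of_pos_of_lt_pi hθ0 (by linarith)
  have hBθ : ∀ n : ℤ, B n = Real.sin (n * θ) / Real.sin θ := by
    intro n; rw [hB n, hθ]; congr 2; ring
  have hc : Real.cos (Real.pi / 4) < Real.cos θ :=
    Real.cos_lt_cos_of_nonneg_of_le_pi hθ0.le (by linarith) hθ4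
  rw [Real.cos_pi_div_four] at hc
  have hsq : Real.sqrt 2 ^ 2 = 2 := Real.sq_sqrt (by norm_num)
  have hsq0 : 0 < Real.sqrt 2 := by positivity
  have hc1 : Real.cos θ < 1 := by
    rw [← Real.cos_zero]
    exact Real.cos_lt_cos_of_nonneg_of_le_pi le_rfl (by linarith) hθ0
  refine ⟨by linarith, by linarith, by nlinarith, ?_, ?_, ?_, ?_, ?_, ?_⟩
  · rw [hBθ]; simp
  · rw [hBθ]; push_cast; rw [one_mul]; field_simp
  · intro n
    rw [hBθ, hBθ, hBθ, hL]
    push_cast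
    rw [add_mul, sub_mul, one_mul, Real.sin_add, Real.sin_sub]
    field_simp
    ring
  · rw [hBθ, hBθ]
    push_cast
    rw [← Real.sin_pi_sub, ← hθq, hqh]
    congr 2; ring
  · intro n h1 h2
    rw [hBθ]
    push_cast
    have h1' : (1 : ℝ) ≤ n := by exact_mod_cast h1
    have h2' : (n : ℝ) ≤ h + 2 := by exact_mod_cast h2
    refine div_pos (Real.sin_pos_of_pos_of_lt_pi (by positivity) ?_) hs
    rw [← hθq]
    have h3 : (n : ℝ) < q := by rw [hqh]; nlinarith
    nlinarith
  · intro n h1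
    rw [hBθ, hBθ]
    push_cast
    apply div_le_div_of_nonneg_right _ hs.le
    have h1' : (n : ℝ) ≤ h + 1 := by exact_mod_cast h1
    have hn0 : (0 : ℝ) ≤ n := by positivity
    have hn1 : n * θ ≤ (h + 1) * θ := by nlinarith
    rcases Nat.lt_or_ge n (h + 1) with h2 | h2
    · have h2' : (n : ℝ) + 1 ≤ h + 1 := by exact_mod_cast h2
      apply Real.sin_le_sin_of_le_of_le_pi_div_two
      · nlinarith
      · rw [hqh] at hθq; nlinarith
      · nlinarith
    · have : (n : ℝ) = h + 1 := by
        have : n = h + 1 := by omega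
        rw [this]; push_cast; ring
      rw [this, ← Real.sin_pi_sub, ← hθq, hqh]
      apply le_of_eq; congr 1; ring

/-- identities for the heights -/
lemma Hfacts (h : ℕ) (hh : 1 ≤ h) (L ρ : ℝ) (B : ℤ → ℝ) (hL0 : 0 < L) (hL2 : L < 2) (hLs : 2 ≤ L ^ 2)
    (hρe : ρ ^ 2 + (2 - L) * ρ = 1) (hρ1 : L - 1 < ρ) (hρ2 : ρ < 1)
    (B0 : B 0 = 0) (B1 : B 1 = 1) (Br : ∀ n, B (n + 1) = L * B n - B (n - 1))
    (Bh : B (h + 2) = B (h + 1)) (Bp : ∀ n : ℕ, 1 ≤ n → n ≤ h + 2 → 0 < B n)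
    (Bm : ∀ n : ℕ, n ≤ h + 1 → B n ≤ B (n + 1))
    (H : ℕ → ℝ)
    (hH4 : ∀ n : ℕ, 1 ≤ n → n ≤ h → H (4 * n) = B n / B ((n : ℤ) + 1))
    (hH4m2 : ∀ n : ℕ, 1 ≤ n → n ≤ h + 1 →
      H (4 * n - 2) = (B ((n : ℤ) - 1) + B n) / (B n + B ((n : ℤ) + 1)))
    (hH4h3 : ∀ n : ℕ, n ≤ h →
      H (4 * h + 3 - 4 * n) = (B ((n : ℤ) + 1) * ρ - B n) / (B n * ρ - B ((n : ℤ) - 1)))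
    (hH4h1 : ∀ n : ℕ, n ≤ h →
      H (4 * h + 1 - 4 * n) = (B ((n : ℤ) + 1) * ρ - B ((n : ℤ) + 2)) / (B n * ρ - B ((n : ℤ) + 1))) :
    (∀ n < h, 1 / H (4 * (n + 1) + 1) = L - H (4 * n + 1)) ∧
    (∀ n < h, 1 / H (4 * (n + 1) + 2) = L - H (4 * n + 2)) ∧
    (∀ n < h, 1 / H (4 * (n + 1) + 3) = L - H (4 * n + 3)) ∧
    (∀ n, n + 1 < h → 1 / H (4 * (n + 1) + 4) = L - H (4 * n + 4)) ∧
    1 / H 4 = L ∧ H (4 * h + 1) = L - ρ ∧ H (4 * h + 2) = L / 2 ∧ H (4 * h + 3) = ρ ∧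
    1 / H 1 = 2 * L - H (4 * h - 1) ∧ 1 / H 2 = 2 * L - H (4 * h) ∧
    1 / H 3 = 2 * L - H (4 * h + 1) ∧
    (∀ n ≤ h, 0 < H (4 * n + 1) ∧ H (4 * n + 1) < L) ∧
    (∀ n ≤ h, 0 < H (4 * n + 2) ∧ H (4 * n + 2) < L) ∧
    (∀ n ≤ h, 0 < H (4 * n + 3) ∧ H (4 * n + 3) < L) ∧
    (∀ n < h, 0 < H (4 * n + 4) ∧ H (4 * n + 4) < L) := by
  have hρ0 : 0 < ρ := by nlinarith
  have Br' : ∀ n, B (n + 2) = L * B (n + 1) - B n := by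
    intro n
    have := Br (n + 1)
    rw [show n + 1 + 1 = n + 2 by ring, show n + 1 - 1 = n by ring] at this
    exact this
  have Bm1 : B (-1) = -1 := by have := Br 0; norm_num [B0, B1] at this; linarith
  have Bp' : ∀ n : ℕ, n ≤ h + 1 → 0 < B (n + 1) := by
    intro n hn; have := Bp (n + 1) (by omega) (by omega); exact_mod_cast this
  have B2 : B 2 = L := by have := Br' 0; norm_num [B0, B1] at this; linarith
  have Bn0 : ∀ n : ℕ, n ≤ h + 1 → 0 ≤ B n := by
    intro n hn
    rcases Nat.eq_zero_or_pos n with h0 | h0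
    · rw [h0]; simp [B0]
    · exact (Bp n h0 (by omega)).le
  have hBh : B h = (L - 1) * B (h + 1) := by have := Br' h; rw [Bh] at this; linarith
  have hβ : 0 < B (h + 1) := Bp' h (by omega)
  -- sign facts
  have S1 : ∀ n : ℕ, n ≤ h → 0 < B (n + 1) * ρ - B n := by
    intro n hn
    have h1 := Bm (n + 1) (by omega)
    push_cast at h1
    rw [show (n : ℤ) + 1 + 1 = n + 2 by ring, Br' n] at h1
    have := Bp' n (by omega)
    nlinarith
  have S2 : ∀ n : ℕ, n ≤ h + 1 → B n * ρ - B (n + 1) < 0 := by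
    intro n hn
    have h1 := Bm n hn
    have h2 := Bp' n hn
    have h3 := Bn0 n hn
    nlinarith
  have P3 : ∀ m : ℕ, m ≤ h → 0 < B m * ρ - B ((m : ℤ) - 1) := by
    intro m hm
    rcases m with _ | m
    · simp [B0, Bm1]
    · have := S1 m (by omega)
      push_cast
      rwa [show (m : ℤ) + 1 - 1 = m by ring]
  have G1 : ∀ n ≤ h, 0 < H (4 * n + 1) := by
    intro n hn
    have := hH4h1 (h - n) (by omega)
    rw [show 4 * h + 1 - 4 * (h - n) = 4 * n + 1 by omega] at this
    rw [this]
    have a := S2 (h - n) (by omega)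
    have b := S2 (h - n + 1) (by omega)
    push_cast at b
    rw [add_assoc] at b
    exact div_pos_of_neg_of_neg b a
  have G3 : ∀ n ≤ h, 0 < H (4 * n + 3) := by
    intro n hn
    have := hH4h3 (h - n) (by omega)
    rw [show 4 * h + 3 - 4 * (h - n) = 4 * n + 3 by omega] at this
    rw [this]
    exact div_pos (S1 _ (by omega)) (P3 _ (by omega))
  have E2 : ∀ n ≤ h, H (4 * n + 2) = (B n + B (n + 1)) / (B (n + 1) + B (n + 2)) := by
    intro n hn
    have := hH4m2 (n + 1) (by omega) (by omega)
    rw [show 4 * (n + 1) - 2 = 4 * n + 2 by omega] at this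
    rw [this]; push_cast
    rw [show (n : ℤ) + 1 - 1 = n by ring, show (n : ℤ) + 1 + 1 = n + 2 by ring]
  have Q2 : ∀ n : ℕ, n ≤ h → 0 < B (n + 2) := by
    intro n hn
    have := Bp' (n + 1) (by omega); push_cast at this
    rwa [show (n : ℤ) + 1 + 1 = n + 2 by ring] at this
  have G2 : ∀ n ≤ h, 0 < H (4 * n + 2) := by
    intro n hn
    rw [E2 n hn]
    have := Bn0 n (by omega)
    have := Bp' n (by omega)
    have := Q2 n hn
    positivity
  have E4 : ∀ n < h, H (4 * n + 4) = B (n + 1) / B (n + 2) := by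
    intro n hn
    have := hH4 (n + 1) (by omega) (by omega)
    rw [show 4 * (n + 1) = 4 * n + 4 by omega] at this
    rw [this]; push_cast
    rw [show (n : ℤ) + 1 + 1 = n + 2 by ring]
  have G4 : ∀ n < h, 0 < H (4 * n + 4) := by
    intro n hn
    rw [E4 n hn]
    exact div_pos (Bp' n (by omega)) (Q2 n (by omega))
  have F1 : ∀ n < h, 1 / H (4 * (n + 1) + 1) = L - H (4 * n + 1) := by
    intro n hn
    obtain ⟨m, rfl⟩ : ∃ m, h = n + 1 + m := ⟨h - (n + 1), by omega⟩
    have e1 := hH4h1 m (by omega)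
    have e2 := hH4h1 (m + 1) (by omega)
    rw [show 4 * (n + 1 + m) + 1 - 4 * m = 4 * (n + 1) + 1 by omega] at e1
    rw [show 4 * (n + 1 + m) + 1 - 4 * (m + 1) = 4 * n + 1 by omega] at e2
    rw [e1, e2]
    have a := S2 (m + 1) (by omega)
    push_cast at a ⊢
    rw [show (m : ℤ) + 1 + 1 = m + 2 by ring] at a ⊢
    rw [show (m : ℤ) + 1 + 2 = (m + 1) + 2 by ring, Br' (m + 1), show (m : ℤ) + 1 + 1 = m + 2 by ring]
    rw [one_div_div, eq_sub_iff_add_eq, ← add_div, div_eq_iff a.ne, Br' m]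
    ring
  have F2 : ∀ n < h, 1 / H (4 * (n + 1) + 2) = L - H (4 * n + 2) := by
    intro n hn
    rw [E2 n (by omega), E2 (n + 1) (by omega)]
    have a := Bp' n (by omega)
    have b := Q2 n (by omega)
    push_cast
    rw [show (n : ℤ) + 1 + 2 = (n + 1) + 2 by ring, Br' (n + 1), show (n : ℤ) + 1 + 1 = n + 2 by ring]
    have c : B (n + 1) + B (n + 2) ≠ 0 := by positivity
    rw [one_div_div, eq_sub_iff_add_eq, ← add_div, div_eq_iff c, Br' n]
    ring
  have F3 : ∀ n < h, 1 / H (4 * (n + 1) + 3) = L - H (4 * n + 3) := by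
    intro n hn
    obtain ⟨m, rfl⟩ : ∃ m, h = n + 1 + m := ⟨h - (n + 1), by omega⟩
    have e1 := hH4h3 m (by omega)
    have e2 := hH4h3 (m + 1) (by omega)
    rw [show 4 * (n + 1 + m) + 3 - 4 * m = 4 * (n + 1) + 3 by omega] at e1
    rw [show 4 * (n + 1 + m) + 3 - 4 * (m + 1) = 4 * n + 3 by omega] at e2
    rw [e1, e2]
    have a := S1 m (by omega)
    push_cast at a ⊢
    rw [show (m : ℤ) + 1 + 1 = m + 2 by ring, show (m : ℤ) + 1 - 1 = m by ring]
    rw [one_div_div, eq_sub_iff_add_eq, ← add_div, div_eq_iff a.ne', Br' m, Br m]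
    ring
  have F4 : ∀ n, n + 1 < h → 1 / H (4 * (n + 1) + 4) = L - H (4 * n + 4) := by
    intro n hn
    rw [E4 n (by omega), E4 (n + 1) (by omega)]
    have b := Q2 n (by omega)
    push_cast
    rw [show (n : ℤ) + 1 + 2 = (n + 1) + 2 by ring, Br' (n + 1), show (n : ℤ) + 1 + 1 = n + 2 by ring]
    rw [one_div_div, eq_sub_iff_add_eq, ← add_div, div_eq_iff b.ne']
    ring
  have X1 : H (4 * h + 1) = L - ρ := by
    have := hH4h1 0 (by omega)
    simp only [mul_zero, Nat.sub_zero] at this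
    rw [this]; norm_num [B0, B1, B2]; ring
  have X2 : H (4 * h + 2) = L / 2 := by
    rw [E2 h le_rfl, Bh, hBh]
    field_simp; ring
  have X3 : H (4 * h + 3) = ρ := by
    have := hH4h3 0 (by omega)
    simp only [mul_zero, Nat.sub_zero] at this
    rw [this]; norm_num [B0, B1, Bm1]
  have X4 : H (4 * h) = L - 1 := by
    rw [hH4 h hh le_rfl, hBh]; field_simp
  have X0 : H (4 * h - 1) = L - 1 / ρ := by
    have := hH4h3 1 hh
    rw [show 4 * h + 3 - 4 * 1 = 4 * h - 1 by omega] at this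
    rw [this]; norm_num [B0, B1, B2]; field_simp
  refine ⟨F1, F2, F3, F4, ?_, X1, X2, X3, ?_, ?_, ?_, ?_, ?_, ?_, ?_⟩
  · have := E4 0 (by omega)
    norm_num [B1, B2] at this
    rw [this]; field_simp
  · have := hH4h1 h le_rfl
    rw [show 4 * h + 1 - 4 * h = 1 by omega, Bh, hBh] at this
    rw [this, X0]
    have h1 : (L - 1) * ρ - 1 < 0 := by nlinarith
    have h2 : (L - 1) * B (h + 1) * ρ - B (h + 1) ≠ 0 := by
      have : B (h + 1) * ((L - 1) * ρ - 1) < 0 := mul_neg_of_pos_of_neg hβ h1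
      nlinarith
    have h3 : B (h + 1) * ρ - B (h + 1) ≠ 0 := by nlinarith
    rw [one_div_div, div_eq_iff h3]
    field_simp
    linear_combination (-1) * hρe
  · have := E2 0 (by omega)
    norm_num [B0, B1, B2] at this
    rw [this, X4]; rw [one_div, inv_inv]; ring
  · have := hH4h3 h le_rfl
    rw [show 4 * h + 3 - 4 * h = 3 by omega] at this
    have hm : B ((h : ℤ) - 1) = L * B h - B (h + 1) := by rw [Br h]; ring
    have a := S1 h le_rfl
    rw [this, X1, one_div_div, div_eq_iff a.ne', hm, hBh]
    linear_combination (-B (h + 1)) * hρe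
  · intro n hn
    refine ⟨G1 n hn, ?_⟩
    rcases Nat.lt_or_ge n h with h1 | h1
    · have := F1 n h1
      have h2 := one_div_pos.2 (G1 (n + 1) (by omega))
      linarith
    · rw [show n = h by omega, X1]; linarith
  · intro n hn
    refine ⟨G2 n hn, ?_⟩
    rcases Nat.lt_or_ge n h with h1 | h1
    · have := F2 n h1
      have h2 := one_div_pos.2 (G2 (n + 1) (by omega))
      linarith
    · rw [show n = h by omega, X2]; linarith
  · intro n hn
    refine ⟨G3 n hn, ?_⟩
    rcases Nat.lt_or_ge n h with h1 | h1
    · have := F3 n h1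
      have h2 := one_div_pos.2 (G3 (n + 1) (by omega))
      linarith
    · rw [show n = h by omega, X3]; nlinarith
  · intro n hn
    refine ⟨G4 n hn, ?_⟩
    rcases Nat.lt_or_ge (n + 1) h with h1 | h1
    · have := F4 n h1
      have h2 := one_div_pos.2 (G4 (n + 1) (by omega))
      linarith
    · rw [show 4 * n + 4 = 4 * h by omega, X4]; linarith

lemma Uclosed (h : ℕ) (L x : ℝ) (B : ℤ → ℝ) (hx : x ≠ 0)
    (B0 : B 0 = 0) (B1 : B 1 = 1) (Br : ∀ n, B (n + 1) = L * B n - B (n - 1))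
    (Bh : B (h + 2) = B (h + 1)) (hβ : B (h + 1) ≠ 0)
    (p : ℕ → ℝ) (p0 : p 0 = 1 / x - L) (ps : ∀ n, p (n + 1) = -1 / p n - L)
    (hp : ∀ n < h, p n < 0) : p h * (L - 1 - x) = x - 1 := by
  have key : ∀ n ≤ h, p n * (B n * p 0 + B ((n : ℤ) - 1)) = -(B (n + 1) * p 0 + B n) := by
    intro n
    induction n with
    | zero =>
      intro _
      have Bm1 : B (-1) = -1 := by have := Br 0; norm_num [B0, B1] at this; linarith
      norm_num [B0, B1, Bm1]
    | succ n ih =>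
      intro hn
      have ih := ih (by omega)
      have hne := (hp n (by omega)).ne
      have r1 := Br (n + 1)
      rw [show (n : ℤ) + 1 - 1 = n by ring] at r1
      have r2 := Br n
      push_cast
      rw [show (n : ℤ) + 1 - 1 = n by ring, ps, r1]
      have : B (n + 1) * p 0 + B n = - p n * (B n * p 0 + B ((n : ℤ) - 1)) := by linarith
      have e : -1 / p n * (B (n + 1) * p 0 + B n) = B n * p 0 + B ((n : ℤ) - 1) := by
        rw [this]; field_simp
      linear_combination e + r2
  have k := key h le_rfl
  have r1 := Br (h + 1)
  rw [show (h : ℤ) + 1 - 1 = h by ring, show (h : ℤ) + 1 + 1 = h + 2 by ring, Bh] at r1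
  have e1 : B h = (L - 1) * B (h + 1) := by linarith
  have e2 : B ((h : ℤ) - 1) = (L ^ 2 - L - 1) * B (h + 1) := by
    have := Br h
    rw [e1] at this; linear_combination this
  rw [e1, e2, p0] at k
  have k2 : B (h + 1) * (p h * ((L - 1) * (1 / x - L) + (L ^ 2 - L - 1)))
     = B (h + 1) * (-((1 / x - L) + (L - 1))) := by linear_combination k
  have k3 := mul_left_cancel₀ hβ k2
  have hxx : 1 / x * x = 1 := by field_simp
  have : p h * (L - 1 - x) = x * (p h * ((L - 1) * (1 / x - L) + (L ^ 2 - L - 1))) := by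
    linear_combination (-p h * (L - 1)) * hxx
  rw [this, k3]
  linear_combination -hxx

lemma Umono {x y L : ℝ} (hxy : x ≤ y) (hy : y < 0) : -1 / x - L ≤ -1 / y - L := by
  have hx : x < 0 := by linarith
  have := one_div_le_one_div_of_neg_of_le hy hxy
  rw [neg_div, neg_div]
  linarith

lemma chain (h : ℕ) (hh : 1 ≤ h) (L r u : ℝ) (B : ℤ → ℝ) (hL0 : 0 < L) (hL2 : L < 2) (hLs : 2 ≤ L ^ 2)
    (hr : r ^ 2 + (2 - L) * r < 1) (hr1 : r < 1) (hrL : L / 2 ≤ r)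
    (B0 : B 0 = 0) (B1 : B 1 = 1) (Br : ∀ n, B (n + 1) = L * B n - B (n - 1))
    (Bh : B (h + 2) = B (h + 1)) (Bp : ∀ n : ℕ, 1 ≤ n → n ≤ h + 2 → 0 < B n)
    (hu : u = (1 - r) / (1 + r - L))
    (a b c e : ℕ → ℝ)
    (a0 : a 0 = r - L) (b0 : b 0 = u - L) (c0 : c 0 = 1 / u - L) (e0 : e 0 = 1 / r - L)
    (as : ∀ n, a (n + 1) = -1 / a n - L) (bs : ∀ n, b (n + 1) = -1 / b n - L)
    (cs : ∀ n, c (n + 1) = -1 / c n - L) (es : ∀ n, e (n + 1) = -1 / e n - L) :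
    r < u ∧ u ≤ 1 ∧
    (∀ n ≤ h, a n < 0) ∧ (∀ n ≤ h, a n ≤ b n) ∧ (∀ n ≤ h, b n ≤ c n) ∧ (∀ n < h, c n ≤ e n) ∧
    (∀ n < h, e n ≤ a (n + 1)) ∧ 0 ≤ c h ∧ c h < r ∧ b h = - c h / (1 + L * c h) ∧
    e h = u ∧ -1 / a h = L + 1 / u := by
  have hL1 : 1 < L := by nlinarith
  have hden : 0 < 1 + r - L := by linarith
  have hr0 : 0 < r := by linarith
  have hu0 : 0 < u := by rw [hu]; exact div_pos (by linarith) hden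
  have hue : u * (1 + r - L) = 1 - r := by rw [hu]; field_simp
  have hru : r < u := by rw [hu, lt_div_iff₀ hden]; nlinarith
  have hu1 : u ≤ 1 := by rw [hu, div_le_one hden]; linarith
  have hβ : B (h + 1) ≠ 0 := by
    have := Bp (h + 1) (by omega) (by omega); push_cast at this; exact this.ne'
  have Br' : ∀ n, B (n + 2) = L * B (n + 1) - B n := by
    intro n
    have := Br (n + 1)
    rw [show n + 1 + 1 = n + 2 by ring, show n + 1 - 1 = n by ring] at this
    exact this
  have hBh : B h = (L - 1) * B (h + 1) := by have := Br' h; rw [Bh] at this; linarith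
  -- negativity of `a`
  have aneg' : ∀ n m : ℕ, n + m = h → a n * B (m + 1) < - B m := by
    intro n
    induction n with
    | zero =>
      intro m hm
      have hm : m = h := by omega
      subst hm
      rw [a0, hBh]
      have := Bp (m + 1) (by omega) (by omega); push_cast at this
      nlinarith
    | succ n ih =>
      intro m hm
      have ih := ih (m + 1) (by omega)
      push_cast at ih
      rw [show (m : ℤ) + 1 + 1 = m + 2 by ring, Br'] at ih
      have p1 := Bp (m + 1) (by omega) (by omega); push_cast at p1
      have p2 := Bp (m + 2) (by omega) (by omega); push_cast at p2
      rw [Br'] at p2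
      have an : a n < 0 := by by_contra hc; push Not at hc; nlinarith
      rw [as]
      have : (-1 / a n - L) * B (m + 1) - - B m =
        (a n * (L * B (m + 1) - B m) + B (m + 1)) / (- a n) := by
        have q : -1 / a n * a n = -1 := by have := an.ne; field_simp
        rw [eq_div_iff (neg_ne_zero.2 an.ne)]
        linear_combination (-B (m + 1)) * q
      have h2 : (a n * (L * B (m + 1) - B m) + B (m + 1)) / (- a n) < 0 :=
        div_neg_of_neg_of_pos (by linarith) (by linarith)
      linarith
  have aneg : ∀ n ≤ h, a n < 0 := by
    intro n hn
    have h1 := aneg' n (h - n) (by omega)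
    have p1 := Bp (h - n + 1) (by omega) (by omega); push_cast at p1
    have p0 : 0 ≤ B ((h - n : ℕ) : ℤ) := by
      rcases Nat.eq_zero_or_pos (h - n) with h0 | h0
      · rw [h0]; simp [B0]
      · exact (Bp _ h0 (by omega)).le
    by_contra hc; push Not at hc; nlinarith
  have main : ∀ n < h, a n ≤ b n ∧ b n ≤ c n ∧ c n ≤ e n ∧ e n ≤ a (n + 1) := by
    intro n
    induction n with
    | zero =>
      intro _
      rw [as, a0, b0, c0, e0]
      have k1 : 1 ≤ 1 / u := by rw [le_div_iff₀ hu0]; linarith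
      have k2 : 1 / u ≤ 1 / r := one_div_le_one_div_of_le hr0 hru.le
      have k3 : 1 / r ≤ 1 / (L - r) := one_div_le_one_div_of_le (by linarith) (by linarith)
      have k4 : -1 / (r - L) = 1 / (L - r) := by rw [← neg_sub L r, neg_div_neg_eq]
      rw [k4]
      refine ⟨by linarith, by linarith, by linarith, by linarith⟩
    | succ n ih =>
      intro hn
      obtain ⟨i1, i2, i3, i4⟩ := ih (by omega)
      have an := aneg (n + 1) (by omega)
      rw [as, bs, cs, es, as (n + 1)]
      exact ⟨Umono i1 (by linarith), Umono i2 (by linarith), Umono i3 (by linarith), Umono i4 an⟩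
  obtain ⟨g, rfl⟩ : ∃ g, h = g + 1 := ⟨h - 1, by omega⟩
  obtain ⟨i1, i2, i3, i4⟩ := main g (by omega)
  have an := aneg (g + 1) le_rfl
  have Lab : a (g + 1) ≤ b (g + 1) := by rw [as, bs]; exact Umono i1 (by linarith)
  have Lbc : b (g + 1) ≤ c (g + 1) := by rw [bs, cs]; exact Umono i2 (by linarith)
  have ra := Uclosed (g + 1) L (1 / r) B (by positivity) B0 B1 Br Bh hβ a (by rw [a0, one_div_one_div]) as
    (fun n hn => aneg n hn.le)
  have re := Uclosed (g + 1) L r B hr0.ne' B0 B1 Br Bh hβ e e0 es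
    (fun n hn => by have := main n hn; have := aneg (n + 1) (by omega); linarith)
  have rb := Uclosed (g + 1) L (1 / u) B (by positivity) B0 B1 Br Bh hβ b (by rw [b0, one_div_one_div]) bs
    (fun n hn => by have := main n hn; have := aneg (n + 1) (by omega); linarith)
  have rc := Uclosed (g + 1) L u B hu0.ne' B0 B1 Br Bh hβ c c0 cs
    (fun n hn => by have := main n hn; have := aneg (n + 1) (by omega); linarith)
  have hu2 : 1 + r * (L - 1) < u * (1 + r) := by
    have : (1 + r * (L - 1)) * (1 + r - L) < u * (1 + r - L) * (1 + r) := by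
      rw [hue]; nlinarith
    by_contra hc; push Not at hc
    have := mul_le_mul_of_nonneg_right hc hden.le
    linarith
  have hu3 : L - 1 < u := by
    by_contra hc; push Not at hc
    have := mul_le_mul_of_nonneg_right hc (show 0 ≤ 1 + r by linarith)
    linarith
  have hce : c (g + 1) * (u - (L - 1)) = 1 - u := by linear_combination -rc
  have hc0 : 0 ≤ c (g + 1) := by
    by_contra hc; push Not at hc
    have := mul_neg_of_neg_of_pos hc (show 0 < u - (L - 1) by linarith)
    linarith
  have hcr : c (g + 1) < r := by
    by_contra hc; push Not at hc
    have := mul_le_mul_of_nonneg_right hc (show 0 ≤ u - (L - 1) by linarith)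
    linarith
  refine ⟨hru, hu1, aneg, ?_, ?_, fun n hn => (main n hn).2.2.1, fun n hn => (main n hn).2.2.2,
    hc0, hcr, ?_, ?_, ?_⟩
  · intro n hn
    rcases Nat.lt_or_ge n (g + 1) with h1 | h1
    · exact (main n h1).1
    · rw [show n = g + 1 by omega]; exact Lab
  · intro n hn
    rcases Nat.lt_or_ge n (g + 1) with h1 | h1
    · exact (main n h1).2.1
    · rw [show n = g + 1 by omega]; exact Lbc
  · have hp : 0 < 1 + L * c (g + 1) := by positivity
    have hbe : b (g + 1) * (1 - (L - 1) * u) = u - 1 := by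
      have hxx : 1 / u * u = 1 := by field_simp
      have : b (g + 1) * (1 - (L - 1) * u) = -u * (b (g + 1) * (L - 1 - 1 / u)) := by
        linear_combination (-b (g + 1)) * hxx
      rw [this, rb]; linear_combination -hxx
    rw [eq_div_iff hp.ne']
    have h1 : 0 < u - (L - 1) := by linarith
    have e1 : (1 + L * c (g + 1)) * (u - (L - 1)) = 1 - (L - 1) * u := by
      linear_combination L * hce
    apply mul_right_cancel₀ h1.ne'
    rw [mul_assoc, e1, hbe]; linear_combination hce
  · rw [hu, eq_div_iff hden.ne']; linear_combination -re
  · have h1 : 0 < 1 - r := by linarith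
    have hae : a (g + 1) * ((L - 1) * r - 1) = 1 - r := by
      have hxx : 1 / r * r = 1 := by field_simp
      have : a (g + 1) * ((L - 1) * r - 1) = r * (a (g + 1) * (L - 1 - 1 / r)) := by
        linear_combination (a (g + 1)) * hxx
      rw [this, ra]; linear_combination hxx
    have h2 : 1 / u = (1 + r - L) / (1 - r) := by rw [hu, one_div_div]
    rw [h2, div_eq_iff an.ne]
    field_simp
    linear_combination hae

lemma Tneg (L α x : ℝ) (d : ℤ) (hL : 0 < L) (hx : x < 0)
    (h : -1 / x - L * d ∈ Ico ((α - 1) * L) (α * L)) : Tmap L α x = -1 / x - L * d := by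
  have e : |1 / x| = -1 / x := by
    rw [abs_of_neg (one_div_neg.2 hx), neg_div]
  have hd := dfun_eq_s14 L α x hL hx.ne d (by rw [e]; exact h)
  simp only [Tmap, hx.ne, if_false, hd, e]

lemma Tpos (L α x : ℝ) (d : ℤ) (hL : 0 < L) (hx : 0 < x)
    (h : 1 / x - L * d ∈ Ico ((α - 1) * L) (α * L)) : Tmap L α x = 1 / x - L * d := by
  have e : |1 / x| = 1 / x := abs_of_pos (by positivity)
  have hd := dfun_eq_s14 L α x hL hx.ne' d (by rw [e]; exact h)
  simp only [Tmap, hx.ne', if_false, hd, e]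

lemma orbits (h : ℕ) (hh : 1 ≤ h) (L α u : ℝ) (hL0 : 0 < L) (hα : 1 / 2 ≤ α)
    (a b c e : ℕ → ℝ)
    (a0 : a 0 = α * L - L) (b0 : b 0 = u - L) (c0 : c 0 = 1 / u - L) (e0 : e 0 = 1 / (α * L) - L)
    (as : ∀ n, a (n + 1) = -1 / a n - L) (bs : ∀ n, b (n + 1) = -1 / b n - L)
    (cs : ∀ n, c (n + 1) = -1 / c n - L) (es : ∀ n, e (n + 1) = -1 / e n - L)
    (aneg : ∀ n ≤ h, a n < 0) (ab : ∀ n ≤ h, a n ≤ b n) (bc : ∀ n ≤ h, b n ≤ c n)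
    (ce : ∀ n < h, c n ≤ e n) (ea : ∀ n < h, e n ≤ a (n + 1)) (ch : c h < α * L)
    (eh : e h = u) (ah : -1 / a h = L + 1 / u)
    (ℓ r : ℕ → ℝ)
    (hℓ : ∀ n, ℓ n = (Tmap L α)^[n] ((α - 1) * L))
    (hr : ∀ n, r n = (Tmap L α)^[n] (α * L)) :
    (∀ n ≤ h, ℓ n = a n) ∧ (∀ n ≤ h, ℓ (h + 1 + n) = c n) ∧ (∀ n < h, r (n + 1) = e n) ∧
    (∀ n ≤ h, r (h + 1 + n) = b n) := by
  have ls : ∀ n, ℓ (n + 1) = Tmap L α (ℓ n) := by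
    intro n; rw [hℓ, hℓ, Function.iterate_succ_apply']
  have rs : ∀ n, r (n + 1) = Tmap L α (r n) := by
    intro n; rw [hr, hr, Function.iterate_succ_apply']
  have hr0 : 0 < α * L := by positivity
  have amono : ∀ n ≤ h, a 0 ≤ a n := by
    intro n
    induction n with
    | zero => intro _; exact le_rfl
    | succ n ih =>
      intro hn
      have := ih (by omega)
      linarith [ab n (by omega), bc n (by omega), ce n (by omega), ea n (by omega)]
  have l0 : (α - 1) * L = a 0 := by rw [a0]; ring
  have step1 : ∀ x, x < 0 → a 0 ≤ -1 / x - L → -1 / x - L < α * L → Tmap L α x = -1 / x - L := by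
    intro x hx h1 h2
    have := Tneg L α x 1 hL0 hx (by push_cast; rw [mul_one, l0]; exact ⟨h1, h2⟩)
    push_cast at this; rwa [mul_one] at this
  have step2 : ∀ x, x < 0 → a 0 ≤ -1 / x - L * 2 → -1 / x - L * 2 < α * L →
      Tmap L α x = -1 / x - L * 2 := by
    intro x hx h1 h2
    have := Tneg L α x 2 hL0 hx (by push_cast; rw [l0]; exact ⟨h1, h2⟩)
    push_cast at this; exact this
  have eneg : ∀ n < h, e n < 0 := fun n hn => by linarith [ea n hn, aneg (n + 1) hn]
  have cneg : ∀ n < h, c n < 0 := fun n hn => by linarith [ce n hn, eneg n hn]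
  have bneg : ∀ n < h, b n < 0 := fun n hn => by linarith [bc n hn.le, cneg n hn]
  have A : ∀ n ≤ h, ℓ n = a n := by
    intro n
    induction n with
    | zero => intro _; rw [hℓ]; simpa using l0
    | succ n ih =>
      intro hn
      rw [ls, ih (by omega), as]
      have h1 := amono (n + 1) hn
      have h2 := aneg (n + 1) hn
      rw [as] at h1 h2
      exact step1 _ (aneg n (by omega)) h1 (by linarith)
  have C : ∀ n ≤ h, ℓ (h + 1 + n) = c n := by
    intro n
    induction n with
    | zero =>
      intro _
      rw [add_zero, ls, A h le_rfl]
      have e1 : -1 / a h - L * 2 = c 0 := by rw [ah, c0]; ring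
      have h1 := ab 0 (by omega)
      have h2 := bc 0 (by omega)
      have h3 := cneg 0 (by omega)
      rw [step2 _ (aneg h le_rfl) (by rw [e1]; linarith) (by rw [e1]; linarith), e1]
    | succ n ih =>
      intro hn
      rw [← add_assoc, ls, ih (by omega), cs]
      have h1 := amono (n + 1) hn
      have h2 := ab (n + 1) hn
      have h3 := bc (n + 1) hn
      have h4 : c (n + 1) < α * L := by
        rcases Nat.lt_or_ge (n + 1) h with h5 | h5
        · linarith [cneg _ h5]
        · rw [show n + 1 = h by omega]; exact ch
      rw [cs] at h3 h4
      exact step1 _ (cneg n (by omega)) (by linarith) h4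
  have Ee : ∀ n < h, r (n + 1) = e n := by
    intro n
    induction n with
    | zero =>
      intro _
      rw [rs, hr, e0]
      have h1 := ab 0 (by omega)
      have h2 := bc 0 (by omega)
      have h3 := ce 0 (by omega)
      have h4 := eneg 0 (by omega)
      rw [e0] at h3 h4
      have := Tpos L α (α * L) 1 hL0 hr0 (by push_cast; rw [mul_one, l0]; exact ⟨by linarith, by linarith⟩)
      push_cast at this
      rw [mul_one] at this
      simpa using this
    | succ n ih =>
      intro hn
      rw [rs, ih (by omega), es]
      have h1 := amono (n + 1) hn.le
      have h2 := ab (n + 1) hn.le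
      have h3 := bc (n + 1) hn.le
      have h4 := ce (n + 1) hn
      have h5 := eneg (n + 1) hn
      rw [es] at h4 h5
      exact step1 _ (eneg n (by omega)) (by linarith) (by linarith)
  refine ⟨A, C, Ee, ?_⟩
  intro n
  induction n with
  | zero =>
    intro _
    rw [add_zero, rs]
    obtain ⟨g, rfl⟩ : ∃ g, h = g + 1 := ⟨h - 1, by omega⟩
    rw [Ee g (by omega)]
    have e1 : -1 / e g - L * 2 = b 0 := by rw [b0, ← eh, es]; ring
    have h1 := ab 0 (by omega)
    have h3 := bneg 0 (by omega)
    rw [step2 _ (eneg g (by omega)) (by rw [e1]; linarith) (by rw [e1]; linarith), e1]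
  | succ n ih =>
    intro hn
    rw [← add_assoc, rs, ih (by omega), bs]
    have h1 := amono (n + 1) hn
    have h2 := ab (n + 1) hn
    have h3 := bc (n + 1) hn
    have h4 : c (n + 1) < α * L := by
      rcases Nat.lt_or_ge (n + 1) h with h5 | h5
      · linarith [cneg _ h5]
      · rw [show n + 1 = h by omega]; exact ch
    rw [bs] at h2 h3
    exact step1 _ (bneg n (by omega)) (by linarith) (by linarith)

lemma exists_step (K : ℕ) (bp G : ℕ → ℝ) (hm : ∀ k < K, bp k ≤ bp (k + 1)) :
    ∃ f : ℝ → ℝ, (∀ k < K, ∀ x ∈ Ico (bp k) (bp (k + 1)), f x = G k ∧ x ∈ Ico (bp 0) (bp K)) ∧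
      (∀ x ∈ Ico (bp 0) (bp K), ∃ k < K, x ∈ Ico (bp k) (bp (k + 1))) := by
  have mono : ∀ j i, i ≤ j → j ≤ K → bp i ≤ bp j := by
    intro j
    induction j with
    | zero => intro i hi _; rw [show i = 0 by omega]
    | succ j ih =>
      intro i hi hj
      rcases Nat.lt_or_ge i (j + 1) with h1 | h1
      · exact (ih i (by omega) (by omega)).trans (hm j (by omega))
      · rw [show i = j + 1 by omega]
  have uniq : ∀ x k k', k < K → k' < K → x ∈ Ico (bp k) (bp (k + 1)) →
      x ∈ Ico (bp k') (bp (k' + 1)) → k = k' := by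
    intro x k k' hk hk' hx hx'
    by_contra hne
    rcases Nat.lt_or_gt_of_ne hne with h1 | h1
    · have := mono k' (k + 1) (by omega) (by omega)
      linarith [hx.2, hx'.1]
    · have := mono k (k' + 1) (by omega) (by omega)
      linarith [hx.1, hx'.2]
  classical
  refine ⟨fun x => if hx : ∃ k, k < K ∧ x ∈ Ico (bp k) (bp (k + 1)) then G hx.choose else 0, ?_, ?_⟩
  · intro k hk x hx
    have hex : ∃ k, k < K ∧ x ∈ Ico (bp k) (bp (k + 1)) := ⟨k, hk, hx⟩
    constructor
    · simp only [hex, dif_pos]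
      rw [uniq x _ k hex.choose_spec.1 hk hex.choose_spec.2 hx]
    · exact ⟨(mono k 0 (by omega) (by omega)).trans hx.1,
        lt_of_lt_of_le hx.2 (mono K (k + 1) (by omega) le_rfl)⟩
  · intro x hx
    by_contra hc
    push Not at hc
    have : ∀ k ≤ K, bp k ≤ x := by
      intro k
      induction k with
      | zero => intro _; exact hx.1
      | succ k ih =>
        intro hk
        by_contra h1
        push Not at h1
        exact hc k (by omega) ⟨ih (by omega), h1⟩
    linarith [this K le_rfl, hx.2]

lemma exists_f (h : ℕ) (R : ℝ) (H a b c e : ℕ → ℝ)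
    (ab : ∀ n ≤ h, a n ≤ b n) (bc : ∀ n ≤ h, b n ≤ c n)
    (ce : ∀ n < h, c n ≤ e n) (ea : ∀ n < h, e n ≤ a (n + 1)) (ch : c h < R) :
    ∃ f : ℝ → ℝ,
      (∀ n ≤ h, ∀ x ∈ Ico (a n) (b n), f x = H (4 * n + 1) ∧ x ∈ Ico (a 0) R) ∧
      (∀ n ≤ h, ∀ x ∈ Ico (b n) (c n), f x = H (4 * n + 2) ∧ x ∈ Ico (a 0) R) ∧
      (∀ n < h, ∀ x ∈ Ico (c n) (e n), f x = H (4 * n + 3) ∧ x ∈ Ico (a 0) R) ∧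
      (∀ n < h, ∀ x ∈ Ico (e n) (a (n + 1)), f x = H (4 * n + 4) ∧ x ∈ Ico (a 0) R) ∧
      (∀ x ∈ Ico (c h) R, f x = H (4 * h + 3) ∧ x ∈ Ico (a 0) R) ∧
      (∀ x ∈ Ico (a 0) R, (∃ n, n ≤ h ∧ x ∈ Ico (a n) (b n)) ∨ (∃ n, n ≤ h ∧ x ∈ Ico (b n) (c n)) ∨
        (∃ n, n < h ∧ x ∈ Ico (c n) (e n)) ∨ (∃ n, n < h ∧ x ∈ Ico (e n) (a (n + 1))) ∨
        x ∈ Ico (c h) R) := by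
  obtain ⟨bp, hbp⟩ : ∃ bp : ℕ → ℝ, bp = fun k => if k % 4 = 0 then a (k / 4) else if k % 4 = 1 then
    b (k / 4) else if k % 4 = 2 then c (k / 4) else if k / 4 < h then e (k / 4) else R := ⟨_, rfl⟩
  have v0 : ∀ n, bp (4 * n) = a n := by
    intro n
    simp only [hbp]
    rw [if_pos (by omega), show 4 * n / 4 = n by omega]
  have v1 : ∀ n, bp (4 * n + 1) = b n := by
    intro n
    simp only [hbp]
    rw [if_neg (by omega), if_pos (by omega), show (4 * n + 1) / 4 = n by omega]
  have v2 : ∀ n, bp (4 * n + 2) = c n := by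
    intro n
    simp only [hbp]
    rw [if_neg (by omega), if_neg (by omega), if_pos (by omega), show (4 * n + 2) / 4 = n by omega]
  have v3 : ∀ n < h, bp (4 * n + 3) = e n := by
    intro n hn
    simp only [hbp]
    rw [if_neg (by omega), if_neg (by omega), if_neg (by omega), if_pos (by omega),
      show (4 * n + 3) / 4 = n by omega]
  have v4 : bp (4 * h + 3) = R := by
    simp only [hbp]
    rw [if_neg (by omega), if_neg (by omega), if_neg (by omega), if_neg (by omega)]
  have v5 : ∀ n, bp (4 * n + 3 + 1) = a (n + 1) := fun n => v0 (n + 1)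
  have v00 : bp 0 = a 0 := v0 0
  have cases4 : ∀ k < 4 * h + 3, (∃ n, n ≤ h ∧ k = 4 * n) ∨ (∃ n, n ≤ h ∧ k = 4 * n + 1) ∨
      (∃ n, n < h ∧ k = 4 * n + 2) ∨ (∃ n, n < h ∧ k = 4 * n + 3) ∨ k = 4 * h + 2 := by
    intro k hk
    have : k % 4 = 0 ∨ k % 4 = 1 ∨ k % 4 = 2 ∨ k % 4 = 3 := by omega
    rcases this with h1 | h1 | h1 | h1
    · left; exact ⟨k / 4, by omega, by omega⟩
    · right; left; exact ⟨k / 4, by omega, by omega⟩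
    · by_cases h2 : k = 4 * h + 2
      · simp [h2]
      · right; right; left; exact ⟨k / 4, by omega, by omega⟩
    · right; right; right; left; exact ⟨k / 4, by omega, by omega⟩
  obtain ⟨f, hf, hcov⟩ := exists_step (4 * h + 3) bp (fun k => H (k + 1)) (by
    intro k hk
    rcases cases4 k hk with ⟨n, hn, rfl⟩ | ⟨n, hn, rfl⟩ | ⟨n, hn, rfl⟩ | ⟨n, hn, rfl⟩ | rfl
    · rw [v0, v1]; exact ab n hn
    · rw [v1, v2]; exact bc n hn
    · rw [v2, v3 n hn]; exact ce n hn
    · rw [v3 n hn, v5]; exact ea n hn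
    · rw [v2, v4]; exact ch.le)
  rw [v00, v4] at hf hcov
  refine ⟨f, ?_, ?_, ?_, ?_, ?_, ?_⟩
  · intro n hn x hx
    exact hf (4 * n) (by omega) x (by rw [v0, v1]; exact hx)
  · intro n hn x hx
    exact hf (4 * n + 1) (by omega) x (by rw [v1, v2]; exact hx)
  · intro n hn x hx
    exact hf (4 * n + 2) (by omega) x (by rw [v2, v3 n hn]; exact hx)
  · intro n hn x hx
    exact hf (4 * n + 3) (by omega) x (by rw [v3 n hn, v5]; exact hx)
  · intro x hx
    exact hf (4 * h + 2) (by omega) x (by rw [v2, v4]; exact hx)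
  · intro x hx
    obtain ⟨k, hk, hxk⟩ := hcov x hx
    rcases cases4 k hk with ⟨n, hn, rfl⟩ | ⟨n, hn, rfl⟩ | ⟨n, hn, rfl⟩ | ⟨n, hn, rfl⟩ | rfl
    · rw [v0, v1] at hxk; exact Or.inl ⟨n, hn, hxk⟩
    · rw [v1, v2] at hxk; exact Or.inr (Or.inl ⟨n, hn, hxk⟩)
    · rw [v2, v3 n hn] at hxk; exact Or.inr (Or.inr (Or.inl ⟨n, hn, hxk⟩))
    · rw [v3 n hn, v5] at hxk; exact Or.inr (Or.inr (Or.inr (Or.inl ⟨n, hn, hxk⟩)))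
    · rw [v2, v4] at hxk; exact Or.inr (Or.inr (Or.inr (Or.inr hxk)))

lemma negle {y w : ℝ} (hy : y < 0) (hw : 0 < w) (h : -1 / y ≤ w) : y ≤ -1 / w := by
  rw [le_div_iff₀ hw]
  rw [div_le_iff_of_neg hy] at h
  linarith

lemma neglt {y w : ℝ} (hy : y < 0) (hw : 0 < w) (h : w < -1 / y) : -1 / w < y := by
  rw [div_lt_iff₀ hw]
  rw [lt_div_iff_of_neg hy] at h
  linarith


set_option maxHeartbeats 8000000 in
/-- Theorem 2.12 (continued): for odd `q = 2h+3` and `1/2 ≤ α < ρ/λ`, the natural extension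
map `𝒯_α` is a bijection of `Ω_α = ⋃_{n=1}^{4h+3} Jₙ × [0, Hₙ]` off of a set of
two-dimensional Lebesgue measure zero. -/
theorem stmt14 (h q : ℕ) (hh : 1 ≤ h) (hq : q = 2 * h + 3) (lam α ρ : ℝ)
    (hlam : lam = 2 * Real.cos (Real.pi / q))
    (hρ : ρ = (lam - 2 + Real.sqrt (lam ^ 2 - 4 * lam + 8)) / 2)
    (hα1 : 1 / 2 ≤ α) (hα2 : α < ρ / lam)
    (B : ℤ → ℝ)
    (hB : ∀ n : ℤ, B n = Real.sin (n * Real.pi / q) / Real.sin (Real.pi / q))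
    (ℓ r : ℕ → ℝ)
    (hℓ : ∀ n, ℓ n = (Tmap lam α)^[n] ((α - 1) * lam))
    (hr : ∀ n, r n = (Tmap lam α)^[n] (α * lam))
    (H : ℕ → ℝ)
    (hH4 : ∀ n : ℕ, 1 ≤ n → n ≤ h → H (4 * n) = B n / B ((n : ℤ) + 1))
    (hH4m2 : ∀ n : ℕ, 1 ≤ n → n ≤ h + 1 →
      H (4 * n - 2) = (B ((n : ℤ) - 1) + B n) / (B n + B ((n : ℤ) + 1)))
    (hH4h3 : ∀ n : ℕ, n ≤ h →
      H (4 * h + 3 - 4 * n) = (B ((n : ℤ) + 1) * ρ - B n) / (B n * ρ - B ((n : ℤ) - 1)))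
    (hH4h1 : ∀ n : ℕ, n ≤ h →
      H (4 * h + 1 - 4 * n) = (B ((n : ℤ) + 1) * ρ - B ((n : ℤ) + 2)) / (B n * ρ - B ((n : ℤ) + 1)))
    (Ω : Set (ℝ × ℝ))
    (hΩ : Ω = (⋃ n ∈ Finset.Icc 1 h, Ico (ℓ (n - 1)) (r (h + n)) ×ˢ Icc (0 : ℝ) (H (4 * n - 3)))
      ∪ (⋃ n ∈ Finset.Icc 1 h, Ico (r (h + n)) (ℓ (h + n)) ×ˢ Icc (0 : ℝ) (H (4 * n - 2)))
      ∪ (⋃ n ∈ Finset.Icc 1 h, Ico (ℓ (h + n)) (r n) ×ˢ Icc (0 : ℝ) (H (4 * n - 1)))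
      ∪ (⋃ n ∈ Finset.Icc 1 h, Ico (r n) (ℓ n) ×ˢ Icc (0 : ℝ) (H (4 * n)))
      ∪ Ico (ℓ h) (r (2 * h + 1)) ×ˢ Icc (0 : ℝ) (H (4 * h + 1))
      ∪ Ico (r (2 * h + 1)) (ℓ (2 * h + 1)) ×ˢ Icc (0 : ℝ) (H (4 * h + 2))
      ∪ Ico (ℓ (2 * h + 1)) (r 0) ×ˢ Icc (0 : ℝ) (H (4 * h + 3))) :
    ∃ N N' : Set (ℝ × ℝ), N ⊆ Ω ∧ N' ⊆ Ω ∧ volume N = 0 ∧ volume N' = 0 ∧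
      Set.BijOn (Tnat lam α) (Ω \ N) (Ω \ N') := by
  
  obtain ⟨hL0, hL2, hLs, B0, B1, Br, Bh, Bp, Bm⟩ := Bfacts h q hh hq lam hlam B hB
  have hsq : Real.sqrt (lam ^ 2 - 4 * lam + 8) ^ 2 = lam ^ 2 - 4 * lam + 8 :=
    Real.sq_sqrt (by nlinarith)
  have hs0 := Real.sqrt_nonneg (lam ^ 2 - 4 * lam + 8)
  have hρe : ρ ^ 2 + (2 - lam) * ρ = 1 := by rw [hρ]; linear_combination hsq / 4
  have hρ1 : lam - 1 < ρ := by
    have : lam < Real.sqrt (lam ^ 2 - 4 * lam + 8) := Real.lt_sqrt_of_sq_lt (by nlinarith)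
    rw [hρ]; linarith
  have hρ2 : ρ < 1 := by
    have : Real.sqrt (lam ^ 2 - 4 * lam + 8) < 4 - lam := by
      rw [Real.sqrt_lt' (by linarith)]; nlinarith
    rw [hρ]; linarith
  have hR : α * lam < ρ := by rwa [lt_div_iff₀ hL0] at hα2
  have hRL : lam / 2 ≤ α * lam := by nlinarith
  have hR1 : α * lam < 1 := by linarith
  have hRe : (α * lam) ^ 2 + (2 - lam) * (α * lam) < 1 := by
    have : 0 < (ρ - α * lam) * (ρ + α * lam + 2 - lam) := mul_pos (by linarith) (by linarith)
    nlinarith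
  obtain ⟨F1, F2, F3, F4, X4, X1, X2, X3, Y1, Y2, Y3, P1, P2, P3, P4⟩ :=
    Hfacts h hh lam ρ B hL0 hL2 hLs hρe hρ1 hρ2 B0 B1 Br Bh Bp Bm H hH4 hH4m2 hH4h3 hH4h1
  obtain ⟨u, hu⟩ : ∃ u, u = (1 - α * lam) / (1 + α * lam - lam) := ⟨_, rfl⟩
  have ex : ∀ x : ℝ, ∃ p : ℕ → ℝ, p 0 = x ∧ ∀ n, p (n + 1) = -1 / p n - lam := fun x =>
    ⟨fun n => (fun y => -1 / y - lam)^[n] x, rfl, fun n => Function.iterate_succ_apply' _ _ _⟩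
  obtain ⟨a, a0, as⟩ := ex (α * lam - lam)
  obtain ⟨b, b0, bs⟩ := ex (u - lam)
  obtain ⟨c, c0, cs⟩ := ex (1 / u - lam)
  obtain ⟨e, e0, es⟩ := ex (1 / (α * lam) - lam)
  obtain ⟨hru, hu1, aneg, ab, bc, ce, ea, hc0, hcr, hbc, he, ha⟩ :=
    chain h hh lam (α * lam) u B hL0 hL2 hLs hRe hR1 hRL B0 B1 Br Bh Bp hu a b c e a0 b0 c0 e0 as bs cs es
  obtain ⟨oa, oc, oe, ob⟩ := orbits h hh lam α u hL0 hα1 a b c e a0 b0 c0 e0 as bs cs es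
    aneg ab bc ce ea hcr he ha ℓ r hℓ hr
  obtain ⟨f, f1, f2, f3, f4, f5, cov⟩ := exists_f h (α * lam) H a b c e ab bc ce ea hcr
  have l0 : (α - 1) * lam = a 0 := by rw [a0]; ring
  have r0 : r 0 = α * lam := by rw [hr]; rfl
  have hr0 : 0 < α * lam := by linarith
  have hu0 : 0 < u := by linarith
  have eneg : ∀ n < h, e n < 0 := fun n hn => by linarith [ea n hn, aneg (n + 1) hn]
  have cneg : ∀ n < h, c n < 0 := fun n hn => by linarith [ce n hn, eneg n hn]
  have bneg : ∀ n < h, b n < 0 := fun n hn => by linarith [bc n hn.le, cneg n hn]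
  have bh0 : b h ≤ 0 := by
    rw [hbc]; exact div_nonpos_of_nonpos_of_nonneg (by linarith) (by positivity)
  have hΩm : ∀ x y, (x, y) ∈ Ω ↔ x ∈ Ico (a 0) (α * lam) ∧ 0 ≤ y ∧ y ≤ f x := by
    intro x y
    rw [hΩ]
    simp only [mem_union, mem_iUnion, mem_prod, Finset.mem_Icc, exists_prop, mem_Icc]
    have z1 : ℓ h = a h := oa h le_rfl
    have z2 : r (2 * h + 1) = b h := by rw [← ob h le_rfl]; congr 1; ring
    have z3 : ℓ (2 * h + 1) = c h := by rw [← oc h le_rfl]; congr 1; ring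
    rw [z1, z2, z3, r0]
    have w1 : ∀ n < h, r (h + (n + 1)) = b n := fun n hn => by
      rw [← ob n hn.le]; congr 1; ring
    have w2 : ∀ n < h, ℓ (h + (n + 1)) = c n := fun n hn => by
      rw [← oc n hn.le]; congr 1; ring
    constructor
    · rintro ((((((⟨n, hn, hx, hy⟩ | ⟨n, hn, hx, hy⟩) | ⟨n, hn, hx, hy⟩) | ⟨n, hn, hx, hy⟩) | ⟨hx, hy⟩) |
        ⟨hx, hy⟩) | ⟨hx, hy⟩)
      · obtain ⟨m, rfl⟩ : ∃ m, n = m + 1 := ⟨n - 1, by omega⟩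
        rw [Nat.add_sub_cancel, oa m (by omega), w1 m (by omega)] at hx
        rw [show 4 * (m + 1) - 3 = 4 * m + 1 by omega] at hy
        obtain ⟨g1, g2⟩ := f1 m (by omega) x hx
        rw [g1]; exact ⟨g2, hy⟩
      · obtain ⟨m, rfl⟩ : ∃ m, n = m + 1 := ⟨n - 1, by omega⟩
        rw [w1 m (by omega), w2 m (by omega)] at hx
        rw [show 4 * (m + 1) - 2 = 4 * m + 2 by omega] at hy
        obtain ⟨g1, g2⟩ := f2 m (by omega) x hx
        rw [g1]; exact ⟨g2, hy⟩
      · obtain ⟨m, rfl⟩ : ∃ m, n = m + 1 := ⟨n - 1, by omega⟩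
        rw [oe m (by omega), w2 m (by omega)] at hx
        rw [show 4 * (m + 1) - 1 = 4 * m + 3 by omega] at hy
        obtain ⟨g1, g2⟩ := f3 m (by omega) x hx
        rw [g1]; exact ⟨g2, hy⟩
      · obtain ⟨m, rfl⟩ : ∃ m, n = m + 1 := ⟨n - 1, by omega⟩
        rw [oe m (by omega), oa (m + 1) (by omega)] at hx
        rw [show 4 * (m + 1) = 4 * m + 4 by omega] at hy
        obtain ⟨g1, g2⟩ := f4 m (by omega) x hx
        rw [g1]; exact ⟨g2, hy⟩
      · obtain ⟨g1, g2⟩ := f1 h le_rfl x hx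
        rw [g1]; exact ⟨g2, hy⟩
      · obtain ⟨g1, g2⟩ := f2 h le_rfl x hx
        rw [g1]; exact ⟨g2, hy⟩
      · obtain ⟨g1, g2⟩ := f5 x hx
        rw [g1]; exact ⟨g2, hy⟩
    · rintro ⟨hxI, hy⟩
      rcases cov x hxI with ⟨n, hn, hx⟩ | ⟨n, hn, hx⟩ | ⟨n, hn, hx⟩ | ⟨n, hn, hx⟩ | hx
      · rw [(f1 n hn x hx).1] at hy
        rcases Nat.lt_or_ge n h with h1 | h1
        · left; left; left; left; left; left
          refine ⟨n + 1, by omega, ?_⟩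
          rw [Nat.add_sub_cancel, oa n (by omega), w1 n h1, show 4 * (n + 1) - 3 = 4 * n + 1 by omega]
          exact ⟨hx, hy⟩
        · have : n = h := by omega
          subst this
          left; left; right; exact ⟨hx, hy⟩
      · rw [(f2 n hn x hx).1] at hy
        rcases Nat.lt_or_ge n h with h1 | h1
        · left; left; left; left; left; right
          refine ⟨n + 1, by omega, ?_⟩
          rw [w1 n h1, w2 n h1, show 4 * (n + 1) - 2 = 4 * n + 2 by omega]
          exact ⟨hx, hy⟩
        · have : n = h := by omega
          subst this
          left; right; exact ⟨hx, hy⟩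
      · rw [(f3 n hn x hx).1] at hy
        left; left; left; left; right
        refine ⟨n + 1, by omega, ?_⟩
        rw [w2 n hn, oe n hn, show 4 * (n + 1) - 1 = 4 * n + 3 by omega]
        exact ⟨hx, hy⟩
      · rw [(f4 n hn x hx).1] at hy
        left; left; left; right
        refine ⟨n + 1, by omega, ?_⟩
        rw [oa (n + 1) hn, oe n hn, show 4 * (n + 1) = 4 * n + 4 by omega]
        exact ⟨hx, hy⟩
      · rw [(f5 x hx).1] at hy
        right; exact ⟨hx, hy⟩
  have hposd : ∀ t ∈ Ico (a 0) (α * lam), ∀ d : ℝ, 1 ≤ d → 0 < d * lam + t := by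
    intro t ht d hd
    have := ht.1
    rw [a0] at this
    nlinarith
  refine core_s14 lam α f ({e 0} ∪ range (fun d : ℤ => 1 / c h - d * lam)) (range H)
    ((countable_singleton _).union (countable_range _)) (countable_range _) hL0 hα1 hR1 hLs ?_ ?_ ?_ ?_ ?_ ?_
    Ω (by rw [l0]; exact hΩm)
  all_goals rw [l0]
  · intro x hxI
    rcases cov x hxI with ⟨n, hn, hx⟩ | ⟨n, hn, hx⟩ | ⟨n, hn, hx⟩ | ⟨n, hn, hx⟩ | hx
    · exact ⟨_, (f1 n hn x hx).1.symm⟩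
    · exact ⟨_, (f2 n hn x hx).1.symm⟩
    · exact ⟨_, (f3 n hn x hx).1.symm⟩
    · exact ⟨_, (f4 n hn x hx).1.symm⟩
    · exact ⟨_, (f5 x hx).1.symm⟩
  · intro x hxI
    rcases cov x hxI with ⟨n, hn, hx⟩ | ⟨n, hn, hx⟩ | ⟨n, hn, hx⟩ | ⟨n, hn, hx⟩ | hx
    · rw [(f1 n hn x hx).1]; exact P1 n hn
    · rw [(f2 n hn x hx).1]; exact P2 n hn
    · rw [(f3 n hn x hx).1]; exact P3 n hn.le
    · rw [(f4 n hn x hx).1]; exact P4 n hn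
    · rw [(f5 x hx).1]; exact P3 h le_rfl
  · -- sums along neighbouring digits
    intro t ht htE d hd hlt
    have hd' : (1 : ℝ) ≤ d := by exact_mod_cast hd
    have hp := hposd t ht d hd'
    obtain ⟨x, hx⟩ : ∃ x, x = 1 / (d * lam + t) := ⟨_, rfl⟩
    have hx0 : 0 < x := by rw [hx]; positivity
    have hxi : d * lam + t = 1 / x := by rw [hx, one_div_one_div]
    have hxn : -1 / ((d + 1) * lam + t) = -x / (1 + lam * x) := by
      rw [show (d + 1) * lam + t = 1 / x + lam by linarith]
      field_simp
    have hp1 : 0 < 1 + lam * x := by positivity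
    have hp2 : 0 < 1 + lam * c h := by positivity
    rw [← hx] at hlt ⊢
    have hxneg : -x / (1 + lam * x) < 0 := div_neg_of_neg_of_pos (by linarith) hp1
    rcases lt_trichotomy x (c h) with h1 | h1 | h1
    · have g1 := (f2 h le_rfl x ⟨by linarith, h1⟩).1
      have g2 : b h ≤ -x / (1 + lam * x) := by
        rw [hbc, div_le_div_iff₀ hp2 hp1]; nlinarith
      have g3 := (f2 h le_rfl (-x / (1 + lam * x)) ⟨g2, by linarith⟩).1
      rw [hxn, g1, g3, X2]; ring
    · exfalso
      apply htE
      right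
      refine ⟨d, ?_⟩
      simp only
      rw [← h1]; linarith
    · have g1 := (f5 x ⟨h1.le, hlt⟩).1
      have g2 : -x / (1 + lam * x) < b h := by
        rw [hbc, div_lt_div_iff₀ hp1 hp2]; nlinarith
      have g4 : a h ≤ -x / (1 + lam * x) := by
        rw [← hxn]
        apply negle (aneg h le_rfl) (hposd t ht _ (by linarith))
        rw [ha]
        have k1 : 1 / u ≤ 1 / (α * lam) := one_div_le_one_div_of_le hr0 hru.le
        have k2 : 1 / (α * lam) ≤ 1 / x := one_div_le_one_div_of_le hx0 hlt.le
        linarith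
      have g3 := (f1 h le_rfl (-x / (1 + lam * x)) ⟨g4, g2⟩).1
      rw [hxn, g1, g3, X1, X3]; ring
  · intro t ht htE hle
    have hp : 0 < lam + t := by have := hposd t ht 1 le_rfl; linarith
    have ht1 : a 1 ≤ t := by
      have := as 0
      rw [zero_add] at this
      rw [this]
      have h1 := aneg 0 (by omega)
      rw [le_div_iff₀ hp] at hle
      have : -1 / a 0 ≤ lam + t := by rw [div_le_iff_of_neg h1]; linarith
      linarith
    have hab0 := ab 0 (by omega)
    have hbc0 := bc 0 (by omega)
    have hce0 := ce 0 (by omega)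
    have hea0 := ea 0 (by omega)
    rw [zero_add] at hea0
    have up : ∀ y y', y < 0 → y' = -1 / y - lam → y' ≤ t → y ≤ -1 / (lam + t) := by
      intro y y' hy e1 h1
      exact negle hy hp (by linarith)
    have dn : ∀ y y', y < 0 → y' = -1 / y - lam → t < y' → -1 / (lam + t) < y := by
      intro y y' hy e1 h1
      exact neglt hy hp (by linarith)
    rcases cov t ht with ⟨n, hn, hx⟩ | ⟨n, hn, hx⟩ | ⟨n, hn, hx⟩ | ⟨n, hn, hx⟩ | hx
    · rcases n with _ | n
      · linarith [hx.2]
      · have g := (f1 n (by omega) (-1 / (lam + t)) ⟨up _ _ (aneg n (by omega)) (as n) hx.1,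
          dn _ _ (bneg n (by omega)) (bs n) hx.2⟩).1
        rw [(f1 _ hn t hx).1, g, F1 n (by omega)]
    · rcases n with _ | n
      · linarith [hx.2]
      · have g := (f2 n (by omega) (-1 / (lam + t)) ⟨up _ _ (bneg n (by omega)) (bs n) hx.1,
          dn _ _ (cneg n (by omega)) (cs n) hx.2⟩).1
        rw [(f2 _ hn t hx).1, g, F2 n (by omega)]
    · rcases n with _ | n
      · linarith [hx.2]
      · have g := (f3 n (by omega) (-1 / (lam + t)) ⟨up _ _ (cneg n (by omega)) (cs n) hx.1,
          dn _ _ (eneg n (by omega)) (es n) hx.2⟩).1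
        rw [(f3 _ hn t hx).1, g, F3 n (by omega)]
    · rcases n with _ | n
      · rw [zero_add] at hx; linarith [hx.2]
      · have g := (f4 n (by omega) (-1 / (lam + t)) ⟨up _ _ (eneg n (by omega)) (es n) hx.1,
          dn _ _ (aneg (n + 1) (by omega)) (as (n + 1)) hx.2⟩).1
        rw [(f4 _ hn t hx).1, g, F4 n (by omega)]
    · rw [(f5 t hx).1]
      obtain ⟨n, hn⟩ : ∃ n, h = n + 1 := ⟨h - 1, by omega⟩
      have hx1 := hx.1
      have hx2 : t < e h := by rw [he]; linarith [hx.2]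
      rw [hn] at hx1 hx2
      have g := (f3 n (by omega) (-1 / (lam + t)) ⟨up _ _ (cneg n (by omega)) (cs n) hx1,
          dn _ _ (eneg n (by omega)) (es n) hx2⟩).1
      rw [g, hn, F3 n (by omega)]
  · intro t ht htE hlt hlt2
    have hp : 0 < lam + t := by have := hposd t ht 1 le_rfl; linarith
    have ht1 : t < a 1 := by
      have := as 0
      rw [zero_add] at this
      rw [this]
      have h1 := aneg 0 (by omega)
      rw [div_lt_iff₀ hp] at hlt
      have : lam + t < -1 / a 0 := by rw [lt_div_iff_of_neg h1]; linarith
      linarith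
    have ht2 : e 0 ≤ t := by
      rw [e0]
      have : 1 / (α * lam) < lam + t := by
        rw [div_lt_iff₀ hr0]; rw [div_lt_iff₀ hp] at hlt2; linarith
      linarith
    have g := (f4 0 (by omega) t ⟨ht2, by rw [zero_add]; exact ht1⟩).1
    rw [g]; exact X4
  · intro t ht htE hle
    have hp : 0 < lam + t := by have := hposd t ht 1 le_rfl; linarith
    have hp2 : 0 < 2 * lam + t := by linarith
    have ht2 : t < e 0 := by
      have : lam + t ≤ 1 / (α * lam) := by
        rw [le_div_iff₀ hr0]; rw [le_div_iff₀ hp] at hle; linarith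
      refine lt_of_le_of_ne (by rw [e0]; linarith) ?_
      intro h1; exact htE (Or.inl h1)
    obtain ⟨n, hn⟩ : ∃ n, h = n + 1 := ⟨h - 1, by omega⟩
    have esn : -1 / e n = u + lam := by have := es n; rw [← hn, he] at this; linarith
    have csn : -1 / c n = c h + lam := by have := cs n; rw [← hn] at this; linarith
    have anh : a (n + 1) = a h := by rw [hn]
    have hab0 := ab 0 (by omega)
    have hbc0 := bc 0 (by omega)
    rcases lt_or_ge t (b 0) with h1 | h1
    · rw [(f1 0 (by omega) t ⟨ht.1, h1⟩).1]
      have q1 : c n ≤ -1 / (2 * lam + t) := by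
        refine negle (cneg n (by omega)) hp2 ?_
        rw [csn]; have := ht.1; rw [a0] at this; linarith
      have q2 : -1 / (2 * lam + t) < e n := by
        refine neglt (eneg n (by omega)) hp2 ?_
        rw [esn]; rw [b0] at h1; linarith
      rw [(f3 n (by omega) _ ⟨q1, q2⟩).1, show 4 * n + 3 = 4 * h - 1 by omega]
      exact Y1
    · have q2 : e n ≤ -1 / (2 * lam + t) := by
        refine negle (eneg n (by omega)) hp2 ?_
        rw [esn]; rw [b0] at h1; linarith
      rcases lt_or_ge t (c 0) with h2 | h2
      · rw [(f2 0 (by omega) t ⟨h1, h2⟩).1]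
        have q3 : -1 / (2 * lam + t) < a (n + 1) := by
          rw [anh]
          refine neglt (aneg h le_rfl) hp2 ?_
          rw [ha]; rw [c0] at h2; linarith
        rw [(f4 n (by omega) _ ⟨q2, q3⟩).1, show 4 * n + 4 = 4 * h by omega]
        exact Y2
      · rw [(f3 0 (by omega) t ⟨h2, ht2⟩).1]
        have q3 : a h ≤ -1 / (2 * lam + t) := by
          refine negle (aneg h le_rfl) hp2 ?_
          rw [ha]; rw [c0] at h2; linarith
        have q4 : -1 / (2 * lam + t) < b h := by
          rw [hbc, div_lt_div_iff₀ hp2 (by positivity)]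
          have k1 : (lam + t) * (α * lam) < 1 := by
            rw [e0] at ht2
            rw [← lt_div_iff₀ hr0]; linarith
          have k2 : (lam + t) * c h ≤ (lam + t) * (α * lam) := mul_le_mul_of_nonneg_left hcr.le hp.le
          nlinarith
        rw [(f1 h le_rfl _ ⟨q3, q4⟩).1]
        exact Y3
end
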